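/- Let n ≥ 7 and let u : ℝⁿ → ℝ be a smooth solution of the triharmonic Lane–Emden equation (−Δ)³u = |u|^{p−1}u that is stable outside some compact set Θ ⊂ ℝⁿ. If (n+6)/(n−6) < p and, in the case n ≥ 15, additionally p < p_c(n), then u is identically zero. -/

import Mathlib

open MeasureTheory Filter

noncomputable section

/-- The Euclidean Laplacian of `u` at `x`. -/
def laplacian {n : ℕ} (u : EuclideanSpace ℝ (Fin n) → ℝ) (x : EuclideanSpace ℝ (Fin n)) : ℝ :=
  ∑ i : Fin n, iteratedFDeriv ℝ 2 u x ![EuclideanSpace.single i 1, EuclideanSpace.single i 1]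

def dd1 (n : ℝ) : ℝ :=
  -108*n^6 + 1296*n^5 - 3024*n^4 - 10368*n^3 + 103104*n^2 + 20736*n - 94976

def dd2 (n : ℝ) : ℝ :=
  9*n^12 - 216*n^11 + 1800*n^10 - 4320*n^9 - 30864*n^8 + 251136*n^7 - 690432*n^6
    - 1936384*n^5 + 6915840*n^4 + 4818944*n^3 - 16644096*n^2 - 3039232*n + 6131712

/-- `d₀(n)`, the real cube root of `-(d₁(n) + 36√(d₂(n)))`. -/
def dd0 (n : ℝ) : ℝ := (-(dd1 n + 36 * Real.sqrt (dd2 n))) ^ ((1 : ℝ)/3)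

def dfn (n : ℝ) : ℝ :=
  (1/6) * Real.sqrt (9*n^2 + 96 - (1536 + 1152*n^2) / dd0 n - (3/2) * dd0 n)

/-- The Joseph–Lundgren exponent `p_c(n)` (for `n ≥ 15`; `p_c(n) = +∞` for `n ≤ 14`,
which is encoded by imposing the bound `p < pc n` only when `15 ≤ n`). -/
def pc (n : ℝ) : ℝ := (n + 4 - 2 * dfn n) / (n - 8 - 2 * dfn n)

namespace TL
open scoped ContDiff

/-- Admissible weights: smooth with compact support. -/
def Adm (ρ : ℝ → ℝ) : Prop := ContDiff ℝ ∞ ρ ∧ HasCompactSupport ρ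

theorem contDiff_deriv {f : ℝ → ℝ} (h : ContDiff ℝ ∞ f) : ContDiff ℝ ∞ (deriv f) := by
  have := (contDiff_succ_iff_deriv (n := ∞) (f := f) (𝕜 := ℝ)).1 (by simpa using h)
  exact this.2.2

theorem contDiff_deriv_iter {f : ℝ → ℝ} (h : ContDiff ℝ ∞ f) (a : ℕ) :
    ContDiff ℝ ∞ (deriv^[a] f) := by
  induction a with
  | zero => exact h
  | succ a ih => rw [Function.iterate_succ_apply']; exact contDiff_deriv ih

theorem Adm.deriv {ρ : ℝ → ℝ} (h : Adm ρ) : Adm (deriv ρ) :=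
  ⟨contDiff_deriv h.1, h.2.deriv⟩

theorem Adm.iter {ρ : ℝ → ℝ} (h : Adm ρ) (a : ℕ) : Adm (_root_.deriv^[a] ρ) := by
  induction a with
  | zero => exact h
  | succ a ih => rw [Function.iterate_succ_apply']; exact ih.deriv

theorem Adm.mul {ρ σ : ℝ → ℝ} (h : Adm ρ) (h' : ContDiff ℝ ∞ σ) : Adm (fun t => ρ t * σ t) :=
  ⟨h.1.mul h', h.2.mul_right⟩

theorem Adm.add {ρ σ : ℝ → ℝ} (h : Adm ρ) (h' : Adm σ) : Adm (fun t => ρ t + σ t) :=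
  ⟨h.1.add h'.1, h.2.add h'.2⟩

theorem Adm.smul {ρ : ℝ → ℝ} (h : Adm ρ) (c : ℝ) : Adm (fun t => c * ρ t) :=
  ⟨contDiff_const.mul h.1, h.2.mul_left⟩

theorem Adm.pow {ρ : ℝ → ℝ} (h : Adm ρ) {k : ℕ} (hk : k ≠ 0) : Adm (fun t => ρ t ^ k) := by
  obtain ⟨k, rfl⟩ := Nat.exists_eq_succ_of_ne_zero hk
  have : (fun t => ρ t ^ (k+1)) = fun t => ρ t * ρ t ^ k := by
    funext t; ring
  rw [Nat.succ_eq_add_one, this]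
  exact h.mul (h.1.pow k)

theorem Adm.shift {ρ : ℝ → ℝ} (h : Adm ρ) (T : ℝ) : Adm (fun t => ρ (t - T)) := by
  refine ⟨h.1.comp (contDiff_id.sub contDiff_const), ?_⟩
  exact h.2.comp_homeomorph (Homeomorph.subRight T)

theorem deriv_iter_shift (ρ : ℝ → ℝ) (T : ℝ) (a : ℕ) :
    _root_.deriv^[a] (fun t => ρ (t - T)) = fun t => (_root_.deriv^[a] ρ) (t - T) := by
  induction a with
  | zero => rfl
  | succ a ih =>
    rw [Function.iterate_succ_apply', Function.iterate_succ_apply', ih]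
    funext t
    exact deriv_comp_sub_const (f := _root_.deriv^[a] ρ) (a := T) (x := t)

/-- Domination of families of reals. -/
def Dom {ι : Type*} (R L : ι → ℝ) : Prop := ∃ C, 0 ≤ C ∧ ∀ i, |R i| ≤ C * L i

theorem Dom.add {ι : Type*} {R R' L : ι → ℝ} (h : Dom R L) (h' : Dom R' L) :
    Dom (fun i => R i + R' i) L := by
  obtain ⟨C, hC, h⟩ := h
  obtain ⟨C', hC', h'⟩ := h'
  refine ⟨C + C', by positivity, fun i => ?_⟩
  have := abs_add_le (R i) (R' i)
  have := h i
  have := h' i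
  linarith

theorem Dom.cmul {ι : Type*} {R L : ι → ℝ} (h : Dom R L) (c : ℝ) :
    Dom (fun i => c * R i) L := by
  obtain ⟨C, hC, h⟩ := h
  refine ⟨|c| * C, by positivity, fun i => ?_⟩
  rw [abs_mul, mul_assoc]
  exact mul_le_mul_of_nonneg_left (h i) (abs_nonneg c)

theorem Dom.zero {ι : Type*} {L : ι → ℝ} : Dom (fun _ => 0) L := ⟨0, le_rfl, by simp⟩

theorem Dom.sum {ι κ : Type*} (s : Finset κ) {R : κ → ι → ℝ} {L : ι → ℝ}
    (h : ∀ k ∈ s, Dom (R k) L) : Dom (fun i => ∑ k ∈ s, R k i) L := by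
  classical
  induction s using Finset.induction_on with
  | empty => simpa using Dom.zero
  | insert a s ha ih =>
    simp only [Finset.sum_insert ha]
    exact (h a (Finset.mem_insert_self a s)).add
      (ih fun k hk => h k (Finset.mem_insert_of_mem hk))

theorem Dom.mono {ι : Type*} {R L L' : ι → ℝ} (h : Dom R L) (hL : ∀ i, L i ≤ L' i) :
    Dom R L' := by
  obtain ⟨C, hC, h⟩ := h
  exact ⟨C, hC, fun i => (h i).trans (mul_le_mul_of_nonneg_left (hL i) hC)⟩

/-- Weighted quadratic forms on a space with a derivation-like map `D`. -/
structure DForm {W : Type*} (D : W → W) (b : (ℝ → ℝ) → W → W → ℝ) : Prop where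
  symm : ∀ ρ f g, b ρ f g = b ρ g f
  der : ∀ ρ, Adm ρ → ∀ f g, b (deriv ρ) f g + b ρ (D f) g + b ρ f (D g) = 0
  wle : ∀ ρ σ, Adm ρ → Adm σ → (∀ t, ρ t ≤ σ t) → ∀ f, b ρ f f ≤ b σ f f
  wsmul : ∀ ρ, Adm ρ → ∀ c f g, b (fun t => c * ρ t) f g = c * b ρ f g
  cs : ∀ σ τ, Adm σ → Adm τ → ∀ f g,
    0 ≤ b (fun t => σ t ^ 2) f f + 2 * b (fun t => σ t * τ t) f g + b (fun t => τ t ^ 2) g g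

namespace DForm
variable {W : Type*} {D : W → W} {b : (ℝ → ℝ) → W → W → ℝ}

theorem nonneg (h : DForm D b) {ρ : ℝ → ℝ} (hρ : Adm ρ) (h0 : ∀ t, 0 ≤ ρ t) (f : W) :
    0 ≤ b ρ f f := by
  have h1 := h.wsmul ρ hρ 0 f f
  have h2 := h.wle (fun t => 0 * ρ t) ρ (hρ.smul 0) hρ (by simpa using h0) f
  linarith

theorem abs_le (h : DForm D b) {ρ σ : ℝ → ℝ} (hρ : Adm ρ) (hσ : Adm σ) {C : ℝ}
    (hle : ∀ t, |ρ t| ≤ C * σ t) (f : W) : |b ρ f f| ≤ C * b σ f f := by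
  have h1 := h.wle ρ (fun t => C * σ t) hρ (hσ.smul C) (fun t => (le_abs_self _).trans (hle t)) f
  have h2 := h.wle (fun t => (-1) * ρ t) (fun t => C * σ t) (hρ.smul _) (hσ.smul C)
    (fun t => by have := (neg_le_abs (ρ t)).trans (hle t); linarith) f
  rw [h.wsmul _ hσ] at h1 h2
  rw [h.wsmul _ hρ] at h2
  exact _root_.abs_le.2 ⟨by linarith, h1⟩

/-- Weighted Cauchy-Schwarz. -/
theorem cs' (h : DForm D b) {σ τ : ℝ → ℝ} (hσ : Adm σ) (hτ : Adm τ) {ε : ℝ} (hε : 0 < ε)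
    (f g : W) : |b (fun t => σ t * τ t) f g| ≤
      ε * b (fun t => σ t ^ 2) f f + (1 / (4 * ε)) * b (fun t => τ t ^ 2) g g := by
  have key : ∀ c : ℝ, c ^ 2 = 1 → c * b (fun t => σ t * τ t) f g ≤
      ε * b (fun t => σ t ^ 2) f f + (1 / (4 * ε)) * b (fun t => τ t ^ 2) g g := by
    intro c hc
    have h1 := h.cs (fun t => (2 * ε) * σ t) (fun t => (-c) * τ t) (hσ.smul _) (hτ.smul _) f g
    have e1 : (fun t => ((2 * ε) * σ t) ^ 2) = fun t => (4 * ε ^ 2) * (fun t => σ t ^ 2) t := by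
      funext t; ring
    have e2 : (fun t => ((-c) * τ t) ^ 2) = fun t => τ t ^ 2 := by
      funext t; rw [mul_pow, neg_sq, hc, one_mul]
    have e3 : (fun t => ((2 * ε) * σ t) * ((-c) * τ t)) =
        fun t => (-(2 * ε * c)) * (fun t => σ t * τ t) t := by
      funext t; ring
    rw [e1, e2, e3, h.wsmul _ (hσ.pow two_ne_zero), h.wsmul _ (hσ.mul hτ.1)] at h1
    have h2 : 0 ≤ (1 / (4 * ε)) * (4 * ε ^ 2 * b (fun t => σ t ^ 2) f f +
      2 * (-(2 * ε * c) * b (fun t => σ t * τ t) f g) + b (fun t => τ t ^ 2) g g) :=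
      mul_nonneg (by positivity) h1
    have h3 : (1 / (4 * ε)) * (4 * ε ^ 2 * b (fun t => σ t ^ 2) f f +
      2 * (-(2 * ε * c) * b (fun t => σ t * τ t) f g) + b (fun t => τ t ^ 2) g g) =
      ε * b (fun t => σ t ^ 2) f f - c * b (fun t => σ t * τ t) f g
       + (1 / (4 * ε)) * b (fun t => τ t ^ 2) g g := by
      field_simp
      ring
    linarith
  refine _root_.abs_le.2 ⟨?_, ?_⟩
  · have := key (-1) (by norm_num); linarith
  · have := key 1 (by norm_num); linarith

end DForm

/-- Coefficients of the diagonalisation of `b ρ w (D^m w)`. -/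
def kap : ℕ → ℕ → ℝ
  | 0, 0 => 1
  | 0, _ + 1 => 0
  | 1, 0 => -1/2
  | 1, _ + 1 => 0
  | m + 2, 0 => - kap (m + 1) 0
  | m + 2, i + 1 => - kap (m + 1) (i + 1) - kap m i

theorem DForm.diag {W : Type*} {D : W → W} {b : (ℝ → ℝ) → W → W → ℝ} (h : DForm D b)
    {m : ℕ} (hm : m ≤ 6) {ρ : ℝ → ℝ} (hρ : Adm ρ) (w : W) :
    b ρ w (D^[m] w) = ∑ i ∈ Finset.range 4,
      kap m i * b (deriv^[m - 2 * i] ρ) (D^[i] w) (D^[i] w) := by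
  have x0 : ∀ ρ, Adm ρ → ∀ w, b ρ w (D^[0] w) = ∑ i ∈ Finset.range 4,
      kap 0 i * b (deriv^[0 - 2 * i] ρ) (D^[i] w) (D^[i] w) := by
    intro ρ hρ w
    simp [Finset.sum_range_succ, kap]
  have x1 : ∀ ρ, Adm ρ → ∀ w, b ρ w (D^[1] w) = ∑ i ∈ Finset.range 4,
      kap 1 i * b (deriv^[1 - 2 * i] ρ) (D^[i] w) (D^[i] w) := by
    intro ρ hρ w
    have h1 := h.der ρ hρ w w
    have h2 := h.symm ρ (D w) w
    simp [Finset.sum_range_succ, kap]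
    linarith
  have hrec : ∀ m, ∀ ρ, Adm ρ → ∀ w, b ρ w (D^[m+2] w) =
      - b (deriv ρ) w (D^[m+1] w) - b ρ (D w) (D^[m] (D w)) := by
    intro m ρ hρ w
    have h1 := h.der ρ hρ w (D^[m+1] w)
    rw [← Function.iterate_succ_apply' D, Function.iterate_succ_apply D m] at h1
    rw [Function.iterate_succ_apply D m]
    linarith
  have x2 : ∀ ρ, Adm ρ → ∀ w, b ρ w (D^[2] w) = ∑ i ∈ Finset.range 4,
      kap 2 i * b (deriv^[2 - 2 * i] ρ) (D^[i] w) (D^[i] w) := by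
    intro ρ hρ w
    rw [hrec 0 ρ hρ w, x1 _ hρ.deriv, x0 _ hρ]
    simp [Finset.sum_range_succ, kap]
    ring
  have x3 : ∀ ρ, Adm ρ → ∀ w, b ρ w (D^[3] w) = ∑ i ∈ Finset.range 4,
      kap 3 i * b (deriv^[3 - 2 * i] ρ) (D^[i] w) (D^[i] w) := by
    intro ρ hρ w
    rw [hrec 1 ρ hρ w, x2 _ hρ.deriv, x1 _ hρ]
    simp [Finset.sum_range_succ, kap]
    ring
  have x4 : ∀ ρ, Adm ρ → ∀ w, b ρ w (D^[4] w) = ∑ i ∈ Finset.range 4,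
      kap 4 i * b (deriv^[4 - 2 * i] ρ) (D^[i] w) (D^[i] w) := by
    intro ρ hρ w
    rw [hrec 2 ρ hρ w, x3 _ hρ.deriv, x2 _ hρ]
    simp [Finset.sum_range_succ, kap]
    ring
  have x5 : ∀ ρ, Adm ρ → ∀ w, b ρ w (D^[5] w) = ∑ i ∈ Finset.range 4,
      kap 5 i * b (deriv^[5 - 2 * i] ρ) (D^[i] w) (D^[i] w) := by
    intro ρ hρ w
    rw [hrec 3 ρ hρ w, x4 _ hρ.deriv, x3 _ hρ]
    simp [Finset.sum_range_succ, kap]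
    ring
  have x6 : ∀ ρ, Adm ρ → ∀ w, b ρ w (D^[6] w) = ∑ i ∈ Finset.range 4,
      kap 6 i * b (deriv^[6 - 2 * i] ρ) (D^[i] w) (D^[i] w) := by
    intro ρ hρ w
    rw [hrec 4 ρ hρ w, x5 _ hρ.deriv, x4 _ hρ]
    simp [Finset.sum_range_succ, kap]
    ring
  interval_cases m
  · exact x0 ρ hρ w
  · exact x1 ρ hρ w
  · exact x2 ρ hρ w
  · exact x3 ρ hρ w
  · exact x4 ρ hρ w
  · exact x5 ρ hρ w
  · exact x6 ρ hρ w

theorem kap_zero {m i : ℕ} (h : m < 2 * i) : kap m i = 0 := by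
  induction m using Nat.strong_induction_on generalizing i with
  | _ m ih =>
    match m, i, h with
    | 0, i + 1, _ => rfl
    | 1, i + 1, _ => rfl
    | m + 2, i + 1, h =>
      rw [kap, ih (m+1) (by omega) (by omega), ih m (by omega) (by omega)]
      simp

end TL

namespace TL
open scoped ContDiff

/-- The pairs `(m, j)` with `m + 2 j ≤ 6`. -/
def idx : Finset (ℕ × ℕ) := (Finset.range 7 ×ˢ Finset.range 4).filter (fun q => q.1 + 2 * q.2 ≤ 6)

theorem mem_idx {q : ℕ × ℕ} : q ∈ idx ↔ q.1 + 2 * q.2 ≤ 6 := by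
  simp only [idx, Finset.mem_filter, Finset.mem_product, Finset.mem_range]
  omega

theorem sum_idx (F : ℕ × ℕ → ℝ) : ∑ q ∈ idx, F q =
    F (0,0) + F (1,0) + F (2,0) + F (3,0) + F (4,0) + F (5,0) + F (6,0)
    + F (0,1) + F (1,1) + F (2,1) + F (3,1) + F (4,1) + F (0,2) + F (1,2) + F (2,2) + F (0,3) := by
  simp [idx, Finset.sum_filter, Finset.sum_product, Finset.sum_range_succ]
  ring

section
variable {W : Type*} {D : W → W} {ι : Type*}

theorem diagDom {b : ι → (ℝ → ℝ) → W → W → ℝ} (hb : ∀ k, DForm D (b k))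
    {m : ℕ} (hm : m ≤ 6) {ρ : ι → ℝ → ℝ} (hρ : ∀ k, Adm (ρ k)) (w : W) (top : ℕ → ι → ℝ) (L : ι → ℝ)
    (h : ∀ i, 2 * i ≤ m →
      Dom (fun k => b k (deriv^[m - 2 * i] (ρ k)) (D^[i] w) (D^[i] w) - top i k) L) :
    Dom (fun k => b k (ρ k) w (D^[m] w) - ∑ i ∈ Finset.range 4, kap m i * top i k) L := by
  have : (fun k => b k (ρ k) w (D^[m] w) - ∑ i ∈ Finset.range 4, kap m i * top i k) =
      fun k => ∑ i ∈ Finset.range 4, kap m i *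
        (b k (deriv^[m - 2 * i] (ρ k)) (D^[i] w) (D^[i] w) - top i k) := by
    funext k
    rw [(hb k).diag hm (hρ k), ← Finset.sum_sub_distrib]
    exact Finset.sum_congr rfl fun i _ => by ring
  rw [this]
  refine Dom.sum _ fun i _ => ?_
  by_cases hi : 2 * i ≤ m
  · exact (h i hi).cmul _
  · rw [kap_zero (by omega)]
    simpa using Dom.zero

variable (b : ι → ℕ → (ℝ → ℝ) → W → W → ℝ) (w : W) (D)

/-- Diagonal terms with weight `η²`. -/
def mainE (c : ℕ → ℕ → ℝ) (e : ℕ → ℕ → ℝ) : ℝ :=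
  c 0 0 * e 0 0 + c 0 1 * e 0 1 + c 0 2 * e 0 2 + c 0 3 * e 0 3
  - c 2 0 * e 1 0 - c 2 1 * e 1 1 - c 2 2 * e 1 2 + c 4 0 * e 2 0 + c 4 1 * e 2 1 - c 6 0 * e 3 0

variable {b w D}

theorem expand_term (hb : ∀ k j, DForm D (b k j)) {η : ι → ℝ → ℝ} (hη : ∀ k, Adm (η k)) {L : ι → ℝ}
    (hL : ∀ i j a d, 1 ≤ a + d → 2 * (i + j) + a + d ≤ 6 →
      Dom (fun k => b k j (deriv^[d] (fun t => η k t * (deriv^[a] (η k)) t)) (D^[i] w) (D^[i] w)) L)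
    {m j a : ℕ} (hm : m + a + 2 * j ≤ 6) :
    Dom (fun k => b k j (fun t => η k t * (deriv^[a] (η k)) t) w (D^[m] w) -
      ∑ i ∈ Finset.range 4, kap m i * (if a = 0 ∧ m = 2 * i then
        b k j (fun t => η k t * η k t) (D^[i] w) (D^[i] w) else 0)) L := by
  apply diagDom (fun k => hb k j) (by omega) (fun k => (hη k).mul (contDiff_deriv_iter (hη k).1 a)) w
    (fun i k => if a = 0 ∧ m = 2 * i then
        b k j (fun t => η k t * η k t) (D^[i] w) (D^[i] w) else 0)
  intro i hi
  by_cases h : a = 0 ∧ m = 2 * i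
  · obtain ⟨rfl, rfl⟩ := h
    simpa using Dom.zero
  · simp only [h, if_false, sub_zero]
    exact hL i j a (m - 2 * i) (by omega) (by omega)

theorem expandP (hb : ∀ k j, DForm D (b k j)) {η : ι → ℝ → ℝ} (hη : ∀ k, Adm (η k)) {L : ι → ℝ}
    (hL : ∀ i j a d, 1 ≤ a + d → 2 * (i + j) + a + d ≤ 6 →
      Dom (fun k => b k j (deriv^[d] (fun t => η k t * (deriv^[a] (η k)) t)) (D^[i] w) (D^[i] w)) L)
    (c : ℕ → ℕ → ℝ) :
    Dom (fun k => ∑ q ∈ idx, c q.1 q.2 * b k q.2 (fun t => η k t * η k t) w (D^[q.1] w)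
      - mainE c (fun i j => b k j (fun t => η k t * η k t) (D^[i] w) (D^[i] w))) L := by
  have h1 : Dom (fun k => ∑ q ∈ idx, c q.1 q.2 *
      (b k q.2 (fun t => η k t * η k t) w (D^[q.1] w) -
        ∑ i ∈ Finset.range 4, kap q.1 i * (if 0 = 0 ∧ q.1 = 2 * i then
        b k q.2 (fun t => η k t * η k t) (D^[i] w) (D^[i] w) else 0))) L := by
    refine Dom.sum _ fun q hq => Dom.cmul ?_ _
    exact expand_term hb hη hL (a := 0) (by have := mem_idx.1 hq; omega)
  convert h1 using 2 with k
  simp only [mul_sub, Finset.sum_sub_distrib]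
  congr 1
  rw [sum_idx]
  simp [Finset.sum_range_succ, kap, mainE]
  ring

theorem expandS (hb : ∀ k j, DForm D (b k j)) {η : ι → ℝ → ℝ} (hη : ∀ k, Adm (η k)) {L : ι → ℝ}
    (hL : ∀ i j a d, 1 ≤ a + d → 2 * (i + j) + a + d ≤ 6 →
      Dom (fun k => b k j (deriv^[d] (fun t => η k t * (deriv^[a] (η k)) t)) (D^[i] w) (D^[i] w)) L)
    (c : ℕ → ℕ → ℝ) :
    Dom (fun k => ∑ q ∈ idx, c q.1 q.2 * ∑ l ∈ Finset.range (q.1 + 1), (q.1.choose l : ℝ) *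
        b k q.2 (fun t => η k t * (deriv^[q.1 - l] (η k)) t) w (D^[l] w)
      - mainE c (fun i j => b k j (fun t => η k t * η k t) (D^[i] w) (D^[i] w))) L := by
  have h1 : Dom (fun k => ∑ q ∈ idx, c q.1 q.2 * ∑ l ∈ Finset.range (q.1 + 1), (q.1.choose l : ℝ) *
      (b k q.2 (fun t => η k t * (deriv^[q.1 - l] (η k)) t) w (D^[l] w) -
        ∑ i ∈ Finset.range 4, kap l i * (if q.1 - l = 0 ∧ l = 2 * i then
        b k q.2 (fun t => η k t * η k t) (D^[i] w) (D^[i] w) else 0))) L := by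
    refine Dom.sum _ fun q hq => Dom.cmul (Dom.sum _ fun l hl => Dom.cmul ?_ _) _
    have := mem_idx.1 hq
    have := Finset.mem_range.1 hl
    exact expand_term hb hη hL (a := q.1 - l) (by omega)
  convert h1 using 2 with k
  simp only [mul_sub, Finset.sum_sub_distrib]
  congr 1
  rw [sum_idx]
  simp [Finset.sum_range_succ, kap, mainE]
  ring

/-- Dissipation terms. -/
def dissE (c : ℕ → ℕ → ℝ) (e : ℕ → ℕ → ℝ) : ℝ :=
  c 1 0 * e 1 0 + c 1 1 * e 1 1 + c 1 2 * e 1 2 - c 3 0 * e 2 0 - c 3 1 * e 2 1 + c 5 0 * e 3 0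

theorem expandD (hb : ∀ k j, DForm D (b k j)) {χ : ι → ℝ → ℝ} (hχ : ∀ k, Adm (χ k)) {L : ι → ℝ}
    (hL : ∀ i j a, 1 ≤ a → i + j ≤ 3 → a ≤ 6 →
      Dom (fun k => b k j (deriv^[a] (χ k)) (D^[i] w) (D^[i] w)) L)
    (c : ℕ → ℕ → ℝ) :
    Dom (fun k => ∑ q ∈ idx, c q.1 q.2 * b k q.2 (χ k) (D w) (D^[q.1] w)
      - dissE c (fun i j => b k j (χ k) (D^[i] w) (D^[i] w))) L := by
  have h1 : Dom (fun k => ∑ q ∈ idx, c q.1 q.2 *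
      (b k q.2 (χ k) (D w) (D^[q.1] w) -
        ∑ i ∈ Finset.range 4, kap (q.1 - 1) i * (if q.1 = 2 * i + 1 then
        b k q.2 (χ k) (D^[i+1] w) (D^[i+1] w) else 0))) L := by
    refine Dom.sum _ fun q hq => Dom.cmul ?_ _
    have hq := mem_idx.1 hq
    obtain ⟨m, j⟩ := q
    cases m with
    | zero =>
      have : (fun k => b k j (χ k) (D w) (D^[0] w)) =
          fun k => (-1/2) * b k j (deriv^[1] (χ k)) (D^[0] w) (D^[0] w) := by
        funext k
        have h1 := (hb k j).der _ (hχ k) w w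
        have h2 := (hb k j).symm (χ k) (D w) w
        simp
        linarith
      simp only [if_neg (show ¬ (0 = 2 * _ + 1) by omega), mul_zero,
        Finset.sum_const_zero, sub_zero]
      rw [this]
      exact (hL 0 j 1 le_rfl (by simp at hq; omega) (by omega)).cmul _
    | succ m =>
      simp only at hq ⊢
      simp only [Nat.add_sub_cancel, Function.iterate_succ_apply, Nat.add_right_cancel_iff]
      apply diagDom (fun k => hb k j) (by omega) hχ (D w)
        (fun i k => if m = 2 * i then b k j (χ k) (D^[i] (D w)) (D^[i] (D w)) else 0)
      intro i hi
      by_cases h : m = 2 * i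
      · subst h
        simpa using Dom.zero
      · simp only [h, if_false, sub_zero]
        exact hL (i+1) j (m - 2 * i) (by omega) (by omega) (by omega)
  convert h1 using 2 with k
  simp only [mul_sub, Finset.sum_sub_distrib]
  congr 1
  rw [sum_idx]
  simp [Finset.sum_range_succ, kap, dissE]
  ring

end
end TL

namespace TL
open scoped ContDiff

theorem pow_iter {ψ : ℝ → ℝ} (hψ : ContDiff ℝ ∞ ψ) (m : ℕ) : ∀ (k : ℕ), k ≤ m →
    ∀ h : ℝ → ℝ, ContDiff ℝ ∞ h → ∃ h' : ℝ → ℝ, ContDiff ℝ ∞ h' ∧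
      deriv^[k] (fun t => ψ t ^ m * h t) = fun t => ψ t ^ (m - k) * h' t := by
  intro k
  induction k with
  | zero => intro _ h hh; exact ⟨h, hh, rfl⟩
  | succ k ih =>
    intro hk h hh
    obtain ⟨g, hg, he⟩ := ih (by omega) h hh
    refine ⟨fun t => (m - k : ℕ) * deriv ψ t * g t + ψ t * deriv g t, ?_, ?_⟩
    · exact ((contDiff_const.mul (contDiff_deriv hψ)).mul hg).add (hψ.mul (contDiff_deriv hg))
    · rw [Function.iterate_succ_apply', he]
      funext t
      have d1 : HasDerivAt ψ (deriv ψ t) t := (hψ.differentiable (by simp)).differentiableAt.hasDerivAt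
      have d2 : HasDerivAt g (deriv g t) t := (hg.differentiable (by simp)).differentiableAt.hasDerivAt
      have := ((d1.pow (m - k)).mul d2).deriv
      refine Eq.trans this ?_
      have e : m - k = (m - (k + 1)) + 1 := by omega
      rw [e]
      simp only [Nat.add_sub_cancel, pow_succ, Pi.pow_apply]
      ring

theorem bump_weight {ψ : ℝ → ℝ} (hψ : Adm ψ) (h0 : ∀ t, 0 ≤ ψ t) (h1 : ∀ t, ψ t ≤ 1)
    {m : ℕ} (hm : 6 ≤ m) {a d e : ℕ} (had : a + d ≤ 6) (he : e + (a + d) ≤ 2 * m) :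
    ∃ C, 0 ≤ C ∧ ∀ t, |(deriv^[d] (fun t => ψ t ^ m * (deriv^[a] (fun t => ψ t ^ m)) t)) t|
      ≤ C * ψ t ^ e := by
  obtain ⟨g, hg, hge⟩ := pow_iter hψ.1 m a (by omega) (fun _ => 1) contDiff_const
  simp only [mul_one] at hge
  have e1 : (fun t => ψ t ^ m * (deriv^[a] (fun t => ψ t ^ m)) t) =
      fun t => ψ t ^ (2 * m - a) * g t := by
    rw [hge]; funext t
    rw [← mul_assoc, ← pow_add]; congr 2; omega
  obtain ⟨g', hg', hge'⟩ := pow_iter hψ.1 (2 * m - a) d (by omega) g hg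
  rw [e1, hge']
  obtain ⟨C, hC⟩ := hψ.2.isCompact.exists_bound_of_continuousOn (f := g') hg'.continuous.continuousOn
  refine ⟨max C 0, le_max_right _ _, fun t => ?_⟩
  rw [abs_mul, abs_of_nonneg (pow_nonneg (h0 t) _), mul_comm]
  by_cases ht : t ∈ tsupport ψ
  · refine mul_le_mul ((hC t ht).trans (le_max_left _ _)) ?_ (pow_nonneg (h0 t) _) (le_max_right _ _)
    exact pow_le_pow_of_le_one (h0 t) (h1 t) (by omega)
  · rw [image_eq_zero_of_notMem_tsupport ht, zero_pow (by omega), mul_zero]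
    exact mul_nonneg (le_max_right _ _) (pow_nonneg le_rfl _)

section
variable {W : Type*} {D : W → W} {ι : Type*}
  {b : ι → ℕ → (ℝ → ℝ) → W → W → ℝ} {w : W}

theorem DForm.dom {b : ι → (ℝ → ℝ) → W → W → ℝ} (hb : ∀ k, DForm D (b k)) {ρ σ : ι → ℝ → ℝ}
    (hρ : ∀ k, Adm (ρ k)) (hσ : ∀ k, Adm (σ k)) {C : ℝ} (hC : 0 ≤ C)
    (h : ∀ k t, |ρ k t| ≤ C * σ k t) (f : W) :
    Dom (fun k => b k (ρ k) f f) (fun k => b k (σ k) f f) :=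
  ⟨C, hC, fun k => (hb k).abs_le (hρ k) (hσ k) (h k) f⟩

/-- D-type interpolation. -/
theorem interpD {b : ι → (ℝ → ℝ) → W → W → ℝ} (hb : ∀ k, DForm D (b k)) {ψ : ℝ → ℝ} (hψ : Adm ψ)
    (h0 : ∀ t, 0 ≤ ψ t) (h1 : ∀ t, ψ t ≤ 1) {s : ℕ} (hs : 2 ≤ s) {ε : ℝ} (hε : 0 < ε) (f : W) :
    ∃ C, 0 ≤ C ∧ ∀ k, b k (fun t => ψ t ^ (2 * s)) (D f) (D f) ≤
      ε * b k (fun t => ψ t ^ (2 * s + 2)) (D (D f)) (D (D f)) +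
        C * b k (fun t => ψ t ^ (2 * s - 2)) f f := by
  obtain ⟨g, hg, hge⟩ := pow_iter hψ.1 (2 * s) 2 (by omega) (fun _ => 1) contDiff_const
  simp only [mul_one] at hge
  obtain ⟨M, hM⟩ := hψ.2.isCompact.exists_bound_of_continuousOn (f := g) hg.continuous.continuousOn
  have hA : Adm (fun t => ψ t ^ (2 * s)) := hψ.pow (by omega)
  have hA' : Adm (fun t => ψ t ^ (2 * s - 2)) := hψ.pow (by omega)
  have hw : ∀ t, |(deriv^[2] (fun t => ψ t ^ (2 * s))) t| ≤ max M 0 * ψ t ^ (2 * s - 2) := by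
    intro t
    rw [hge, abs_mul, abs_of_nonneg (pow_nonneg (h0 t) _), mul_comm]
    by_cases ht : t ∈ tsupport ψ
    · exact mul_le_mul_of_nonneg_right ((hM t ht).trans (le_max_left _ _)) (pow_nonneg (h0 t) _)
    · rw [image_eq_zero_of_notMem_tsupport ht, zero_pow (by omega)]; simp
  refine ⟨1 / (4 * ε) + max M 0 / 2, by positivity, fun k => ?_⟩
  have e1 := (hb k).diag (m := 2) (by norm_num) hA f
  simp [Finset.sum_range_succ, kap] at e1
  have e2 := (hb k).abs_le (hA.iter 2) hA' hw f
  have e3 := (hb k).cs' (hψ.pow (k := s + 1) (by omega)) (hψ.pow (k := s - 1) (by omega)) hε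
    (D (D f)) f
  have a1 : (fun t => ψ t ^ (s + 1) * ψ t ^ (s - 1)) = fun t => ψ t ^ (2 * s) := by
    funext t; rw [← pow_add]; congr 1; omega
  have a2 : (fun t => (ψ t ^ (s + 1)) ^ 2) = fun t => ψ t ^ (2 * s + 2) := by
    funext t; rw [← pow_mul]; congr 1; omega
  have a3 : (fun t => (ψ t ^ (s - 1)) ^ 2) = fun t => ψ t ^ (2 * s - 2) := by
    funext t; rw [← pow_mul]; congr 1; omega
  rw [a1, a2, a3, (hb k).symm] at e3
  have e4 := abs_le.1 e3
  have e5 := abs_le.1 e2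
  simp only [Function.iterate_succ, Function.iterate_zero, Function.comp] at e5
  simp only [id] at e5
  have e6 : max M 0 / 2 * b k (fun t => ψ t ^ (2 * s - 2)) f f =
    (max M 0 * b k (fun t => ψ t ^ (2 * s - 2)) f f) / 2 := by ring
  rw [add_mul, e6]
  linarith [e4.1, e4.2, e5.1, e5.2]

/-- A-type interpolation. -/
theorem interpA {b0 b1 b2 : (ℝ → ℝ) → W → W → ℝ} {w : W}
    (hA : ∀ σ τ, Adm σ → Adm τ → ∀ ε : ℝ, 0 < ε → b1 (fun t => σ t * τ t) w w ≤
      ε * b2 (fun t => σ t ^ 2) w w + (1 / (4 * ε)) * b0 (fun t => τ t ^ 2) w w)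
    {ψ : ℝ → ℝ} (hψ : Adm ψ)
    {s : ℕ} (hs : 2 ≤ s) {ε : ℝ} (hε : 0 < ε) :
    b1 (fun t => ψ t ^ (2 * s)) w w ≤
      ε * b2 (fun t => ψ t ^ (2 * s + 2)) w w +
        (1 / (4 * ε)) * b0 (fun t => ψ t ^ (2 * s - 2)) w w := by
  have e3 := hA _ _ (hψ.pow (k := s + 1) (by omega)) (hψ.pow (k := s - 1) (by omega)) ε hε
  have a1 : (fun t => ψ t ^ (s + 1) * ψ t ^ (s - 1)) = fun t => ψ t ^ (2 * s) := by
    funext t; rw [← pow_add]; congr 1; omega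
  have a2 : (fun t => (ψ t ^ (s + 1)) ^ 2) = fun t => ψ t ^ (2 * s + 2) := by
    funext t; rw [← pow_mul]; congr 1; omega
  have a3 : (fun t => (ψ t ^ (s - 1)) ^ 2) = fun t => ψ t ^ (2 * s - 2) := by
    funext t; rw [← pow_mul]; congr 1; omega
  rwa [a1, a2, a3] at e3

/-- Uniform local bounds. -/
theorem step1 (hb : ∀ k j, DForm D (b k j))
    (hA : ∀ k j σ τ, Adm σ → Adm τ → ∀ ε : ℝ, 0 < ε → b k (j+1) (fun t => σ t * τ t) w w ≤
      ε * b k (j+2) (fun t => σ t ^ 2) w w + (1 / (4 * ε)) * b k j (fun t => τ t ^ 2) w w)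
    {ψ : ℝ → ℝ} (hψ : Adm ψ) (h0 : ∀ t, 0 ≤ ψ t) (h1 : ∀ t, ψ t ≤ 1) {q : ℕ} (hq : 3 ≤ q)
    {p : ℝ} (hp : 1 < p) (c s : ℕ → ℕ → ℝ)
    (hc : c 6 0 = -1 ∧ c 4 1 = 3 ∧ c 2 2 = -3 ∧ c 0 3 = 1)
    (hs : s 6 0 = -1 ∧ s 4 1 = 3 ∧ s 2 2 = -3 ∧ s 0 3 = 1)
    {P : ι → (ℝ → ℝ) → ℝ} (hP : ∀ k ρ, Adm ρ → P k ρ = ∑ q ∈ idx, c q.1 q.2 * b k q.2 ρ w (D^[q.1] w))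
    (hS : ∀ k, p * P k (fun t => ψ t ^ (q + 3) * ψ t ^ (q + 3)) ≤
      ∑ r ∈ idx, s r.1 r.2 * ∑ l ∈ Finset.range (r.1 + 1), (r.1.choose l : ℝ) *
        b k r.2 (fun t => ψ t ^ (q + 3) * (deriv^[r.1 - l] (fun t => ψ t ^ (q + 3))) t) w (D^[l] w))
    (hY : ∀ δ : ℝ, 0 < δ → ∃ C, ∀ k, b k 0 (fun t => ψ t ^ (2 * q)) w w ≤
      δ * P k (fun t => ψ t ^ (q + 3) * ψ t ^ (q + 3)) + C) :
    ∃ B, ∀ k, P k (fun t => ψ t ^ (2 * q + 6)) ≤ B ∧ ∀ i j, i + j ≤ 3 →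
      b k j (fun t => ψ t ^ (2 * q + 6)) (D^[i] w) (D^[i] w) ≤ B := by
  -- level quantities
  set e : ℕ → ℕ → ι → ℝ := fun i j k =>
    b k j (fun t => ψ t ^ (2 * q + 2 * (i + j))) (D^[i] w) (D^[i] w) with he
  have hadm : ∀ l, Adm (fun t => ψ t ^ (2 * q + l)) := fun l => hψ.pow (by omega)
  have epos : ∀ i j k, 0 ≤ e i j k := fun i j k =>
    (hb k j).nonneg (hadm _) (fun t => pow_nonneg (h0 t) _) _
  set K0 : ι → ℝ := e 0 0
  set K1 : ι → ℝ := fun k => e 1 0 k + e 0 1 k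
  set K2 : ι → ℝ := fun k => e 2 0 k + e 1 1 k + e 0 2 k
  set T : ι → ℝ := fun k => e 3 0 k + 3 * e 2 1 k + 3 * e 1 2 k + e 0 3 k
  set L : ι → ℝ := fun k => K0 k + K1 k + K2 k
  have hη : ∀ k : ι, Adm (fun t => ψ t ^ (q + 3)) := fun _ => hψ.pow (by omega)
  have hle : ∀ i j, i + j ≤ 2 → ∀ k, e i j k ≤ L k := by
    intro i j hij k
    have := epos 0 0 k
    have := epos 1 0 k
    have := epos 0 1 k
    have := epos 2 0 k
    have := epos 1 1 k
    have := epos 0 2 k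
    have hi : i ≤ 2 := by omega
    have hj : j ≤ 2 := by omega
    simp only [L, K0, K1, K2]
    interval_cases i <;> interval_cases j <;> first | omega | linarith
  have hgen : ∀ i j a d, i + j ≤ 2 → 2 * (i + j) + a + d ≤ 6 →
      Dom (fun k => b k j (deriv^[d] (fun t => ψ t ^ (q + 3) *
        (deriv^[a] (fun t => ψ t ^ (q + 3))) t)) (D^[i] w) (D^[i] w)) L := by
    intro i j a d hij had
    obtain ⟨C, hC, hle'⟩ := bump_weight hψ h0 h1 (m := q + 3) (by omega) (a := a) (d := d)
      (e := 2 * q + 2 * (i + j)) (by omega) (by omega)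
    have := DForm.dom (b := fun k => b k j) (fun k => hb k j)
      (ρ := fun k => deriv^[d] (fun t => ψ t ^ (q + 3) * (deriv^[a] (fun t => ψ t ^ (q + 3))) t))
      (σ := fun k => fun t => ψ t ^ (2 * q + 2 * (i + j)))
      (fun k => ((hη k).mul (contDiff_deriv_iter (hη k).1 a)).iter d) (fun _ => hadm _) hC
      (fun _ => hle') (D^[i] w)
    exact this.mono (hle i j hij)
  have EP := expandP hb (η := fun _ => fun t => ψ t ^ (q + 3)) hη (w := w) (L := L)
    (fun i j a d h1 h2 => hgen i j a d (by omega) h2) c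
  have ES := expandS hb (η := fun _ => fun t => ψ t ^ (q + 3)) hη (w := w) (L := L)
    (fun i j a d h1 h2 => hgen i j a d (by omega) h2) s
  have hsq : (fun t => ψ t ^ (q + 3) * ψ t ^ (q + 3)) = fun t => ψ t ^ (2 * q + 6) := by
    funext t; rw [← pow_add]; congr 1; omega
  have lowmain : ∀ c : ℕ → ℕ → ℝ, (c 6 0 = -1 ∧ c 4 1 = 3 ∧ c 2 2 = -3 ∧ c 0 3 = 1) →
      Dom (fun k => mainE c (fun i j => b k j (fun t => ψ t ^ (q + 3) * ψ t ^ (q + 3))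
        (D^[i] w) (D^[i] w)) - T k) L := by
    intro c hc
    have g : ∀ i j, i + j ≤ 2 → Dom (fun k => b k j (fun t => ψ t ^ (q + 3) * ψ t ^ (q + 3))
        (D^[i] w) (D^[i] w)) L := fun i j hij => hgen i j 0 0 hij (by omega)
    have := ((((((g 0 0 (by omega)).cmul (c 0 0)).add ((g 0 1 (by omega)).cmul (c 0 1))).add
      ((g 0 2 (by omega)).cmul (c 0 2))).add ((g 1 0 (by omega)).cmul (-c 2 0))).add
      ((g 1 1 (by omega)).cmul (-c 2 1))).add ((g 2 0 (by omega)).cmul (c 4 0))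
    convert this using 2 with k
    simp only [mainE, hc.1, hc.2.1, hc.2.2.1, hc.2.2.2, T, he, hsq]
    ring
  obtain ⟨C1, hC1, E1⟩ := EP.add (lowmain c hc)
  obtain ⟨C2, hC2, E2⟩ := ES.add (lowmain s hs)
  set X : ι → ℝ := fun k => P k (fun t => ψ t ^ (q + 3) * ψ t ^ (q + 3)) with hX
  have F1 : ∀ k, |X k - T k| ≤ C1 * L k := by
    intro k
    have := E1 k
    beta_reduce at this
    rw [← hP k _ (hsq ▸ hadm 6)] at this
    convert this using 2
    ring
  have F2 : ∀ k, p * X k ≤ T k + C2 * L k := by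
    intro k
    have h1 := hS k
    have h2 := (abs_le.1 (E2 k)).2
    beta_reduce at h2
    linarith
  have Tpos : ∀ k, 0 ≤ T k := fun k => by
    have := epos 3 0 k; have := epos 2 1 k; have := epos 1 2 k; have := epos 0 3 k
    simp only [T]; linarith
  have F3 : ∀ k, (p - 1) * T k ≤ (C2 + p * C1) * L k := by
    intro k
    have h1 := (abs_le.1 (F1 k)).1
    have h2 := F2 k
    have h3 : p * (-(C1 * L k)) ≤ p * (X k - T k) := mul_le_mul_of_nonneg_left h1 (by linarith)
    linarith
  -- interpolation
  have I2 : ∀ ε : ℝ, 0 < ε → ∃ C, 0 ≤ C ∧ ∀ k, K2 k ≤ ε * T k + C * K1 k := by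
    intro ε hε
    obtain ⟨A1, hA1, i1⟩ := interpD (b := fun k => b k 0) (fun k => hb k 0) hψ h0 h1
      (s := q + 2) (by omega) hε (D w)
    obtain ⟨A2, hA2, i2⟩ := interpD (b := fun k => b k 1) (fun k => hb k 1) hψ h0 h1
      (s := q + 2) (by omega) hε w
    have i3 := fun k => interpA (hA k 1) hψ (s := q + 2) (by omega) hε
    refine ⟨A1 + A2 + 1 / (4 * ε), by positivity, fun k => ?_⟩
    have i1 := i1 k
    have i2 := i2 k
    have i3 := i3 k
    have n1 : 2 * (q + 2) = 2 * q + 4 := by ring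
    have n2 : 2 * (q + 2) + 2 = 2 * q + 6 := by ring
    have n3 : 2 * (q + 2) - 2 = 2 * q + 2 := by omega
    rw [n2, n3, n1] at i1 i2 i3
    have j1 : e 2 0 k ≤ ε * e 3 0 k + A1 * e 1 0 k := i1
    have j2 : e 1 1 k ≤ ε * e 2 1 k + A2 * e 0 1 k := i2
    have j3 : e 0 2 k ≤ ε * e 0 3 k + 1 / (4 * ε) * e 0 1 k := i3
    have p1 := mul_nonneg hε.le (epos 2 1 k)
    have p2 := mul_nonneg hε.le (epos 1 2 k)
    have p3 := mul_nonneg hA1 (epos 0 1 k)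
    have p4 := mul_nonneg hA2 (epos 1 0 k)
    have p5 : 0 ≤ 1 / (4 * ε) * e 1 0 k := mul_nonneg (by positivity) (epos 1 0 k)
    simp only [K2, K1, T, mul_add, add_mul]
    linarith
  have I1 : ∀ ε : ℝ, 0 < ε → ∃ C, 0 ≤ C ∧ ∀ k, K1 k ≤ ε * K2 k + C * K0 k := by
    intro ε hε
    obtain ⟨A1, hA1, i1⟩ := interpD (b := fun k => b k 0) (fun k => hb k 0) hψ h0 h1
      (s := q + 1) (by omega) hε w
    have i3 := fun k => interpA (hA k 0) hψ (s := q + 1) (by omega) hε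
    refine ⟨A1 + 1 / (4 * ε), by positivity, fun k => ?_⟩
    have i1 := i1 k
    have i3 := i3 k
    have n1 : 2 * (q + 1) = 2 * q + 2 := by ring
    have n2 : 2 * (q + 1) + 2 = 2 * q + 4 := by ring
    have n3 : 2 * (q + 1) - 2 = 2 * q := by omega
    rw [n2, n3, n1] at i1 i3
    have j1 : e 1 0 k ≤ ε * e 2 0 k + A1 * e 0 0 k := i1
    have j3 : e 0 1 k ≤ ε * e 0 2 k + 1 / (4 * ε) * e 0 0 k := i3
    have p1 := mul_nonneg hε.le (epos 1 1 k)
    simp only [K2, K1, K0, mul_add, add_mul]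
    linarith
  have K0p : ∀ k, 0 ≤ K0 k := fun k => epos 0 0 k
  have K1p : ∀ k, 0 ≤ K1 k := fun k => add_nonneg (epos _ _ k) (epos _ _ k)
  have K2p : ∀ k, 0 ≤ K2 k := fun k => add_nonneg (add_nonneg (epos _ _ k) (epos _ _ k)) (epos _ _ k)
  have I3 : ∀ ε : ℝ, 0 < ε → ∃ C, 0 ≤ C ∧ ∀ k, L k ≤ ε * T k + C * K0 k := by
    intro ε hε
    obtain ⟨G2, hG2, i2⟩ := I2 (ε / 4) (by positivity)
    obtain ⟨G1, hG1, i1⟩ := I1 (1 / (2 * (G2 + 1))) (by positivity)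
    -- K2 ≤ ε/4 T + G2 K1, (G2+1) K1 ≤ K2/2 + (G2+1) G1 K0
    refine ⟨1 + 2 * ((G2 + 1) * G1), by positivity, fun k => ?_⟩
    have i2 := i2 k
    have i1 := mul_le_mul_of_nonneg_left (i1 k) (show 0 ≤ G2 + 1 by positivity)
    have e1 : (G2 + 1) * (1 / (2 * (G2 + 1)) * K2 k + G1 * K0 k) =
      K2 k / 2 + (G2 + 1) * G1 * K0 k := by field_simp
    rw [e1] at i1
    have := K1p k
    have := K2p k
    have := mul_nonneg hG2 (K1p k)
    have := mul_nonneg hε.le (Tpos k)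
    simp only [L]
    nlinarith
  obtain ⟨G, hG, i3⟩ := I3 ((p - 1) / (2 * (C2 + p * C1 + 1))) (by
    have : 0 < p - 1 := by linarith
    positivity)
  have hT : ∀ k, T k ≤ 2 * (C2 + p * C1 + 1) * G / (p - 1) * K0 k := by
    intro k
    have h1 := F3 k
    have h2 := i3 k
    have hz : 0 < C2 + p * C1 + 1 := by positivity
    have hLp : 0 ≤ L k := add_nonneg (add_nonneg (K0p k) (K1p k)) (K2p k)
    have h3 : (p - 1) * T k ≤ (C2 + p * C1 + 1) * L k := by linarith
    have h4 := mul_le_mul_of_nonneg_left h2 hz.le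
    have e1 : (C2 + p * C1 + 1) * ((p - 1) / (2 * (C2 + p * C1 + 1)) * T k + G * K0 k) =
      (p - 1) / 2 * T k + (C2 + p * C1 + 1) * G * K0 k := by field_simp
    rw [e1] at h4
    have h5 : T k * (p - 1) ≤ 2 * (C2 + p * C1 + 1) * G * K0 k := by linarith
    rw [div_mul_eq_mul_div, le_div_iff₀ (by linarith)]
    exact h5
  obtain ⟨G', hG', i3'⟩ := I3 1 one_pos
  set H := 2 * (C2 + p * C1 + 1) * G / (p - 1)
  have hH : 0 ≤ H := by
    have : 0 < p - 1 := by linarith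
    positivity
  have hL' : ∀ k, L k ≤ (H + G') * K0 k := fun k => by
    have := i3' k; have := hT k; linarith
  have hXK : ∀ k, X k ≤ (H + C1 * (H + G')) * K0 k := fun k => by
    have h1 := (abs_le.1 (F1 k)).2
    have h2 := hT k
    have h3 := mul_le_mul_of_nonneg_left (hL' k) hC1
    linarith
  set Q := H + C1 * (H + G')
  have hQ : 0 ≤ Q := by positivity
  obtain ⟨C, hC⟩ := hY (1 / (2 * (Q + 1))) (by positivity)
  have hK0 : ∀ k, K0 k ≤ 2 * |C| := by
    intro k
    have h1 : K0 k ≤ 1 / (2 * (Q + 1)) * X k + C := hC k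
    have h2 : 1 / (2 * (Q + 1)) * X k ≤ 1 / (2 * (Q + 1)) * (Q * K0 k) :=
      mul_le_mul_of_nonneg_left (hXK k) (by positivity)
    have h3 : 1 / (2 * (Q + 1)) * (Q * K0 k) ≤ K0 k / 2 := by
      rw [div_mul_eq_mul_div, div_le_div_iff₀ (by positivity) (by positivity)]
      have := K0p k
      nlinarith
    have := le_abs_self C
    linarith
  refine ⟨max (Q * (2 * |C|)) (max (H * (2 * |C|)) ((H + G') * (2 * |C|))), fun k => ⟨?_, ?_⟩⟩
  · rw [← hsq]
    exact ((hXK k).trans (mul_le_mul_of_nonneg_left (hK0 k) hQ)).trans (le_max_left _ _)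
  · intro i j hij
    have hmono : b k j (fun t => ψ t ^ (2 * q + 6)) (D^[i] w) (D^[i] w) ≤ e i j k := by
      refine (hb k j).wle _ _ (hadm 6) (hadm _) (fun t => ?_) _
      exact pow_le_pow_of_le_one (h0 t) (h1 t) (by omega)
    refine hmono.trans (le_trans ?_ (le_max_right _ _))
    by_cases h3 : i + j ≤ 2
    · refine le_trans ?_ (le_max_right _ _)
      exact (hle i j h3 k).trans ((hL' k).trans
        (mul_le_mul_of_nonneg_left (hK0 k) (by positivity)))
    · refine le_trans ?_ (le_max_left _ _)
      refine le_trans ?_ ((hT k).trans (mul_le_mul_of_nonneg_left (hK0 k) hH))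
      have := epos 3 0 k; have := epos 2 1 k; have := epos 1 2 k; have := epos 0 3 k
      have hi : i ≤ 3 := by omega
      have hj : j = 3 - i := by omega
      subst hj
      simp only [T]
      interval_cases i <;> simp <;> linarith

end
end TL

namespace TL
open scoped ContDiff

local notation "sT" => Real.smoothTransition

theorem sT_smooth : ContDiff ℝ ∞ sT := Real.smoothTransition.contDiff

theorem deriv_iter_congr {f g : ℝ → ℝ} {t : ℝ} (h : f =ᶠ[nhds t] g) (a : ℕ) :
    deriv^[a] f =ᶠ[nhds t] deriv^[a] g := by
  induction a with
  | zero => exact h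
  | succ a ih =>
    rw [Function.iterate_succ_apply', Function.iterate_succ_apply']
    exact ih.deriv

theorem deriv_iter_const (c : ℝ) {a : ℕ} (ha : 1 ≤ a) : deriv^[a] (fun _ : ℝ => c) = fun _ => 0 := by
  induction a, ha using Nat.le_induction with
  | base => funext t; simp
  | succ a _ ih => rw [Function.iterate_succ_apply', ih]; funext t; simp

/-- differential expression in a cutoff -/
def cutE (a d : ℕ) (η : ℝ → ℝ) : ℝ → ℝ := deriv^[d] (fun t => η t * (deriv^[a] η) t)

theorem cutE_congr {f g : ℝ → ℝ} {t : ℝ} (h : f =ᶠ[nhds t] g) (a d : ℕ) :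
    cutE a d f t = cutE a d g t :=
  (deriv_iter_congr (h.mul (deriv_iter_congr h a)) d).eq_of_nhds

theorem cutE_const (c : ℝ) {a d : ℕ} (h : 1 ≤ a + d) (t : ℝ) : cutE a d (fun _ => c) t = 0 := by
  unfold cutE
  rcases Nat.eq_zero_or_pos a with rfl | ha
  · simp only [Function.iterate_zero, id]
    rw [deriv_iter_const _ (by omega)]
  · rw [deriv_iter_const _ ha]
    simp only [mul_zero]
    rcases Nat.eq_zero_or_pos d with rfl | hd
    · rfl
    · rw [deriv_iter_const _ hd]

theorem cutE_shift (η : ℝ → ℝ) (T : ℝ) (a d : ℕ) (t : ℝ) :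
    cutE a d (fun t => η (t - T)) t = cutE a d η (t - T) := by
  unfold cutE
  rw [deriv_iter_shift]
  exact congrFun (deriv_iter_shift (fun t => η t * (deriv^[a] η) t) T d) t

theorem cutE_smooth {η : ℝ → ℝ} (h : ContDiff ℝ ∞ η) (a d : ℕ) : ContDiff ℝ ∞ (cutE a d η) :=
  contDiff_deriv_iter (h.mul (contDiff_deriv_iter h a)) d

theorem cutE_bound {η : ℝ → ℝ} (h : ContDiff ℝ ∞ η) {c0 c1 : ℝ} (hl : ∀ t ≤ 0, η t = c0)
    (hr : ∀ t, 1 ≤ t → η t = c1) {a d : ℕ} (had : 1 ≤ a + d) :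
    ∃ C, 0 ≤ C ∧ (∀ t, |cutE a d η t| ≤ C) ∧ (∀ t, t ∉ Set.Icc (0:ℝ) 1 → cutE a d η t = 0) := by
  have hz : ∀ t, t ∉ Set.Icc (0:ℝ) 1 → cutE a d η t = 0 := by
    intro t ht
    rw [Set.mem_Icc, not_and_or, not_le, not_le] at ht
    rcases ht with ht | ht
    · rw [cutE_congr (g := fun _ => c0) (by
        filter_upwards [gt_mem_nhds ht] with x hx using hl x hx.le), cutE_const _ had]
    · rw [cutE_congr (g := fun _ => c1) (by
        filter_upwards [lt_mem_nhds ht] with x hx using hr x hx.le), cutE_const _ had]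
  obtain ⟨C, hC⟩ := isCompact_Icc.exists_bound_of_continuousOn (s := Set.Icc (0:ℝ) 1)
    (f := cutE a d η) (cutE_smooth h a d).continuous.continuousOn
  refine ⟨max C 0, le_max_right _ _, fun t => ?_, hz⟩
  by_cases ht : t ∈ Set.Icc (0:ℝ) 1
  · exact (hC t ht).trans (le_max_left _ _)
  · rw [hz t ht]; simp

/-- cutoff equal to one on `[A+1, B]` and vanishing outside `[A, B+1]`. -/
def cut (A B : ℝ) (t : ℝ) : ℝ := sT (t - A) - sT (t - B)

theorem cut_smooth (A B : ℝ) : ContDiff ℝ ∞ (cut A B) :=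
  (sT_smooth.comp (contDiff_id.sub contDiff_const)).sub
    (sT_smooth.comp (contDiff_id.sub contDiff_const))

theorem sT_mono : Monotone sT := Real.smoothTransition.monotone

theorem cut_nonneg {A B : ℝ} (h : A ≤ B) (t : ℝ) : 0 ≤ cut A B t :=
  sub_nonneg.2 (sT_mono (by linarith))

theorem cut_le_one (A B t : ℝ) : cut A B t ≤ 1 := by
  have := Real.smoothTransition.le_one (t - A)
  have := Real.smoothTransition.nonneg (t - B)
  unfold cut; linarith

theorem cut_one {A B t : ℝ} (h1 : A + 1 ≤ t) (h2 : t ≤ B) : cut A B t = 1 := by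
  unfold cut
  rw [Real.smoothTransition.one_of_one_le (by linarith),
    Real.smoothTransition.zero_of_nonpos (by linarith), sub_zero]

theorem cut_zero_left {A B t : ℝ} (h : A ≤ B) (h1 : t ≤ A) : cut A B t = 0 := by
  unfold cut
  rw [Real.smoothTransition.zero_of_nonpos (by linarith),
    Real.smoothTransition.zero_of_nonpos (by linarith), sub_zero]

theorem cut_zero_right {A B t : ℝ} (h : A ≤ B) (h1 : B + 1 ≤ t) : cut A B t = 0 := by
  unfold cut
  rw [Real.smoothTransition.one_of_one_le (by linarith),
    Real.smoothTransition.one_of_one_le (by linarith), sub_self]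

theorem cut_adm {A B : ℝ} (h : A ≤ B) : Adm (cut A B) := by
  refine ⟨cut_smooth A B, HasCompactSupport.of_support_subset_isCompact
    (isCompact_Icc (a := A) (b := B + 1)) fun t ht => ?_⟩
  by_contra hn
  rw [Set.mem_Icc, not_and_or, not_le, not_le] at hn
  rcases hn with hn | hn
  · exact ht (cut_zero_left h hn.le)
  · exact ht (cut_zero_right h hn.le)

/-- bump equal to one on `[0,1]`, vanishing outside `(-1,2)`. -/
def bmp (t : ℝ) : ℝ := sT (t + 1) * sT (2 - t)

theorem bmp_zero_left {t : ℝ} (h : t ≤ -1) : bmp t = 0 := by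
  unfold bmp; rw [Real.smoothTransition.zero_of_nonpos (by linarith), zero_mul]
theorem bmp_zero_right {t : ℝ} (h : 2 ≤ t) : bmp t = 0 := by
  unfold bmp; rw [Real.smoothTransition.zero_of_nonpos (x := 2 - t) (by linarith), mul_zero]
theorem bmp_one {t : ℝ} (h : t ∈ Set.Icc (0:ℝ) 1) : bmp t = 1 := by
  unfold bmp
  rw [Real.smoothTransition.one_of_one_le (by linarith [h.1]),
    Real.smoothTransition.one_of_one_le (by linarith [h.2]), mul_one]
theorem bmp_nonneg (t : ℝ) : 0 ≤ bmp t :=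
  mul_nonneg (Real.smoothTransition.nonneg _) (Real.smoothTransition.nonneg _)
theorem bmp_le_one (t : ℝ) : bmp t ≤ 1 :=
  mul_le_one₀ (Real.smoothTransition.le_one _) (Real.smoothTransition.nonneg _)
    (Real.smoothTransition.le_one _)
theorem bmp_adm : Adm bmp := by
  refine ⟨(sT_smooth.comp (contDiff_id.add contDiff_const)).mul
    (sT_smooth.comp (contDiff_const.sub contDiff_id)), HasCompactSupport.of_support_subset_isCompact
    (isCompact_Icc (a := (-1:ℝ)) (b := 2)) fun t ht => ?_⟩
  by_contra hn
  rw [Set.mem_Icc, not_and_or, not_le, not_le] at hn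
  rcases hn with hn | hn
  · exact ht (bmp_zero_left hn.le)
  · exact ht (bmp_zero_right hn.le)

theorem cut_weight {a d : ℕ} (had : 1 ≤ a + d) {m : ℕ} : ∃ C, 0 ≤ C ∧ ∀ A B : ℝ, A + 2 ≤ B →
    ∀ t, |cutE a d (cut A B) t| ≤ C * (bmp (t - A) ^ m + bmp (t - B) ^ m) := by
  obtain ⟨C1, hC1, b1, z1⟩ := cutE_bound (η := sT) sT_smooth (c0 := 0) (c1 := 1)
    (fun t ht => Real.smoothTransition.zero_of_nonpos ht)
    (fun t ht => Real.smoothTransition.one_of_one_le ht) had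
  obtain ⟨C2, hC2, b2, z2⟩ := cutE_bound (η := fun t => 1 - sT t)
    (contDiff_const.sub sT_smooth) (c0 := 1) (c1 := 0)
    (fun t ht => by simp [Real.smoothTransition.zero_of_nonpos ht])
    (fun t ht => by simp [Real.smoothTransition.one_of_one_le ht]) had
  have gen : ∀ C (η : ℝ → ℝ), 0 ≤ C → (∀ t, |cutE a d η t| ≤ C) →
      (∀ t, t ∉ Set.Icc (0:ℝ) 1 → cutE a d η t = 0) → ∀ t, |cutE a d η t| ≤ C * bmp t ^ m := by
    intro C η hC hb hz t
    by_cases ht : t ∈ Set.Icc (0:ℝ) 1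
    · rw [bmp_one ht, one_pow, mul_one]; exact hb t
    · rw [hz t ht, abs_zero]; exact mul_nonneg hC (pow_nonneg (bmp_nonneg t) _)
  refine ⟨C1 + C2, by positivity, fun A B hAB t => ?_⟩
  have pa := pow_nonneg (bmp_nonneg (t - A)) m
  have pb := pow_nonneg (bmp_nonneg (t - B)) m
  rcases lt_or_ge t B with ht | ht
  · have : cut A B =ᶠ[nhds t] fun t => sT (t - A) := by
      filter_upwards [gt_mem_nhds ht] with x hx
      unfold cut; rw [Real.smoothTransition.zero_of_nonpos (x := x - B) (by linarith), sub_zero]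
    rw [cutE_congr this, cutE_shift]
    have := gen C1 _ hC1 b1 z1 (t - A)
    nlinarith [mul_nonneg hC2 pa, mul_nonneg hC2 pb, mul_nonneg hC1 pb]
  · have : cut A B =ᶠ[nhds t] fun t => (fun t => 1 - sT t) (t - B) := by
      filter_upwards [lt_mem_nhds (show A + 1 < t by linarith)] with x hx
      unfold cut; rw [Real.smoothTransition.one_of_one_le (x := x - A) (by linarith)]
    rw [cutE_congr this, cutE_shift (fun t => 1 - sT t)]
    have := gen C2 _ hC2 b2 z2 (t - B)
    nlinarith [mul_nonneg hC2 pa, mul_nonneg hC1 pa, mul_nonneg hC1 pb]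

end TL

namespace TL
open scoped ContDiff

/-- The abstract data extracted from a solution. -/
structure Sys {W : Type*} (D : W → W) (b : ℕ → (ℝ → ℝ) → W → W → ℝ) (w : W)
    (P : (ℝ → ℝ) → ℝ) (c s : ℕ → ℕ → ℝ) (p T0 : ℝ) (q : ℕ) : Prop where
  hb : ∀ j, DForm D (b j)
  hadd : ∀ j ρ σ, Adm ρ → Adm σ → ∀ f g, b j (fun t => ρ t + σ t) f g = b j ρ f g + b j σ f g
  hA : ∀ j σ τ, Adm σ → Adm τ → ∀ ε : ℝ, 0 < ε → b (j+1) (fun t => σ t * τ t) w w ≤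
      ε * b (j+2) (fun t => σ t ^ 2) w w + (1 / (4 * ε)) * b j (fun t => τ t ^ 2) w w
  hp : 1 < p
  hq : 3 ≤ q
  hc : c 6 0 = -1 ∧ c 4 1 = 3 ∧ c 2 2 = -3 ∧ c 0 3 = 1
  hs : s 6 0 = -1 ∧ s 4 1 = 3 ∧ s 2 2 = -3 ∧ s 0 3 = 1
  hd1 : c 1 0 < 0 ∧ c 1 1 < 0 ∧ c 1 2 < 0 ∧ 0 < c 3 0 ∧ 0 < c 3 1 ∧ c 5 0 < 0
  hd0 : 0 < p * c 0 0 - s 0 0 ∧ 0 < p * c 0 1 - s 0 1 ∧ 0 < p * c 0 2 - s 0 2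
  hP : ∀ ρ, Adm ρ → P ρ = ∑ q ∈ idx, c q.1 q.2 * b q.2 ρ w (D^[q.1] w)
  hPm : ∀ ρ σ, Adm ρ → Adm σ → (∀ t, ρ t ≤ σ t) → P ρ ≤ P σ
  hPD : ∀ ρ, Adm ρ → ∑ q ∈ idx, c q.1 q.2 * b q.2 ρ (D w) (D^[q.1] w) = - P (deriv ρ) / (p + 1)
  hS : ∀ η, Adm η → (∀ t ≤ T0, η t = 0) → p * P (fun t => η t * η t) ≤
      ∑ r ∈ idx, s r.1 r.2 * ∑ l ∈ Finset.range (r.1 + 1), (r.1.choose l : ℝ) *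
        b r.2 (fun t => η t * (deriv^[r.1 - l] η) t) w (D^[l] w)
  hY : ∀ δ : ℝ, 0 < δ → ∃ C, ∀ T, b 0 (fun t => bmp (t - T) ^ (2 * q)) w w ≤
      δ * P (fun t => bmp (t - T) ^ (q + 3) * bmp (t - T) ^ (q + 3)) + C
  h0 : ∀ ρ, Adm ρ → ∀ i m j, Tendsto (fun S : ℝ => b j (fun t => ρ (t + S)) (D^[i] w) (D^[m] w))
    atTop (nhds 0)

theorem DForm.shift {W : Type*} {D : W → W} {b : (ℝ → ℝ) → W → W → ℝ} (h : DForm D b) (T : ℝ) :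
    DForm D (fun ρ => b (fun t => ρ (t - T))) where
  symm ρ f g := h.symm _ f g
  der ρ hρ f g := by
    have := h.der _ (hρ.shift T) f g
    rwa [show deriv (fun t => ρ (t - T)) = fun t => deriv ρ (t - T) from
      deriv_iter_shift ρ T 1] at this
  wle ρ σ hρ hσ hle f := h.wle _ _ (hρ.shift T) (hσ.shift T) (fun t => hle _) f
  wsmul ρ hρ c f g := h.wsmul _ (hρ.shift T) c f g
  cs σ τ hσ hτ f g := h.cs _ _ (hσ.shift T) (hτ.shift T) f g

namespace Sys
variable {W : Type*} {D : W → W} {b : ℕ → (ℝ → ℝ) → W → W → ℝ} {w : W}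
    {P : (ℝ → ℝ) → ℝ} {c s : ℕ → ℕ → ℝ} {p T0 : ℝ} {q : ℕ}

/-- window weight -/
def th (q : ℕ) (T : ℝ) (t : ℝ) : ℝ := bmp (t - T) ^ (2 * q + 6)

theorem th_adm (q : ℕ) (T : ℝ) : Adm (th q T) := (bmp_adm.pow (k := 2 * q + 6) (by omega)).shift T

theorem th_nonneg (q : ℕ) (T t : ℝ) : 0 ≤ th q T t := pow_nonneg (bmp_nonneg _) _

/-- full energy with weight `ρ` -/
def full (D : W → W) (b : ℕ → (ℝ → ℝ) → W → W → ℝ) (w : W) (P : (ℝ → ℝ) → ℝ) (ρ : ℝ → ℝ) : ℝ :=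
  (∑ i ∈ Finset.range 4, ∑ j ∈ Finset.range (4 - i), b j ρ (D^[i] w) (D^[i] w)) + P ρ

theorem Psmul (H : Sys D b w P c s p T0 q) {ρ : ℝ → ℝ} (hρ : Adm ρ) (e : ℝ) :
    P (fun t => e * ρ t) = e * P ρ := by
  rw [H.hP _ (hρ.smul e), H.hP _ hρ, Finset.mul_sum]
  refine Finset.sum_congr rfl fun r _ => ?_
  rw [(H.hb r.2).wsmul _ hρ]; ring

theorem Padd (H : Sys D b w P c s p T0 q) {ρ σ : ℝ → ℝ} (hρ : Adm ρ) (hσ : Adm σ) :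
    P (fun t => ρ t + σ t) = P ρ + P σ := by
  rw [H.hP _ (hρ.add hσ), H.hP _ hρ, H.hP _ hσ, ← Finset.sum_add_distrib]
  refine Finset.sum_congr rfl fun r _ => ?_
  rw [H.hadd _ _ _ hρ hσ]; ring

theorem Pnonneg (H : Sys D b w P c s p T0 q) {ρ : ℝ → ℝ} (hρ : Adm ρ) (h : ∀ t, 0 ≤ ρ t) :
    0 ≤ P ρ := by
  have h1 := H.Psmul hρ 0
  have h2 := H.hPm (fun t => 0 * ρ t) ρ (hρ.smul 0) hρ (by simpa using h)
  linarith

theorem Pabs (H : Sys D b w P c s p T0 q) {ρ σ : ℝ → ℝ} (hρ : Adm ρ) (hσ : Adm σ) {C : ℝ}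
    (hle : ∀ t, |ρ t| ≤ C * σ t) : |P ρ| ≤ C * P σ := by
  have h1 := H.hPm ρ (fun t => C * σ t) hρ (hσ.smul C) (fun t => (le_abs_self _).trans (hle t))
  have h2 := H.hPm (fun t => (-1) * ρ t) (fun t => C * σ t) (hρ.smul _) (hσ.smul C)
    (fun t => by have := (neg_le_abs (ρ t)).trans (hle t); linarith)
  rw [H.Psmul hσ] at h1 h2
  rw [H.Psmul hρ] at h2
  exact _root_.abs_le.2 ⟨by linarith, h1⟩

theorem E_le_full (H : Sys D b w P c s p T0 q) {ρ : ℝ → ℝ} (hρ : Adm ρ) (h : ∀ t, 0 ≤ ρ t)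
    {i j : ℕ} (hij : i + j ≤ 3) : b j ρ (D^[i] w) (D^[i] w) ≤ full D b w P ρ := by
  have h1 : b j ρ (D^[i] w) (D^[i] w) ≤
      ∑ j ∈ Finset.range (4 - i), b j ρ (D^[i] w) (D^[i] w) :=
    Finset.single_le_sum (f := fun j => b j ρ (D^[i] w) (D^[i] w))
      (fun j _ => (H.hb j).nonneg hρ h _) (Finset.mem_range.2 (by omega))
  have h2 : ∑ j ∈ Finset.range (4 - i), b j ρ (D^[i] w) (D^[i] w) ≤
      ∑ i ∈ Finset.range 4, ∑ j ∈ Finset.range (4 - i), b j ρ (D^[i] w) (D^[i] w) :=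
    Finset.single_le_sum (f := fun i => ∑ j ∈ Finset.range (4 - i), b j ρ (D^[i] w) (D^[i] w))
      (fun i _ => Finset.sum_nonneg fun j _ => (H.hb j).nonneg hρ h _)
      (Finset.mem_range.2 (by omega))
  have := H.Pnonneg hρ h
  unfold full; linarith

theorem P_le_full (H : Sys D b w P c s p T0 q) {ρ : ℝ → ℝ} (hρ : Adm ρ) (h : ∀ t, 0 ≤ ρ t) :
    P ρ ≤ full D b w P ρ := by
  have : 0 ≤ ∑ i ∈ Finset.range 4, ∑ j ∈ Finset.range (4 - i), b j ρ (D^[i] w) (D^[i] w) :=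
    Finset.sum_nonneg fun i _ => Finset.sum_nonneg fun j _ => (H.hb j).nonneg hρ h _
  unfold full; linarith

theorem full_nonneg (H : Sys D b w P c s p T0 q) {ρ : ℝ → ℝ} (hρ : Adm ρ) (h : ∀ t, 0 ≤ ρ t) :
    0 ≤ full D b w P ρ := (H.Pnonneg hρ h).trans (H.P_le_full hρ h)

theorem full_mono (H : Sys D b w P c s p T0 q) {ρ σ : ℝ → ℝ} (hρ : Adm ρ) (hσ : Adm σ)
    (h : ∀ t, ρ t ≤ σ t) : full D b w P ρ ≤ full D b w P σ :=
  add_le_add (Finset.sum_le_sum fun i _ => Finset.sum_le_sum fun j _ =>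
    (H.hb j).wle _ _ hρ hσ h _) (H.hPm _ _ hρ hσ h)

theorem full_add (H : Sys D b w P c s p T0 q) {ρ σ : ℝ → ℝ} (hρ : Adm ρ) (hσ : Adm σ) :
    full D b w P (fun t => ρ t + σ t) = full D b w P ρ + full D b w P σ := by
  unfold full
  rw [H.Padd hρ hσ]
  simp only [H.hadd _ _ _ hρ hσ, Finset.sum_add_distrib]
  ring

/-- uniform window bound -/
theorem window (H : Sys D b w P c s p T0 q) : ∃ B, ∀ T, T0 + 1 ≤ T → full D b w P (th q T) ≤ B := by
  obtain ⟨B, hB⟩ := step1 (ι := {T : ℝ // T0 + 1 ≤ T})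
    (b := fun T j ρ => b j (fun t => ρ (t - T.1))) (w := w) (D := D)
    (P := fun T ρ => P (fun t => ρ (t - T.1)))
    (fun T j => (H.hb j).shift T.1)
    (fun T j σ τ hσ hτ ε hε => H.hA j _ _ (hσ.shift T.1) (hτ.shift T.1) ε hε)
    bmp_adm bmp_nonneg bmp_le_one H.hq H.hp c s H.hc H.hs
    (fun T ρ hρ => H.hP _ (hρ.shift T.1))
    (fun T => by
      have := H.hS _ ((bmp_adm.pow (k := q + 3) (by omega)).shift T.1) (fun t ht => by
        have := T.2
        rw [bmp_zero_left (by linarith), zero_pow (by omega)])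
      simp only [deriv_iter_shift (fun t => bmp t ^ (q + 3)) T.1] at this
      exact this)
    (fun δ hδ => by
      obtain ⟨C, hC⟩ := H.hY δ hδ
      exact ⟨C, fun T => hC T.1⟩)
  refine ⟨(∑ i ∈ Finset.range 4, ∑ j ∈ Finset.range (4 - i), B) + B, fun T hT => ?_⟩
  refine add_le_add (Finset.sum_le_sum fun i hi => Finset.sum_le_sum fun j hj => ?_)
    (hB ⟨T, hT⟩).1
  exact (hB ⟨T, hT⟩).2 i j (by
    have := Finset.mem_range.1 hi
    have := Finset.mem_range.1 hj
    omega)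

/-- index set for long cutoffs -/
def LI : Type := {x : ℝ × ℝ // x.1 + 2 ≤ x.2}

/-- the boundary energy -/
def bd (D : W → W) (b : ℕ → (ℝ → ℝ) → W → W → ℝ) (w : W) (P : (ℝ → ℝ) → ℝ) (q : ℕ) (k : LI) : ℝ :=
  full D b w P (th q k.1.1) + full D b w P (th q k.1.2)

theorem LI.adm (k : LI) : Adm (cut k.1.1 k.1.2) := cut_adm (by have := k.2; linarith)

theorem LI.adm2 (k : LI) : Adm (fun t => cut k.1.1 k.1.2 t * cut k.1.1 k.1.2 t) :=
  k.adm.mul k.adm.1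

theorem LI.nonneg2 (k : LI) (t : ℝ) : 0 ≤ cut k.1.1 k.1.2 t * cut k.1.1 k.1.2 t :=
  mul_self_nonneg _

theorem bd_E (H : Sys D b w P c s p T0 q) {i j a d : ℕ} (had : 1 ≤ a + d) (hij : i + j ≤ 3) :
    Dom (fun k : LI => b j (deriv^[d] (fun t => cut k.1.1 k.1.2 t *
      (deriv^[a] (cut k.1.1 k.1.2)) t)) (D^[i] w) (D^[i] w)) (bd D b w P q) := by
  obtain ⟨C, hC, hw⟩ := cut_weight had (m := 2 * q + 6)
  refine ⟨C, hC, fun k => ?_⟩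
  have h1 := (H.hb j).abs_le ((k.adm.mul (contDiff_deriv_iter k.adm.1 a)).iter d)
    ((th_adm q k.1.1).add (th_adm q k.1.2)) (hw _ _ k.2) (D^[i] w)
  rw [H.hadd _ _ _ (th_adm q k.1.1) (th_adm q k.1.2)] at h1
  refine h1.trans (mul_le_mul_of_nonneg_left ?_ hC)
  exact add_le_add (H.E_le_full (th_adm q _) (th_nonneg q _) hij)
    (H.E_le_full (th_adm q _) (th_nonneg q _) hij)

theorem bd_P (H : Sys D b w P c s p T0 q) :
    Dom (fun k : LI => P (deriv (fun t => cut k.1.1 k.1.2 t * cut k.1.1 k.1.2 t)))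
      (bd D b w P q) := by
  obtain ⟨C, hC, hw⟩ := cut_weight (a := 0) (d := 1) (by omega) (m := 2 * q + 6)
  refine ⟨C, hC, fun k => ?_⟩
  have h1 := H.Pabs k.adm2.deriv ((th_adm q k.1.1).add (th_adm q k.1.2)) (hw _ _ k.2)
  rw [H.Padd (th_adm q k.1.1) (th_adm q k.1.2)] at h1
  refine h1.trans (mul_le_mul_of_nonneg_left ?_ hC)
  exact add_le_add (H.P_le_full (th_adm q _) (th_nonneg q _))
    (H.P_le_full (th_adm q _) (th_nonneg q _))

/-- diagonal energy on the long cutoff -/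
def EL (D : W → W) (b : ℕ → (ℝ → ℝ) → W → W → ℝ) (w : W) (i j : ℕ) (k : LI) : ℝ :=
  b j (fun t => cut k.1.1 k.1.2 t * cut k.1.1 k.1.2 t) (D^[i] w) (D^[i] w)

theorem EL_nonneg (H : Sys D b w P c s p T0 q) (i j : ℕ) (k : LI) : 0 ≤ EL D b w i j k :=
  (H.hb j).nonneg k.adm2 k.nonneg2 _

theorem bd_nonneg (H : Sys D b w P c s p T0 q) (k : LI) : 0 ≤ bd D b w P q k :=
  add_nonneg (H.full_nonneg (th_adm q _) (th_nonneg q _)) (H.full_nonneg (th_adm q _) (th_nonneg q _))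

/-- Step 2. -/
theorem diss (H : Sys D b w P c s p T0 q) : ∃ C, 0 ≤ C ∧ ∀ k : LI,
    EL D b w 1 0 k + EL D b w 1 1 k + EL D b w 1 2 k + EL D b w 2 0 k + EL D b w 2 1 k
      + EL D b w 3 0 k ≤ C * bd D b w P q k := by
  have h1 := expandD (b := fun (_ : LI) => b) (fun _ j => H.hb j) (w := w) (D := D)
    (χ := fun k : LI => fun t => cut k.1.1 k.1.2 t * cut k.1.1 k.1.2 t) (fun k => k.adm2)
    (L := bd D b w P q) (fun i j a ha hij _ => by
      have := H.bd_E (i := i) (j := j) (a := 0) (d := a) (by omega) hij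
      exact this) c
  obtain ⟨C1, hC1, h1⟩ := h1
  obtain ⟨C2, hC2, h2⟩ := H.bd_P
  obtain ⟨g1, g2, g3, g4, g5, g6⟩ := H.hd1
  have hp := H.hp
  obtain ⟨μ, hμ, m1, m2, m3, m4, m5, m6⟩ : ∃ μ : ℝ, 0 < μ ∧ μ ≤ -c 1 0 ∧ μ ≤ -c 1 1 ∧
      μ ≤ -c 1 2 ∧ μ ≤ c 3 0 ∧ μ ≤ c 3 1 ∧ μ ≤ -c 5 0 := by
    refine ⟨min (-c 1 0) (min (-c 1 1) (min (-c 1 2) (min (c 3 0) (min (c 3 1) (-c 5 0))))), ?_, ?_⟩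
    · simp only [lt_min_iff]; refine ⟨?_, ?_, ?_, ?_, ?_, ?_⟩ <;> linarith
    · simp
  refine ⟨(C1 + C2) / μ, by positivity, fun k => ?_⟩
  have h1 := (abs_le.1 (h1 k)).2
  have h2 := (abs_le.1 (h2 k)).2
  beta_reduce at h1 h2
  rw [H.hPD _ k.adm2] at h1
  have e0 := H.EL_nonneg 1 0 k
  have e1 := H.EL_nonneg 1 1 k
  have e2 := H.EL_nonneg 1 2 k
  have e3 := H.EL_nonneg 2 0 k
  have e4 := H.EL_nonneg 2 1 k
  have e5 := H.EL_nonneg 3 0 k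
  have hbd := H.bd_nonneg k
  have h4 : P (deriv fun t => cut k.1.1 k.1.2 t * cut k.1.1 k.1.2 t) / (p + 1) ≤
      C2 * bd D b w P q k := by
    rw [div_le_iff₀ (by linarith)]
    nlinarith [mul_nonneg hC2 hbd]
  have h5 : dissE c (fun i j => b j (fun t => cut k.1.1 k.1.2 t * cut k.1.1 k.1.2 t)
      (D^[i] w) (D^[i] w)) = c 1 0 * EL D b w 1 0 k + c 1 1 * EL D b w 1 1 k +
      c 1 2 * EL D b w 1 2 k - c 3 0 * EL D b w 2 0 k - c 3 1 * EL D b w 2 1 k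
      + c 5 0 * EL D b w 3 0 k := rfl
  rw [h5, neg_div] at h1
  rw [div_mul_eq_mul_div, le_div_iff₀ hμ]
  have f0 := mul_le_mul_of_nonneg_right m1 e0
  have f1 := mul_le_mul_of_nonneg_right m2 e1
  have f2 := mul_le_mul_of_nonneg_right m3 e2
  have f3 := mul_le_mul_of_nonneg_right m4 e3
  have f4 := mul_le_mul_of_nonneg_right m5 e4
  have f5 := mul_le_mul_of_nonneg_right m6 e5
  linarith

theorem abs_coef (x : ℝ) {e M : ℝ} (he : 0 ≤ e) (hM : e ≤ M) : |x * e| ≤ |x| * M := by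
  rw [abs_mul, abs_of_nonneg he]
  exact mul_le_mul_of_nonneg_left hM (abs_nonneg x)

/-- Step 3. -/
theorem long (H : Sys D b w P c s p T0 q) : ∃ C, 0 ≤ C ∧ ∀ k : LI, T0 ≤ k.1.1 →
    full D b w P (fun t => cut k.1.1 k.1.2 t * cut k.1.1 k.1.2 t) ≤ C * bd D b w P q k := by
  have hL : ∀ i j a d, 1 ≤ a + d → 2 * (i + j) + a + d ≤ 6 →
      Dom (fun k : LI => b j (deriv^[d] (fun t => cut k.1.1 k.1.2 t *
      (deriv^[a] (cut k.1.1 k.1.2)) t)) (D^[i] w) (D^[i] w)) (bd D b w P q) :=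
    fun i j a d h1 h2 => H.bd_E h1 (by omega)
  obtain ⟨C1, hC1, EP⟩ := expandP (b := fun (_ : LI) => b) (fun _ j => H.hb j) (w := w) (D := D)
    (η := fun k : LI => cut k.1.1 k.1.2) (fun k => k.adm) hL c
  obtain ⟨C2, hC2, ES⟩ := expandS (b := fun (_ : LI) => b) (fun _ j => H.hb j) (w := w) (D := D)
    (η := fun k : LI => cut k.1.1 k.1.2) (fun k => k.adm) hL s
  obtain ⟨C3, hC3, hD⟩ := H.diss
  obtain ⟨g0, g1, g2⟩ := H.hd0
  have hp := H.hp
  obtain ⟨μ, hμ, m0, m1, m2, m3⟩ : ∃ μ : ℝ, 0 < μ ∧ μ ≤ p * c 0 0 - s 0 0 ∧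
      μ ≤ p * c 0 1 - s 0 1 ∧ μ ≤ p * c 0 2 - s 0 2 ∧ μ ≤ p * c 0 3 - s 0 3 := by
    refine ⟨min (p * c 0 0 - s 0 0) (min (p * c 0 1 - s 0 1) (min (p * c 0 2 - s 0 2)
      (p * c 0 3 - s 0 3))), ?_, ?_⟩
    · simp only [lt_min_iff]; refine ⟨?_, ?_, ?_, ?_⟩ <;> try linarith
      rw [H.hc.2.2.2, H.hs.2.2.2]; linarith
    · simp
  set N : ℝ := |p * c 2 0 - s 2 0| + |p * c 2 1 - s 2 1| + |p * c 2 2 - s 2 2| +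
    |p * c 4 0 - s 4 0| + |p * c 4 1 - s 4 1| + |p * c 6 0 - s 6 0| with hN
  set K : ℝ := (N * C3 + p * C1 + C2) / μ
  have hK : 0 ≤ K := by positivity
  set M : ℝ := |c 0 0| + |c 0 1| + |c 0 2| + |c 0 3| + |c 2 0| + |c 2 1| + |c 2 2| + |c 4 0|
    + |c 4 1| + |c 6 0| with hM
  refine ⟨K + C3 + M * (K + C3) + C1, by positivity, fun k hk => ?_⟩
  have e10 := H.EL_nonneg 1 0 k
  have e11 := H.EL_nonneg 1 1 k
  have e12 := H.EL_nonneg 1 2 k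
  have e20 := H.EL_nonneg 2 0 k
  have e21 := H.EL_nonneg 2 1 k
  have e30 := H.EL_nonneg 3 0 k
  have e00 := H.EL_nonneg 0 0 k
  have e01 := H.EL_nonneg 0 1 k
  have e02 := H.EL_nonneg 0 2 k
  have e03 := H.EL_nonneg 0 3 k
  have hbd := H.bd_nonneg k
  have hD := hD k
  have hST := H.hS _ k.adm (fun t ht => cut_zero_left (by have := k.2; linarith) (ht.trans hk))
  have EP := abs_le.1 (EP k)
  have ES := (abs_le.1 (ES k)).2
  beta_reduce at EP ES
  rw [← H.hP _ k.adm2] at EP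
  have hm : ∀ c, mainE c (fun i j => b j (fun t => cut k.1.1 k.1.2 t * cut k.1.1 k.1.2 t)
      (D^[i] w) (D^[i] w)) = c 0 0 * EL D b w 0 0 k + c 0 1 * EL D b w 0 1 k
        + c 0 2 * EL D b w 0 2 k + c 0 3 * EL D b w 0 3 k - c 2 0 * EL D b w 1 0 k
        - c 2 1 * EL D b w 1 1 k - c 2 2 * EL D b w 1 2 k + c 4 0 * EL D b w 2 0 k
        + c 4 1 * EL D b w 2 1 k - c 6 0 * EL D b w 3 0 k := fun c => rfl
  simp only [hm] at EP ES
  set Z := C3 * bd D b w P q k with hZ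
  set Pk := P (fun t => cut k.1.1 k.1.2 t * cut k.1.1 k.1.2 t) with hPk
  have f20 := abs_le.1 (abs_coef (p * c 2 0 - s 2 0) e10 (M := Z) (by linarith))
  have f21 := abs_le.1 (abs_coef (p * c 2 1 - s 2 1) e11 (M := Z) (by linarith))
  have f22 := abs_le.1 (abs_coef (p * c 2 2 - s 2 2) e12 (M := Z) (by linarith))
  have f40 := abs_le.1 (abs_coef (p * c 4 0 - s 4 0) e20 (M := Z) (by linarith))
  have f41 := abs_le.1 (abs_coef (p * c 4 1 - s 4 1) e21 (M := Z) (by linarith))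
  have f60 := abs_le.1 (abs_coef (p * c 6 0 - s 6 0) e30 (M := Z) (by linarith))
  have f00 := mul_le_mul_of_nonneg_right m0 e00
  have f01 := mul_le_mul_of_nonneg_right m1 e01
  have f02 := mul_le_mul_of_nonneg_right m2 e02
  have f03 := mul_le_mul_of_nonneg_right m3 e03
  have hEP1 := mul_le_mul_of_nonneg_left EP.1 (show 0 ≤ p by linarith)
  have hmain : EL D b w 0 0 k + EL D b w 0 1 k + EL D b w 0 2 k + EL D b w 0 3 k ≤
      K * bd D b w P q k := by
    rw [div_mul_eq_mul_div, le_div_iff₀ hμ]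
    have : (N * C3 + p * C1 + C2) * bd D b w P q k = N * Z + p * (C1 * bd D b w P q k)
      + C2 * bd D b w P q k := by rw [hZ]; ring
    rw [this, hN]
    linarith [f20.1, f20.2, f21.1, f21.2, f22.1, f22.2, f40.1, f40.2, f41.1, f41.2, f60.1, f60.2]
  set V := (K + C3) * bd D b w P q k with hV
  have hKb : 0 ≤ K * bd D b w P q k := mul_nonneg hK hbd
  have hZ0 : 0 ≤ Z := mul_nonneg hC3 hbd
  have hVZ : V = K * bd D b w P q k + Z := by rw [hV, hZ]; ring
  have k00 := abs_le.1 (abs_coef (c 0 0) e00 (M := V) (by linarith))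
  have k01 := abs_le.1 (abs_coef (c 0 1) e01 (M := V) (by linarith))
  have k02 := abs_le.1 (abs_coef (c 0 2) e02 (M := V) (by linarith))
  have k03 := abs_le.1 (abs_coef (c 0 3) e03 (M := V) (by linarith))
  have k20 := abs_le.1 (abs_coef (c 2 0) e10 (M := V) (by linarith))
  have k21 := abs_le.1 (abs_coef (c 2 1) e11 (M := V) (by linarith))
  have k22 := abs_le.1 (abs_coef (c 2 2) e12 (M := V) (by linarith))
  have k40 := abs_le.1 (abs_coef (c 4 0) e20 (M := V) (by linarith))
  have k41 := abs_le.1 (abs_coef (c 4 1) e21 (M := V) (by linarith))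
  have k60 := abs_le.1 (abs_coef (c 6 0) e30 (M := V) (by linarith))
  have hPle : Pk ≤ M * V + C1 * bd D b w P q k := by
    rw [hM]
    linarith [EP.2, k00.2, k01.2, k02.2, k03.2, k20.1, k21.1, k22.1, k40.2, k41.2, k60.1]
  have hfull : full D b w P (fun t => cut k.1.1 k.1.2 t * cut k.1.1 k.1.2 t) =
      (EL D b w 0 0 k + EL D b w 0 1 k + EL D b w 0 2 k + EL D b w 0 3 k) +
      (EL D b w 1 0 k + EL D b w 1 1 k + EL D b w 1 2 k + EL D b w 2 0 k + EL D b w 2 1 k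
      + EL D b w 3 0 k) + Pk := by
    simp only [full, EL, hPk, Finset.sum_range_succ, Finset.sum_range_zero, Nat.sub_zero,
      show 4 - 1 = 3 from rfl, show 4 - 2 = 2 from rfl, show 4 - 3 = 1 from rfl]
    ring
  have hfin : (K + C3 + M * (K + C3) + C1) * bd D b w P q k = V + M * V + C1 * bd D b w P q k := by
    rw [hV]; ring
  rw [hfull, hfin]
  linarith

theorem cut_incr (q : ℕ) {A B : ℝ} (h : A + 2 ≤ B) (t : ℝ) :
    cut A B t * cut A B t + th q (B + 2) t ≤ cut A (B + 4) t * cut A (B + 4) t := by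
  rcases le_or_gt t (B + 1) with ht | ht
  · have h1 : th q (B + 2) t = 0 := by
      unfold th; rw [bmp_zero_left (by linarith), zero_pow (by omega)]
    have h2 : cut A B t ≤ cut A (B + 4) t := by
      unfold cut; have := sT_mono (show t - (B + 4) ≤ t - B by linarith); linarith
    have h3 := cut_nonneg (show A ≤ B by linarith) t
    rw [h1, add_zero]
    exact mul_self_le_mul_self h3 h2
  · rw [cut_zero_right (by linarith) ht.le]
    rcases le_or_gt t (B + 4) with h4 | h4
    · rw [cut_one (by linarith) h4]
      have : th q (B + 2) t ≤ 1 := pow_le_one₀ (bmp_nonneg _) (bmp_le_one _)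
      linarith
    · have h1 : th q (B + 2) t = 0 := by
        unfold th; rw [bmp_zero_right (by linarith), zero_pow (by omega)]
      rw [h1]
      have := mul_self_nonneg (cut A (B + 4) t)
      linarith

/-- there are windows arbitrarily far out with small energy -/
theorem small_window (H : Sys D b w P c s p T0 q) (M : ℝ) {ε : ℝ} (hε : 0 < ε) :
    ∃ T, M ≤ T ∧ full D b w P (th q T) ≤ ε := by
  by_contra hcon
  push Not at hcon
  obtain ⟨B0, hB⟩ := H.window
  obtain ⟨C, hC, hl⟩ := H.long
  set A := max (T0 + 1) M
  have hA1 : T0 + 1 ≤ A := le_max_left _ _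
  have hA2 : M ≤ A := le_max_right _ _
  set F : ℕ → ℝ := fun k => full D b w P (fun t => cut A (A + 2 + 4 * k) t * cut A (A + 2 + 4 * k) t)
  have hadm : ∀ B, A + 2 ≤ B → Adm (fun t => cut A B t * cut A B t) := fun B hB =>
    LI.adm2 ⟨(A, B), hB⟩
  have hF : ∀ k : ℕ, k * ε ≤ F k := by
    intro k
    induction k with
    | zero =>
      simp only [Nat.cast_zero, zero_mul]
      exact H.full_nonneg (hadm _ (by simp)) (fun t => mul_self_nonneg _)
    | succ k ih =>
      have hk : A + 2 ≤ A + 2 + 4 * (k:ℝ) := by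
        have : (0:ℝ) ≤ k := Nat.cast_nonneg k
        linarith
      have h1 := H.full_mono ((hadm _ hk).add (th_adm q (A + 2 + 4 * (k:ℝ) + 2)))
        (hadm (A + 2 + 4 * (k:ℝ) + 4) (by linarith)) (cut_incr q hk)
      rw [H.full_add (hadm _ hk) (th_adm q _)] at h1
      have h2 := hcon (A + 2 + 4 * (k:ℝ) + 2) (by linarith)
      have h3 : F (k+1) = full D b w P (fun t => cut A (A + 2 + 4 * (k:ℝ) + 4) t *
          cut A (A + 2 + 4 * (k:ℝ) + 4) t) := by
        simp only [F]; push_cast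
        rw [show A + 2 + 4 * ((k:ℝ) + 1) = A + 2 + 4 * (k:ℝ) + 4 by ring]
      rw [h3]; push_cast
      have ih : (k:ℝ) * ε ≤ full D b w P
        (fun t => cut A (A + 2 + 4 * k) t * cut A (A + 2 + 4 * k) t) := ih
      linarith
  obtain ⟨k, hk⟩ := exists_nat_gt (C * (B0 + B0) / ε)
  rw [div_lt_iff₀ hε] at hk
  have h1 := hF k
  have hk0 : (0:ℝ) ≤ k := Nat.cast_nonneg k
  have h2 : F k ≤ _ := hl ⟨(A, A + 2 + 4 * k), by simp⟩ (by simp only; linarith)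
  have h3 : bd D b w P q ⟨(A, A + 2 + 4 * k), by simp⟩ ≤ B0 + B0 :=
    add_le_add (hB _ (by simp only; linarith)) (hB _ (by simp only; linarith))
  have h4 := mul_le_mul_of_nonneg_left h3 hC
  linarith

theorem near_origin (H : Sys D b w P c s p T0 q) :
    Tendsto (fun S : ℝ => full D b w P (th q (-S))) atTop (nhds 0) := by
  have e : ∀ S, th q (-S) = fun t => th q 0 (t + S) := by
    intro S; funext t; unfold th; congr 2; ring
  have hadm : ∀ S : ℝ, Adm (fun t => th q 0 (t + S)) := fun S => by
    rw [← e]; exact th_adm q _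
  have h1 : Tendsto (fun S : ℝ => (∑ i ∈ Finset.range 4, ∑ j ∈ Finset.range (4 - i),
      b j (fun t => th q 0 (t + S)) (D^[i] w) (D^[i] w)) +
      ∑ r ∈ idx, c r.1 r.2 * b r.2 (fun t => th q 0 (t + S)) w (D^[r.1] w)) atTop
      (nhds ((∑ i ∈ Finset.range 4, ∑ j ∈ Finset.range (4 - i), 0) +
        ∑ r ∈ idx, c r.1 r.2 * 0)) :=
    (tendsto_finsetSum _ fun i _ => tendsto_finsetSum _ fun j _ =>
      H.h0 _ (th_adm q 0) i i j).add
    (tendsto_finsetSum _ fun r _ => (H.h0 _ (th_adm q 0) 0 r.1 r.2).const_mul _)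
  simp only [mul_zero, Finset.sum_const_zero, add_zero] at h1
  refine h1.congr fun S => ?_
  unfold full
  rw [e, H.hP _ (hadm S)]

/-- The conclusion of the abstract argument. -/
theorem conclusion (H : Sys D b w P c s p T0 q) {ρ : ℝ → ℝ} (hρ : Adm ρ) :
    b 0 ρ (D w) (D w) ≤ 0 := by
  obtain ⟨R, hR⟩ := hρ.2.isCompact.isBounded.subset_closedBall 0
  obtain ⟨K, hK⟩ := hρ.2.isCompact.exists_bound_of_continuousOn (f := ρ) hρ.1.continuous.continuousOn
  obtain ⟨C, hC, hD⟩ := H.diss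
  refine le_of_forall_pos_le_add fun ε hε => ?_
  set K' := max K 0
  set δ := ε / (2 * (K' * C + 1)) with hδ
  have hKC : 0 ≤ K' * C := mul_nonneg (le_max_right _ _) hC
  have hδ0 : 0 < δ := by positivity
  obtain ⟨B, hB1, hB2⟩ := H.small_window (|R| + 1) hδ0
  have h0 := (H.near_origin.eventually (gt_mem_nhds hδ0)).and
    (eventually_ge_atTop (|R| + 1))
  obtain ⟨S, hS1, hS2⟩ := h0.exists
  have hRa := abs_nonneg R
  have hRb := le_abs_self R
  set k : LI := ⟨(-S, B), by simp only; linarith⟩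
  have h1 := hD k
  have e11 := H.EL_nonneg 1 1 k
  have e12 := H.EL_nonneg 1 2 k
  have e20 := H.EL_nonneg 2 0 k
  have e21 := H.EL_nonneg 2 1 k
  have e30 := H.EL_nonneg 3 0 k
  have h2 : b 0 ρ (D w) (D w) ≤ K' * EL D b w 1 0 k := by
    have := (H.hb 0).abs_le hρ k.adm2 (C := K') (fun t => ?_) (D w)
    · exact (le_abs_self _).trans this
    · by_cases ht : t ∈ tsupport ρ
      · have h3 := hR ht
        rw [Metric.mem_closedBall, Real.dist_eq, sub_zero] at h3
        have h4 := abs_le.1 h3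
        have h5 : cut k.1.1 k.1.2 t = 1 := cut_one (by simp only [k]; linarith) (by simp only [k]; linarith)
        rw [h5, mul_one, mul_one]
        exact (hK t ht).trans (le_max_left _ _)
      · rw [image_eq_zero_of_notMem_tsupport ht, abs_zero]
        exact mul_nonneg (le_max_right _ _) (mul_self_nonneg _)
  have h3 : bd D b w P q k ≤ δ + δ := add_le_add hS1.le hB2
  have h4 : EL D b w 1 0 k ≤ C * (δ + δ) := by
    have := mul_le_mul_of_nonneg_left h3 hC
    linarith
  have h5 := mul_le_mul_of_nonneg_left h4 (le_max_right K 0)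
  have h6 : K' * (C * (δ + δ)) ≤ ε := by
    have : (K' * C + 1) * (δ + δ) = ε := by rw [hδ]; field_simp; ring
    nlinarith
  have h5 : K' * EL D b w 1 0 k ≤ K' * (C * (δ + δ)) := h5
  linarith

end Sys
end TL

namespace TL
open scoped ContDiff

/-- A commutative algebra with commuting partial derivatives and coordinates. -/
structure PDA (R : Type*) [CommRing R] [Algebra ℝ R] (n : ℕ) where
  d : Fin n → Derivation ℝ R R
  x : Fin n → R
  comm : ∀ i j f, d i (d j f) = d j (d i f)
  dx : ∀ i j, d i (x j) = if i = j then 1 else 0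

namespace PDA
variable {R : Type*} [CommRing R] [Algebra ℝ R] {n : ℕ} (K : PDA R n)

/-- Euler field -/
def D : Derivation ℝ R R := ∑ i, K.x i • K.d i

/-- Laplacian -/
def Lap : R →ₗ[ℝ] R := ∑ i, (K.d i : R →ₗ[ℝ] R) ∘ₗ (K.d i : R →ₗ[ℝ] R)

def r2 : R := ∑ i, K.x i * K.x i

theorem D_apply (f : R) : K.D f = ∑ i, K.x i * K.d i f := by
  have : ∀ s : Finset (Fin n), (∑ i ∈ s, K.x i • K.d i) f = ∑ i ∈ s, K.x i * K.d i f := by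
    intro s
    induction s using Finset.cons_induction with
    | empty => simp
    | cons a s ha ih =>
      rw [Finset.sum_cons, Finset.sum_cons, Derivation.add_apply, ih]; simp
  exact this Finset.univ

theorem Lap_apply (f : R) : K.Lap f = ∑ i, K.d i (K.d i f) := by
  simp [Lap]

/-- minus the spherical Laplacian -/
def A : R →ₗ[ℝ] R :=
  (K.D : R →ₗ[ℝ] R) ∘ₗ (K.D : R →ₗ[ℝ] R) + ((n : ℝ) - 2) • (K.D : R →ₗ[ℝ] R)
    - LinearMap.mulLeft ℝ K.r2 ∘ₗ K.Lap

theorem A_apply (f : R) : K.A f = K.D (K.D f) + ((n : ℝ) - 2) • K.D f - K.r2 * K.Lap f := by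
  simp [A]

theorem D_d (i : Fin n) (f : R) : K.D (K.d i f) = K.d i (K.D f) - K.d i f := by
  rw [D_apply, D_apply, map_sum]
  simp only [Derivation.leibniz, K.dx, smul_eq_mul, Finset.sum_add_distrib]
  simp [K.comm i]

theorem D_Lap (f : R) : K.D (K.Lap f) = K.Lap (K.D f) - (2:ℝ) • K.Lap f := by
  rw [Lap_apply, Lap_apply, map_sum, Finset.smul_sum, ← Finset.sum_sub_distrib]
  refine Finset.sum_congr rfl fun i _ => ?_
  rw [D_d, D_d, map_sub]
  module

theorem D_x (i : Fin n) : K.D (K.x i) = K.x i := by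
  rw [D_apply]; simp [K.dx]

theorem D_r2 : K.D K.r2 = (2:ℝ) • K.r2 := by
  simp only [r2, map_sum, Derivation.leibniz, D_x, smul_eq_mul, Finset.smul_sum]
  refine Finset.sum_congr rfl fun i _ => ?_
  rw [two_smul]

theorem D_A (f : R) : K.D (K.A f) = K.A (K.D f) := by
  rw [A_apply, A_apply, map_sub, map_add, Derivation.leibniz, D_Lap, D_r2, Derivation.map_smul]
  simp only [smul_eq_mul]
  rw [mul_sub, mul_smul_comm, mul_smul_comm, mul_comm (K.Lap f)]
  abel

/-- radial functions -/
def IsRad (h : R) : Prop := ∀ i, K.r2 * K.d i h = K.x i * K.D h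

/-- carre du champ of `A` -/
def Gam (f g : R) : R := K.r2 * (∑ i, K.d i f * K.d i g) - K.D f * K.D g

theorem Gam_comm (f g : R) : K.Gam f g = K.Gam g f := by
  unfold Gam
  rw [mul_comm (K.D f)]
  congr 2
  exact Finset.sum_congr rfl fun i _ => mul_comm _ _

theorem Lap_mul (h f : R) : K.Lap (h * f) =
    h * K.Lap f + 2 * (∑ i, K.d i h * K.d i f) + f * K.Lap h := by
  simp only [Lap_apply, Finset.mul_sum, ← Finset.sum_add_distrib]
  refine Finset.sum_congr rfl fun i _ => ?_
  simp only [Derivation.leibniz, map_add, smul_eq_mul]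
  ring

theorem A_mul (h f : R) : K.A (h * f) = h * K.A f + f * K.A h - 2 * K.Gam h f := by
  simp only [A_apply, Lap_mul, Derivation.leibniz, map_add, smul_eq_mul, Gam, smul_add, mul_add,
    mul_sub, mul_smul_comm]
  ring

/-- The divergence of `x`. -/
theorem div_x (g : R) : ∑ i, K.d i (K.x i * g) = (n : ℝ) • g + K.D g := by
  simp only [Derivation.leibniz, K.dx, smul_eq_mul, Finset.sum_add_distrib, D_apply]
  simp [add_comm, Algebra.smul_def]

theorem div_A (h f g : R) (hh : K.D h = -(n : ℝ) • h) :
    ∑ i, K.d i (h * g * (K.x i * K.D f - K.r2 * K.d i f)) =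
      h * (g * K.A f) - h * K.Gam f g - (∑ i, K.r2 * K.d i h * K.d i f) * g
        - (n : ℝ) • (h * g * K.D f) := by
  have e1 : ∀ i, K.d i (h * g * (K.x i * K.D f - K.r2 * K.d i f)) =
      K.d i (K.x i * (h * g * K.D f)) - K.r2 * K.d i h * K.d i f * g
       - h * K.r2 * (K.d i f * K.d i g) - h * g * K.r2 * K.d i (K.d i f)
       - h * g * K.d i f * K.d i K.r2 := by
    intro i
    simp only [Derivation.leibniz, map_sub, smul_eq_mul]
    ring
  have e2 : ∀ i, K.d i K.r2 = 2 * K.x i := by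
    intro i
    simp only [r2, map_sum, Derivation.leibniz, K.dx, smul_eq_mul]
    simp [Finset.sum_add_distrib, two_mul]
  simp only [e1, Finset.sum_sub_distrib, div_x, ← Finset.mul_sum, ← Finset.sum_mul, e2]
  have e3 : ∑ i, h * g * K.d i f * (2 * K.x i) = 2 * (h * g * K.D f) := by
    rw [D_apply, Finset.mul_sum, Finset.mul_sum]
    exact Finset.sum_congr rfl fun i _ => by ring
  rw [e3, ← Lap_apply, A_apply, Gam]
  simp only [Derivation.leibniz, smul_eq_mul, hh, mul_add, mul_sub,
    Algebra.smul_def, map_sub, map_neg, map_ofNat, Finset.mul_sum]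
  ring_nf

theorem div_A' {h : R} (hr : K.IsRad h) (f g : R) (hh : K.D h = -(n : ℝ) • h) :
    ∑ i, K.d i (h * g * (K.x i * K.D f - K.r2 * K.d i f)) =
      h * (g * K.A f) - h * K.Gam f g := by
  rw [div_A K h f g hh]
  have : ∑ i, K.r2 * K.d i h * K.d i f = K.D h * K.D f := by
    rw [D_apply K f, Finset.mul_sum]
    refine Finset.sum_congr rfl fun i _ => ?_
    rw [hr i]; ring
  rw [this, hh]
  simp only [Algebra.smul_def, map_neg]
  ring

theorem Gam_rad {h : R} (hr : K.IsRad h) (f : R) : K.Gam h f = 0 := by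
  unfold Gam
  have : K.r2 * ∑ i, K.d i h * K.d i f = K.D h * K.D f := by
    rw [D_apply K f, Finset.mul_sum, Finset.mul_sum]
    refine Finset.sum_congr rfl fun i _ => ?_
    rw [← mul_assoc, hr i]; ring
  rw [this, sub_self]

theorem A_rad {h : R} (hr : K.IsRad h) : K.A h = 0 := by
  have e2 : ∀ i, K.d i K.r2 = 2 * K.x i := by
    intro i
    simp only [r2, map_sum, Derivation.leibniz, K.dx, smul_eq_mul]
    simp [Finset.sum_add_distrib, two_mul]
  have h1 := K.div_x (K.D h)
  have h2 : ∑ i, K.d i (K.x i * K.D h) = K.r2 * K.Lap h + 2 * K.D h := by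
    rw [Lap_apply, D_apply K h, Finset.mul_sum, Finset.mul_sum, ← Finset.sum_add_distrib,
      ← D_apply]
    refine Finset.sum_congr rfl fun i _ => ?_
    rw [← hr i, Derivation.leibniz, e2]
    simp only [smul_eq_mul]; ring
  rw [A_apply]
  rw [h2] at h1
  have : K.r2 * K.Lap h = (n : ℝ) • K.D h + K.D (K.D h) - 2 * K.D h := by rw [← h1]; ring
  rw [this, sub_smul, Algebra.smul_def (2 : ℝ), map_ofNat]
  ring

theorem A_rad_mul {h : R} (hr : K.IsRad h) (f : R) : K.A (h * f) = h * K.A f := by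
  rw [A_mul, Gam_rad K hr, A_rad K hr]; ring

theorem Gam_mul (f g h : R) : K.Gam f (g * h) = g * K.Gam f h + h * K.Gam f g := by
  simp only [Gam, Derivation.leibniz, smul_eq_mul, mul_add, mul_sub, Finset.sum_add_distrib]
  have e1 : ∑ i, K.d i f * (g * K.d i h) = g * ∑ i, K.d i f * K.d i h := by
    rw [Finset.mul_sum]; exact Finset.sum_congr rfl fun i _ => by ring
  have e2 : ∑ i, K.d i f * (h * K.d i g) = h * ∑ i, K.d i f * K.d i g := by
    rw [Finset.mul_sum]; exact Finset.sum_congr rfl fun i _ => by ring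
  rw [e1, e2]; ring

theorem Gam_rad_mul {h : R} (hr : K.IsRad h) (f g : R) : K.Gam f (h * g) = h * K.Gam f g := by
  rw [Gam_mul, Gam_comm K f h, Gam_rad K hr]; ring

/-- The conjugated Laplacian. -/
def Ls (s : ℝ) (f : R) : R :=
  K.D (K.D f) + (2 * s + n - 2) • K.D f + (s ^ 2 + (n - 2) * s) • f - K.A f

theorem r2_Lap {h : R} (hr : K.IsRad h) {s : ℝ} (hs : K.D h = s • h) (f : R) :
    K.r2 * K.Lap (h * f) = h * K.Ls s f := by
  have h1 := K.A_apply (h * f)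
  rw [A_rad_mul K hr] at h1
  have h2 : K.r2 * K.Lap (h * f) = K.D (K.D (h * f)) + ((n : ℝ) - 2) • K.D (h * f) - h * K.A f := by
    rw [h1]; ring
  rw [h2, Ls]
  simp only [Derivation.leibniz, hs, smul_eq_mul, map_add, Derivation.map_algebraMap, Algebra.smul_def,
    map_sub, map_mul, map_pow, map_ofNat, map_natCast]
  ring

end PDA
end TL

namespace TL
open scoped ContDiff

theorem sum_idx' {M : Type*} [AddCommGroup M] (F : ℕ × ℕ → M) : ∑ q ∈ idx, F q =
    F (0,0) + F (1,0) + F (2,0) + F (3,0) + F (4,0) + F (5,0) + F (6,0)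
    + F (0,1) + F (1,1) + F (2,1) + F (3,1) + F (4,1) + F (0,2) + F (1,2) + F (2,2) + F (0,3) := by
  simp [idx, Finset.sum_filter, Finset.sum_product, Finset.sum_range_succ]
  abel

/-- coefficients of the Emden-Fowler operator -/
def cf (a N : ℝ) : ℕ → ℕ → ℝ
  | 0, 0 => -a^6 + (3*N+8)*a^4 - (3*N^2+16)*a^2 + N*(N-4)^2
  | 0, 1 => 3*a^4 - 6*N*a^2 + (3*N^2 - 16*N + 16)
  | 0, 2 => -3*a^2 + 3*N - 8
  | 0, 3 => 1
  | 1, 0 => -6*a^5 + 4*(3*N+8)*a^3 - 2*(3*N^2+16)*a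
  | 1, 1 => 12*a^3 - 12*N*a
  | 1, 2 => -6*a
  | 2, 0 => -15*a^4 + 6*(3*N+8)*a^2 - (3*N^2+16)
  | 2, 1 => 18*a^2 - 6*N
  | 2, 2 => -3
  | 3, 0 => -20*a^3 + 4*(3*N+8)*a
  | 3, 1 => 12*a
  | 4, 0 => -15*a^2 + 3*N + 8
  | 4, 1 => 3
  | 5, 0 => -6*a
  | 6, 0 => -1
  | _, _ => 0

namespace PDA
variable {R : Type*} [CommRing R] [Algebra ℝ R] {n : ℕ} (K : PDA R n)

/-- The Emden-Fowler operator. -/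
def FE (a N : ℝ) (f : R) : R := ∑ q ∈ idx, cf a N q.1 q.2 • K.A^[q.2] (K.D^[q.1] f)

theorem Ls_triple {a s : ℝ} (ha : a = s + (n - 6) / 2) (f : R) :
    K.Ls (s - 4) (K.Ls (s - 2) (K.Ls s f)) = - K.FE a ((((n:ℝ) - 2) / 2) ^ 2) f := by
  have hs : s = a - (n - 6) / 2 := by linarith
  subst hs
  rw [FE, sum_idx']
  simp only [cf, Function.iterate_succ, Function.iterate_zero, Function.comp, id, Ls]
  simp only [map_add, map_sub, map_smul, Derivation.map_smul, D_A]
  generalize (n:ℝ) = ν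
  module

end PDA
end TL

namespace TL
open scoped ContDiff

abbrev EE (n : ℕ) := EuclideanSpace ℝ (Fin n)
abbrev Om (n : ℕ) := {x : EE n // x ≠ 0}

variable {n : ℕ}

open Classical in
/-- extension by zero at the origin -/
def ext (f : Om n → ℝ) (x : EE n) : ℝ := if h : x ≠ 0 then f ⟨x, h⟩ else 0

theorem ext_of_ne (f : Om n → ℝ) {x : EE n} (h : x ≠ 0) : ext f x = f ⟨x, h⟩ := by
  simp [ext, h]
theorem ext_zero (f : Om n → ℝ) : ext f 0 = 0 := by simp [ext]
theorem ext_val (f : Om n → ℝ) (x : Om n) : ext f x.1 = f x := ext_of_ne f x.2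

theorem ext_add (f g : Om n → ℝ) : ext (f + g) = fun x => ext f x + ext g x := by
  funext x; by_cases h : x = 0
  · subst h; simp [ext_zero]
  · simp [ext_of_ne _ h]
theorem ext_mul (f g : Om n → ℝ) : ext (f * g) = fun x => ext f x * ext g x := by
  funext x; by_cases h : x = 0
  · subst h; simp [ext_zero]
  · simp [ext_of_ne _ h]
theorem ext_smul (c : ℝ) (f : Om n → ℝ) : ext (c • f) = fun x => c * ext f x := by
  funext x; by_cases h : x = 0
  · subst h; simp [ext_zero]
  · simp [ext_of_ne _ h]

theorem mem_nhds_ne {x : EE n} (h : x ≠ 0) : ({0}ᶜ : Set (EE n)) ∈ nhds x :=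
  isOpen_compl_singleton.mem_nhds h

theorem contDiffOn_ext_of {F : EE n → ℝ} (hF : ContDiffOn ℝ ∞ F {0}ᶜ) {f : Om n → ℝ}
    (h : ∀ x : Om n, f x = F x.1) : ContDiffOn ℝ ∞ (ext f) {0}ᶜ :=
  hF.congr fun x hx => by rw [ext_of_ne f hx, h]

variable (n) in
/-- smooth functions on the punctured space -/
def WAs : Subalgebra ℝ (Om n → ℝ) where
  carrier := {f | ContDiffOn ℝ ∞ (ext f) {0}ᶜ}
  mul_mem' {f g} hf hg := by
    simp only [Set.mem_ofPred_eq, ext_mul]; exact hf.mul hg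
  add_mem' {f g} hf hg := by
    simp only [Set.mem_ofPred_eq, ext_add]; exact hf.add hg
  algebraMap_mem' c := contDiffOn_ext_of (F := fun _ => c) contDiffOn_const fun x => rfl

variable (n) in
/-- smooth functions on the punctured space, as a type -/
def WA : Type := ↥(WAs n)

instance : CommRing (WA n) := inferInstanceAs (CommRing ↥(WAs n))
instance : Algebra ℝ (WA n) := inferInstanceAs (Algebra ℝ ↥(WAs n))

/-- the extension of an element of the algebra -/
def WA.e (f : WA n) : EE n → ℝ := ext (Subtype.val (p := fun x => x ∈ WAs n) f)

namespace WA

theorem contDiffOn (f : WA n) : ContDiffOn ℝ ∞ f.e {0}ᶜ := Subtype.property (p := fun x => x ∈ WAs n) f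
theorem contDiffAt (f : WA n) {x : EE n} (h : x ≠ 0) : ContDiffAt ℝ ∞ f.e x :=
  f.contDiffOn.contDiffAt (mem_nhds_ne h)
theorem differentiableAt (f : WA n) {x : EE n} (h : x ≠ 0) : DifferentiableAt ℝ f.e x :=
  (f.contDiffAt h).differentiableAt (by simp)

theorem e_add (f g : WA n) : (f + g).e = fun x => f.e x + g.e x := ext_add _ _
theorem e_mul (f g : WA n) : (f * g).e = fun x => f.e x * g.e x := ext_mul _ _
theorem e_smul (c : ℝ) (f : WA n) : (c • f).e = fun x => c * f.e x := ext_smul _ _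
theorem e_zero : (0 : WA n).e = 0 := by
  have := e_smul (0:ℝ) (0 : WA n)
  rw [zero_smul] at this; rw [this]; funext x; simp
theorem e_zero' (f : WA n) : f.e 0 = 0 := ext_zero _

theorem ext_iff' {f g : WA n} : f = g ↔ ∀ x, x ≠ 0 → f.e x = g.e x := by
  refine ⟨fun h => by simp [h], fun h => Subtype.ext (funext fun x => ?_)⟩
  have := h x.1 x.2
  simpa [e, ext_val] using this

/-- build an element -/
def mk (F : EE n → ℝ) (hF : ContDiffOn ℝ ∞ F {0}ᶜ) : WA n :=
  ⟨fun x => F x.1, contDiffOn_ext_of hF fun _ => rfl⟩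

theorem mk_e (F : EE n → ℝ) (hF : ContDiffOn ℝ ∞ F {0}ᶜ) {x : EE n} (h : x ≠ 0) :
    (mk F hF).e x = F x := ext_of_ne _ h

theorem mk_e_ev (F : EE n → ℝ) (hF : ContDiffOn ℝ ∞ F {0}ᶜ) {x : EE n} (h : x ≠ 0) :
    (mk F hF).e =ᶠ[nhds x] F := by
  filter_upwards [mem_nhds_ne h] with y hy using mk_e F hF hy

theorem contDiffOn_pd {F : EE n → ℝ} (hF : ContDiffOn ℝ ∞ F {0}ᶜ) (v : EE n) :
    ContDiffOn ℝ ∞ (fun x => fderiv ℝ F x v) {0}ᶜ :=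
  (hF.fderiv_of_isOpen isOpen_compl_singleton (m := ∞) (by simp)).clm_apply contDiffOn_const

/-- partial derivative -/
def pd0 (i : Fin n) (f : WA n) : WA n :=
  mk (fun x => fderiv ℝ f.e x (EuclideanSpace.single i 1)) (contDiffOn_pd f.contDiffOn _)

theorem pd0_e (i : Fin n) (f : WA n) {x : EE n} (h : x ≠ 0) :
    (pd0 i f).e x = fderiv ℝ f.e x (EuclideanSpace.single i 1) := mk_e _ _ h

theorem pd0_e_ev (i : Fin n) (f : WA n) {x : EE n} (h : x ≠ 0) :
    (pd0 i f).e =ᶠ[nhds x] fun x => fderiv ℝ f.e x (EuclideanSpace.single i 1) := mk_e_ev _ _ h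

/-- partial derivatives as derivations -/
def pd (i : Fin n) : Derivation ℝ (WA n) (WA n) :=
  Derivation.mk'
    { toFun := pd0 i
      map_add' := fun f g => by
        rw [ext_iff']; intro x hx
        simp only [e_add, pd0_e _ _ hx]
        rw [fderiv_fun_add (f.differentiableAt hx) (g.differentiableAt hx)]; rfl
      map_smul' := fun c f => by
        rw [ext_iff']; intro x hx
        simp only [RingHom.id_apply, e_smul, pd0_e _ _ hx]
        rw [fderiv_const_mul (f.differentiableAt hx)]; rfl }
    fun f g => by
      rw [ext_iff']; intro x hx
      simp only [LinearMap.coe_mk, AddHom.coe_mk, smul_eq_mul, e_add, e_mul, pd0_e _ _ hx]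
      rw [fderiv_fun_mul (f.differentiableAt hx) (g.differentiableAt hx)]
      simp

theorem pd_apply (i : Fin n) (f : WA n) : pd i f = pd0 i f := rfl

theorem pd_e (i : Fin n) (f : WA n) {x : EE n} (h : x ≠ 0) :
    (pd i f).e x = fderiv ℝ f.e x (EuclideanSpace.single i 1) := pd0_e i f h

theorem pd_comm (i j : Fin n) (f : WA n) : pd i (pd j f) = pd j (pd i f) := by
  rw [ext_iff']; intro x hx
  have key : ∀ i j : Fin n, (pd i (pd j f)).e x =
      fderiv ℝ (fderiv ℝ f.e) x (EuclideanSpace.single i 1) (EuclideanSpace.single j 1) := by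
    intro i j
    rw [pd_e _ _ hx, pd_apply, (pd0_e_ev j f hx).fderiv_eq]
    have hd : DifferentiableAt ℝ (fderiv ℝ f.e) x :=
      ((f.contDiffAt hx).fderiv_right (m := ∞) (by simp)).differentiableAt (by simp)
    rw [fderiv_clm_apply hd (differentiableAt_const _)]
    simp
  rw [key, key]
  exact (f.contDiffAt hx).isSymmSndFDerivAt (by simp; exact WithTop.coe_le_coe.2 (le_top : (2:ℕ∞) ≤ ⊤)) _ _

/-- coordinates -/
def co (i : Fin n) : WA n := mk (fun x => x i) (by fun_prop)

theorem co_e (i : Fin n) (x : EE n) : (co i).e x = x i := by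
  by_cases h : x = 0
  · subst h; simp [e_zero']
  · exact mk_e _ _ h

theorem one_e {x : EE n} (hx : x ≠ 0) : (1 : WA n).e x = 1 := ext_of_ne _ hx

theorem pd_co (i j : Fin n) : pd i (co j : WA n) = if i = j then 1 else 0 := by
  rw [ext_iff']; intro x hx
  rw [pd_e _ _ hx]
  have : (co j : WA n).e = fun x => EuclideanSpace.proj (𝕜 := ℝ) j x := by
    funext y; simp [co_e]
  rw [this]
  rw [ContinuousLinearMap.fderiv]
  by_cases h : i = j
  · subst h; simp [one_e hx]
  · rw [if_neg h, e_zero]; simp [Ne.symm h]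

variable (n) in
/-- The concrete differential algebra. -/
def KK : PDA (WA n) n where
  d := pd
  x := co
  comm := pd_comm
  dx := pd_co

end WA
end TL

namespace TL
open scoped ContDiff
namespace WA
variable {n : ℕ}

/-- the extension as a linear map -/
def eL : WA n →ₗ[ℝ] (EE n → ℝ) where
  toFun := e
  map_add' f g := e_add f g
  map_smul' c f := e_smul c f

theorem e_sum {ι : Type*} (s : Finset ι) (f : ι → WA n) (x : EE n) :
    (∑ i ∈ s, f i).e x = ∑ i ∈ s, (f i).e x := by
  have := congrFun (map_sum (eL (n := n)) f s) x
  rw [Finset.sum_apply] at this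
  exact this

theorem e_sub (f g : WA n) : (f - g).e = fun x => f.e x - g.e x := map_sub eL f g
theorem e_neg (f : WA n) : (-f).e = fun x => -f.e x := map_neg eL f

theorem mul_ap (f g : WA n) (x : EE n) : (f * g).e x = f.e x * g.e x := by rw [e_mul]
theorem add_ap (f g : WA n) (x : EE n) : (f + g).e x = f.e x + g.e x := by rw [e_add]
theorem sub_ap (f g : WA n) (x : EE n) : (f - g).e x = f.e x - g.e x := by rw [e_sub]
theorem neg_ap (f : WA n) (x : EE n) : (-f).e x = -f.e x := by rw [e_neg]
theorem smul_ap (c : ℝ) (f : WA n) (x : EE n) : (c • f).e x = c * f.e x := by rw [e_smul]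

theorem contDiffOn_rad {χ : ℝ → ℝ} (h : ContDiff ℝ ∞ χ) :
    ContDiffOn ℝ ∞ (fun x : EE n => χ (Real.log ‖x‖)) {0}ᶜ := by
  refine h.comp_contDiffOn ?_
  refine ContDiffOn.log ?_ fun x hx => norm_ne_zero_iff.2 hx
  exact contDiffOn_id.norm ℝ fun x hx => hx

open Classical in
/-- radial functions -/
def rad (χ : ℝ → ℝ) : WA n :=
  if h : ContDiff ℝ ∞ χ then mk (fun x => χ (Real.log ‖x‖)) (contDiffOn_rad h) else 0

theorem rad_e {χ : ℝ → ℝ} (h : ContDiff ℝ ∞ χ) {x : EE n} (hx : x ≠ 0) :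
    (rad χ).e x = χ (Real.log ‖x‖) := by
  rw [rad, dif_pos h, mk_e _ _ hx]

theorem r2_e (x : EE n) : (KK n).r2.e x = ‖x‖ ^ 2 := by
  rw [PDA.r2, e_sum, EuclideanSpace.norm_sq_eq]
  refine Finset.sum_congr rfl fun i _ => ?_
  rw [e_mul]; simp [KK, co_e, sq]

theorem hasFDerivAt_log_norm {x : EE n} (hx : x ≠ 0) :
    HasFDerivAt (fun y : EE n => Real.log ‖y‖) ((‖x‖ ^ 2)⁻¹ • innerSL ℝ x) x := by
  have h1 : HasFDerivAt (fun y : EE n => ‖y‖ ^ 2) (2 • innerSL ℝ x) x :=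
    (hasStrictFDerivAt_norm_sq x).hasFDerivAt
  have h2 := (h1.log (by positivity)).const_mul (1/2 : ℝ)
  have h3 : (fun y : EE n => Real.log ‖y‖) = fun y => (1/2 : ℝ) * Real.log (‖y‖ ^ 2) := by
    funext y; rw [Real.log_pow]; push_cast; ring
  rw [h3]
  refine h2.congr_fderiv ?_
  ext v; simp; ring

theorem pd_rad_e {χ : ℝ → ℝ} (h : ContDiff ℝ ∞ χ) (i : Fin n) {x : EE n} (hx : x ≠ 0) :
    (pd i (rad χ)).e x = deriv χ (Real.log ‖x‖) * (x i / ‖x‖ ^ 2) := by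
  rw [pd_e _ _ hx]
  have hev : (rad χ).e =ᶠ[nhds x] fun y : EE n => χ (Real.log ‖y‖) := by
    filter_upwards [mem_nhds_ne hx] with y hy using rad_e h hy
  rw [hev.fderiv_eq]
  have hd : HasDerivAt χ (deriv χ (Real.log ‖x‖)) (Real.log ‖x‖) :=
    (h.differentiable (by simp) _).hasDerivAt
  have := hd.comp_hasFDerivAt x (hasFDerivAt_log_norm hx)
  have h4 := this.fderiv
  simp only [Function.comp_def] at h4
  rw [h4]
  simp [PiLp.inner_apply]
  left; ring

theorem D_e (f : WA n) (x : EE n) : ((KK n).D f).e x = ∑ i, x i * (pd i f).e x := by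
  rw [PDA.D_apply, e_sum]
  refine Finset.sum_congr rfl fun i _ => ?_
  rw [e_mul]; simp [KK, co_e]

theorem D_rad {χ : ℝ → ℝ} (h : ContDiff ℝ ∞ χ) : (KK n).D (rad χ) = rad (deriv χ) := by
  rw [ext_iff']; intro x hx
  rw [D_e, rad_e (contDiff_deriv h) hx]
  simp only [pd_rad_e h _ hx]
  have : ∀ i, x i * (deriv χ (Real.log ‖x‖) * (x i / ‖x‖ ^ 2)) =
      deriv χ (Real.log ‖x‖) / ‖x‖ ^ 2 * ‖x i‖ ^ 2 := by
    intro i; rw [Real.norm_eq_abs, sq_abs]; ring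
  simp only [this]
  rw [← Finset.mul_sum, ← EuclideanSpace.norm_sq_eq, div_mul_cancel₀]
  exact pow_ne_zero _ (norm_ne_zero_iff.2 hx)

theorem isRad_rad (χ : ℝ → ℝ) : (KK n).IsRad (rad χ) := by
  by_cases h : ContDiff ℝ ∞ χ
  · intro i
    rw [D_rad h, ext_iff']; intro x hx
    rw [mul_ap, mul_ap, r2_e, rad_e (contDiff_deriv h) hx]
    show ‖x‖ ^ 2 * (pd i (rad χ)).e x = (co i).e x * _
    rw [pd_rad_e h _ hx, co_e]
    have : ‖x‖ ≠ 0 := norm_ne_zero_iff.2 hx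
    field_simp
  · rw [rad, dif_neg h]; intro i; simp

theorem rad_mul {χ τ : ℝ → ℝ} (h : ContDiff ℝ ∞ χ) (h' : ContDiff ℝ ∞ τ) :
    (rad (fun t => χ t * τ t) : WA n) = rad χ * rad τ := by
  rw [ext_iff']; intro x hx
  rw [mul_ap, rad_e (h.mul h') hx, rad_e h hx, rad_e h' hx]

theorem rad_add {χ τ : ℝ → ℝ} (h : ContDiff ℝ ∞ χ) (h' : ContDiff ℝ ∞ τ) :
    (rad (fun t => χ t + τ t) : WA n) = rad χ + rad τ := by
  rw [ext_iff']; intro x hx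
  rw [add_ap, rad_e (h.add h') hx, rad_e h hx, rad_e h' hx]

theorem rad_smul {χ : ℝ → ℝ} (h : ContDiff ℝ ∞ χ) (c : ℝ) :
    (rad (fun t => c * χ t) : WA n) = c • rad χ := by
  rw [ext_iff']; intro x hx
  rw [smul_ap, rad_e (contDiff_const.mul h) hx, rad_e h hx]

/-- powers of the radius -/
def er (s : ℝ) : WA n := rad (fun t => Real.exp (s * t))

theorem contDiff_er (s : ℝ) : ContDiff ℝ ∞ (fun t : ℝ => Real.exp (s * t)) := by fun_prop

theorem er_e (s : ℝ) {x : EE n} (hx : x ≠ 0) : (er s).e x = ‖x‖ ^ s := by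
  rw [er, rad_e (contDiff_er s) hx, Real.rpow_def_of_pos (norm_pos_iff.2 hx), mul_comm]

theorem er_pos (s : ℝ) {x : EE n} (hx : x ≠ 0) : 0 < (er s).e x := by
  rw [er_e s hx]; exact Real.rpow_pos_of_pos (norm_pos_iff.2 hx) s

theorem isRad_er (s : ℝ) : (KK n).IsRad (er s) := isRad_rad _

theorem D_er (s : ℝ) : (KK n).D (er s) = s • er s := by
  rw [er, D_rad (contDiff_er s), ← rad_smul (contDiff_er s)]
  congr 1; funext t
  have : HasDerivAt (fun t : ℝ => Real.exp (s * t)) (Real.exp (s*t) * (s * 1)) t :=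
    ((hasDerivAt_id t).const_mul s).exp
  rw [this.deriv]; ring

theorem er_mul (s t : ℝ) : (er s * er t : WA n) = er (s + t) := by
  rw [er, er, er, ← rad_mul (contDiff_er s) (contDiff_er t)]
  congr 1; funext y; rw [← Real.exp_add]; ring_nf

theorem er_zero : (er 0 : WA n) = 1 := by
  rw [ext_iff']; intro x hx; rw [er_e _ hx, one_e hx, Real.rpow_zero]

theorem er_two : (er 2 : WA n) = (KK n).r2 := by
  rw [ext_iff']; intro x hx; rw [er_e _ hx, r2_e]; norm_cast

theorem Lap_er (s : ℝ) (f : WA n) :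
    (KK n).Lap (er s * f) = er (s - 2) * (KK n).Ls s f := by
  have h := (KK n).r2_Lap (isRad_er s) (D_er s) f
  have h1 : er (-2) * ((KK n).r2 * (KK n).Lap (er s * f)) = er (-2) * (er s * (KK n).Ls s f) := by
    rw [h]
  rw [← er_two, ← mul_assoc, ← mul_assoc, er_mul, er_mul] at h1
  norm_num at h1
  rw [er_zero, one_mul] at h1
  rw [h1]; congr 2; ring

end WA
end TL

namespace TL
open scoped ContDiff
namespace WA
variable {n : ℕ}

/-- compactly supported in the punctured space -/
def Ann (g : WA n) : Prop := HasCompactSupport g.e ∧ (0 : EE n) ∉ tsupport g.e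

theorem Ann.of_subset {g h : WA n} (hg : Ann g) (hs : Function.support h.e ⊆ tsupport g.e) :
    Ann h := by
  have h1 : tsupport h.e ⊆ tsupport g.e := closure_minimal hs (isClosed_tsupport _)
  exact ⟨hg.1.mono' hs, fun h0 => hg.2 (h1 h0)⟩

theorem Ann.mul_right {g : WA n} (hg : Ann g) (h : WA n) : Ann (g * h) := by
  refine hg.of_subset ?_
  rw [e_mul]
  exact (Function.support_mul_subset_left _ _).trans subset_closure

theorem Ann.mul_left {g : WA n} (hg : Ann g) (h : WA n) : Ann (h * g) := by
  rw [mul_comm]; exact hg.mul_right h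

theorem Ann.smul {g : WA n} (hg : Ann g) (c : ℝ) : Ann (c • g) := by
  rw [Algebra.smul_def]; exact hg.mul_left _

theorem Ann.add {g h : WA n} (hg : Ann g) (hh : Ann h) : Ann (g + h) := by
  have h1 : tsupport (g + h).e ⊆ tsupport g.e ∪ tsupport h.e := by
    rw [e_add]
    refine closure_minimal ?_ ((isClosed_tsupport _).union (isClosed_tsupport _))
    intro x hx
    by_contra hc
    simp only [Set.mem_union, not_or] at hc
    apply hx
    show g.e x + h.e x = 0
    rw [image_eq_zero_of_notMem_tsupport hc.1, image_eq_zero_of_notMem_tsupport hc.2, add_zero]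
  refine ⟨?_, fun h0 => ?_⟩
  · rw [e_add]; exact hg.1.add hh.1
  · rcases h1 h0 with h | h
    · exact hg.2 h
    · exact hh.2 h

theorem Ann.pd {g : WA n} (hg : Ann g) (i : Fin n) : Ann (pd i g) := by
  refine hg.of_subset ?_
  intro x hx
  by_cases h0 : x = 0
  · subst h0; exact absurd (e_zero' _) hx
  · refine support_fderiv_subset ℝ (f := g.e) ?_
    intro h
    apply hx
    rw [pd_e _ _ h0, h]; rfl

theorem Ann.zero : Ann (0 : WA n) := by
  rw [Ann, e_zero]; refine ⟨HasCompactSupport.zero, ?_⟩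
  simp [tsupport]

theorem Ann.sum {ι : Type*} (s : Finset ι) {f : ι → WA n} (h : ∀ i ∈ s, Ann (f i)) :
    Ann (∑ i ∈ s, f i) := by
  induction s using Finset.cons_induction with
  | empty => rw [Finset.sum_empty]; exact Ann.zero
  | cons a s ha ih =>
    rw [Finset.sum_cons]
    exact (h a (Finset.mem_cons_self a s)).add (ih fun i hi => h i (Finset.mem_cons.2 (Or.inr hi)))

theorem Ann.contDiff {g : WA n} (hg : Ann g) : ContDiff ℝ ∞ g.e := by
  rw [contDiff_iff_contDiffAt]
  intro x
  by_cases h0 : x = 0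
  · subst h0
    have : g.e =ᶠ[nhds 0] fun _ => 0 := notMem_tsupport_iff_eventuallyEq.1 hg.2
    exact contDiffAt_const.congr_of_eventuallyEq this
  · exact g.contDiffAt h0

theorem Ann.integrable {g : WA n} (hg : Ann g) : Integrable g.e :=
  hg.contDiff.continuous.integrable_of_hasCompactSupport hg.1

theorem Ann.rad {ρ : ℝ → ℝ} (h : Adm ρ) : Ann (rad ρ : WA n) := by
  obtain ⟨R, hR⟩ := h.2.isCompact.isBounded.subset_closedBall 0
  have hs : Function.support (WA.rad ρ : WA n).e ⊆
      {x | Real.exp (-R) ≤ ‖x‖ ∧ ‖x‖ ≤ Real.exp R} := by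
    intro x hx
    by_cases h0 : x = 0
    · subst h0; exact absurd (e_zero' _) hx
    · rw [Function.mem_support, rad_e h.1 h0] at hx
      have := hR (subset_closure (Function.mem_support.2 hx))
      rw [mem_closedBall_zero_iff, Real.norm_eq_abs, abs_le] at this
      have hp := norm_pos_iff.2 h0
      exact ⟨(Real.le_log_iff_exp_le hp).1 this.1, (Real.log_le_iff_le_exp hp).1 this.2⟩
  have hc : IsClosed {x : EE n | Real.exp (-R) ≤ ‖x‖ ∧ ‖x‖ ≤ Real.exp R} :=
    (isClosed_le continuous_const continuous_norm).inter
      (isClosed_le continuous_norm continuous_const)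
  have ht := closure_minimal hs hc
  refine ⟨?_, fun h0 => ?_⟩
  · refine HasCompactSupport.of_support_subset_isCompact (K := Metric.closedBall 0 (Real.exp R))
      (isCompact_closedBall _ _) fun x hx => ?_
    rw [mem_closedBall_zero_iff]; exact (hs hx).2
  · have := (ht h0).1
    rw [norm_zero] at this
    exact absurd this (not_le.2 (Real.exp_pos _))

/-- the integral -/
def J (g : WA n) : ℝ := ∫ x, g.e x

theorem J_add {g h : WA n} (hg : Ann g) (hh : Ann h) : J (g + h) = J g + J h := by
  rw [J, e_add]; exact integral_add hg.integrable hh.integrable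

theorem J_smul (c : ℝ) (g : WA n) : J (c • g) = c * J g := by
  rw [J, e_smul]; exact integral_const_mul c _

theorem J_neg (g : WA n) : J (-g) = - J g := by
  rw [J, e_neg]; exact integral_neg _

theorem J_sub {g h : WA n} (hg : Ann g) (hh : Ann h) : J (g - h) = J g - J h := by
  rw [J, e_sub]; exact integral_sub hg.integrable hh.integrable

theorem J_sum {ι : Type*} (s : Finset ι) {f : ι → WA n} (h : ∀ i ∈ s, Ann (f i)) :
    J (∑ i ∈ s, f i) = ∑ i ∈ s, J (f i) := by
  induction s using Finset.cons_induction with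
  | empty => simp [J, e_zero]
  | cons a s ha ih =>
    rw [Finset.sum_cons, Finset.sum_cons, J_add (h a (Finset.mem_cons_self a s))
      (Ann.sum s fun i hi => h i (Finset.mem_cons.2 (Or.inr hi))),
      ih fun i hi => h i (Finset.mem_cons.2 (Or.inr hi))]

theorem J_mono {g h : WA n} (hg : Ann g) (hh : Ann h) (hle : ∀ x, x ≠ 0 → g.e x ≤ h.e x) :
    J g ≤ J h := by
  refine integral_mono hg.integrable hh.integrable fun x => ?_
  by_cases h0 : x = 0
  · subst h0; rw [e_zero', e_zero']
  · exact hle x h0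

theorem J_pd {g : WA n} (hg : Ann g) (i : Fin n) : J (pd i g) = 0 := by
  have h1 : (pd i g).e = fun x => fderiv ℝ g.e x (EuclideanSpace.single i 1) := by
    funext x
    by_cases h0 : x = 0
    · subst h0
      have : g.e =ᶠ[nhds 0] fun _ => 0 := notMem_tsupport_iff_eventuallyEq.1 hg.2
      rw [e_zero', this.fderiv_eq]; simp
    · exact pd_e i g h0
  have h2 := integral_mul_fderiv_eq_neg_fderiv_mul_of_integrable (μ := volume) (𝕜 := ℝ)
    (f := fun _ : EE n => (1:ℝ)) (g := g.e) (v := EuclideanSpace.single i 1)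
    (by simp) (by simpa [← h1] using (hg.pd i).integrable) (by simpa using hg.integrable)
    (by simp) (fun x _ => hg.contDiff.differentiable (by simp) x)
  rw [J, h1]
  simpa using h2

/-- weighted integral -/
def G (ρ : ℝ → ℝ) (h : WA n) : ℝ := J (rad ρ * (er (-n) * h))

theorem G_ann {ρ : ℝ → ℝ} (h : Adm ρ) (f : WA n) : Ann (rad ρ * (er (-n) * f) : WA n) :=
  (Ann.rad h).mul_right _

theorem G_add {ρ : ℝ → ℝ} (hρ : Adm ρ) (f g : WA n) : G ρ (f + g) = G ρ f + G ρ g := by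
  rw [G, mul_add, mul_add, J_add (G_ann hρ f) (G_ann hρ g)]; rfl

theorem G_sub {ρ : ℝ → ℝ} (hρ : Adm ρ) (f g : WA n) : G ρ (f - g) = G ρ f - G ρ g := by
  rw [G, mul_sub, mul_sub, J_sub (G_ann hρ f) (G_ann hρ g)]; rfl

theorem G_smul (ρ : ℝ → ℝ) (c : ℝ) (f : WA n) : G ρ (c • f) = c * G ρ f := by
  rw [G, mul_smul_comm, mul_smul_comm, J_smul]; rfl

theorem G_sum {ι : Type*} (s : Finset ι) {ρ : ℝ → ℝ} (hρ : Adm ρ) (f : ι → WA n) :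
    G ρ (∑ i ∈ s, f i) = ∑ i ∈ s, G ρ (f i) := by
  rw [G, Finset.mul_sum, Finset.mul_sum, J_sum s fun i _ => G_ann hρ (f i)]; rfl

theorem G_mono {ρ σ : ℝ → ℝ} (hρ : Adm ρ) (hσ : Adm σ) {f g : WA n}
    (hle : ∀ x, x ≠ 0 → ρ (Real.log ‖x‖) * f.e x ≤ σ (Real.log ‖x‖) * g.e x) : G ρ f ≤ G σ g := by
  refine J_mono (G_ann hρ f) (G_ann hσ g) fun x hx => ?_
  rw [mul_ap, mul_ap, mul_ap, mul_ap, rad_e hρ.1 hx, rad_e hσ.1 hx]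
  have h1 := mul_le_mul_of_nonneg_left (hle x hx) (er_pos (-(n:ℝ)) hx).le
  linarith

theorem G_rad {ρ σ : ℝ → ℝ} (hρ : ContDiff ℝ ∞ ρ) (hσ : ContDiff ℝ ∞ σ) (f : WA n) :
    G (fun t => ρ t * σ t) f = G ρ (rad σ * f) := by
  rw [G, G, rad_mul hρ hσ]; congr 1; ring

theorem G_wadd {ρ σ : ℝ → ℝ} (hρ : Adm ρ) (hσ : Adm σ) (f : WA n) :
    G (fun t => ρ t + σ t) f = G ρ f + G σ f := by
  rw [G, rad_add hρ.1 hσ.1, add_mul, J_add (G_ann hρ f) (G_ann hσ f)]; rfl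

theorem G_wsmul {ρ : ℝ → ℝ} (hρ : Adm ρ) (c : ℝ) (f : WA n) :
    G (fun t => c * ρ t) f = c * G ρ f := by
  rw [G, rad_smul hρ.1, smul_mul_assoc, J_smul]; rfl

theorem G_D {ρ : ℝ → ℝ} (hρ : Adm ρ) (h : WA n) : G (deriv ρ) h + G ρ ((KK n).D h) = 0 := by
  have h1 := (KK n).div_x (rad ρ * (er (-n) * h))
  have h2 : J (∑ i, (KK n).d i ((KK n).x i * (rad ρ * (er (-n) * h)))) = 0 := by
    rw [J_sum]
    · refine Finset.sum_eq_zero fun i _ => J_pd ((G_ann hρ h).mul_left _) i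
    · exact fun i _ => ((G_ann hρ h).mul_left _).pd i
  rw [h1] at h2
  have h3 : (n : ℝ) • (rad ρ * (er (-n) * h)) + (KK n).D (rad ρ * (er (-n) * h)) =
      rad (deriv ρ) * (er (-n) * h) + rad ρ * (er (-n) * (KK n).D h) := by
    simp only [Derivation.leibniz, D_rad hρ.1, D_er, smul_eq_mul]
    simp only [Algebra.smul_def, map_neg]
    ring
  rw [h3, J_add (G_ann hρ.deriv h) (G_ann hρ _)] at h2
  exact h2

theorem G_A {ρ : ℝ → ℝ} (hρ : Adm ρ) (f g : WA n) :
    G ρ (g * (KK n).A f) = G ρ ((KK n).Gam f g) := by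
  have h1 := (KK n).div_A' (isRad_er (-n)) f (rad ρ * g) (D_er (-(n:ℝ)))
  have ha : ∀ i, Ann (er (-n) * (rad ρ * g) * ((KK n).x i * (KK n).D f - (KK n).r2 * (KK n).d i f)) :=
    fun i => (((Ann.rad hρ).mul_right _).mul_left _).mul_right _
  have h2 : J (∑ i, (KK n).d i (er (-n) * (rad ρ * g) *
      ((KK n).x i * (KK n).D f - (KK n).r2 * (KK n).d i f))) = 0 := by
    rw [J_sum]
    · exact Finset.sum_eq_zero fun i _ => J_pd (ha i) i
    · exact fun i _ => (ha i).pd i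
  rw [h1, PDA.Gam_rad_mul _ (isRad_rad ρ)] at h2
  have h3 : er (-n) * (rad ρ * g * (KK n).A f) - er (-n) * (rad ρ * (KK n).Gam f g) =
    rad ρ * (er (-n) * (g * (KK n).A f)) - rad ρ * (er (-n) * (KK n).Gam f g) := by ring
  rw [h3, J_sub (G_ann hρ _) (G_ann hρ _)] at h2
  exact sub_eq_zero.1 h2

theorem Gam_nonneg (f : WA n) {x : EE n} : 0 ≤ ((KK n).Gam f f).e x := by
  rw [PDA.Gam, sub_ap, mul_ap, mul_ap, r2_e, D_e, e_sum]
  have h1 : ∀ i, ((KK n).d i f * (KK n).d i f).e x = (pd i f).e x ^ 2 := by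
    intro i; rw [mul_ap, sq]; rfl
  simp only [h1]
  have h2 := Finset.sum_mul_sq_le_sq_mul_sq Finset.univ (fun i => x i) (fun i => (pd i f).e x)
  rw [EuclideanSpace.norm_sq_eq]
  simp only [Real.norm_eq_abs, sq_abs]
  rw [← sq]
  linarith

open Classical in
/-- the bilinear forms -/
def bf (j : ℕ) (ρ : ℝ → ℝ) (f g : WA n) : ℝ := if Adm ρ then G ρ (f * (KK n).A^[j] g) else 0

theorem bf_of {ρ : ℝ → ℝ} (hρ : Adm ρ) (j : ℕ) (f g : WA n) :
    bf j ρ f g = G ρ (f * (KK n).A^[j] g) := if_pos hρ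

theorem bf_succ (j : ℕ) (ρ : ℝ → ℝ) (f g : WA n) : bf (j+1) ρ f g = bf j ρ f ((KK n).A g) := rfl

theorem bf_two (j : ℕ) (ρ : ℝ → ℝ) (f g : WA n) :
    bf (j+2) ρ f g = bf j ρ ((KK n).A f) ((KK n).A g) := by
  by_cases h : Adm ρ
  · rw [bf_of h, bf_of h, Function.iterate_succ_apply', G_A h, PDA.Gam_comm, ← G_A h, mul_comm]
    rfl
  · simp [bf, h]

theorem D_A_iter (j : ℕ) (f : WA n) : (KK n).D ((KK n).A^[j] f) = (KK n).A^[j] ((KK n).D f) := by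
  induction j with
  | zero => rfl
  | succ j ih => rw [Function.iterate_succ_apply', PDA.D_A, ih, Function.iterate_succ_apply']

theorem A_add_iter (j : ℕ) (f g : WA n) :
    (KK n).A^[j] (f + g) = (KK n).A^[j] f + (KK n).A^[j] g := by
  induction j with
  | zero => rfl
  | succ j ih => simp only [Function.iterate_succ_apply', ih, map_add]

theorem A_rad_iter (j : ℕ) (χ : ℝ → ℝ) (f : WA n) :
    (KK n).A^[j] (rad χ * f) = rad χ * (KK n).A^[j] f := by
  induction j with
  | zero => rfl
  | succ j ih =>
    rw [Function.iterate_succ_apply', ih, PDA.A_rad_mul _ (isRad_rad χ),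
      Function.iterate_succ_apply']

theorem bf_der (j : ℕ) {ρ : ℝ → ℝ} (hρ : Adm ρ) (f g : WA n) :
    bf j (deriv ρ) f g + bf j ρ ((KK n).D f) g + bf j ρ f ((KK n).D g) = 0 := by
  rw [bf_of hρ, bf_of hρ, bf_of hρ.deriv, ← D_A_iter, add_assoc, ← G_add hρ]
  rw [← G_D hρ (f * (KK n).A^[j] g), Derivation.leibniz, smul_eq_mul, smul_eq_mul]
  congr 2; ring

theorem bf_wsmul (j : ℕ) {ρ : ℝ → ℝ} (hρ : Adm ρ) (c : ℝ) (f g : WA n) :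
    bf j (fun t => c * ρ t) f g = c * bf j ρ f g := by
  rw [bf_of hρ, bf_of (hρ.smul c), G_wsmul hρ]

theorem bf_wadd (j : ℕ) {ρ σ : ℝ → ℝ} (hρ : Adm ρ) (hσ : Adm σ) (f g : WA n) :
    bf j (fun t => ρ t + σ t) f g = bf j ρ f g + bf j σ f g := by
  rw [bf_of hρ, bf_of hσ, bf_of (hρ.add hσ), G_wadd hρ hσ]

theorem DForm_zero : DForm (KK n).D (bf (n := n) 0) where
  symm ρ f g := by simp only [bf, Function.iterate_zero, id, mul_comm]
  der ρ hρ f g := bf_der 0 hρ f g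
  wsmul ρ hρ c f g := bf_wsmul 0 hρ c f g
  wle ρ σ hρ hσ hle f := by
    rw [bf_of hρ, bf_of hσ]
    refine G_mono hρ hσ fun x hx => mul_le_mul_of_nonneg_right (hle _) ?_
    rw [mul_ap]; exact mul_self_nonneg _
  cs σ τ hσ hτ f g := by
    rw [bf_of (hσ.pow two_ne_zero), bf_of (hσ.mul hτ.1), bf_of (hτ.pow two_ne_zero)]
    simp only [sq]
    simp only [Function.iterate_zero, id]
    rw [G_rad hσ.1 hσ.1, G_rad hσ.1 hτ.1, G_rad hτ.1 hτ.1]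
    have e : J (er (-n) * ((rad σ * f + rad τ * g) * (rad σ * f + rad τ * g))) =
      G σ (rad σ * (f * f)) + 2 * G σ (rad τ * (f * g)) + G τ (rad τ * (g * g)) := by
      rw [G, G, G, ← J_smul 2, ← J_add, ← J_add]
      · congr 1; rw [Algebra.smul_def, map_ofNat]; ring
      · exact ((Ann.rad hσ).mul_right _).add (((Ann.rad hσ).mul_right _).smul _)
      · exact ((Ann.rad hτ).mul_right _)
      · exact ((Ann.rad hσ).mul_right _)
      · exact (((Ann.rad hσ).mul_right _).smul _)
    rw [← e]
    refine integral_nonneg fun x => ?_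
    by_cases h0 : x = 0
    · subst h0; rw [e_zero']; simp
    · rw [mul_ap, mul_ap]; exact mul_nonneg (er_pos _ h0).le (mul_self_nonneg _)

theorem bf_one {ρ : ℝ → ℝ} (hρ : Adm ρ) (f g : WA n) : bf 1 ρ f g = G ρ ((KK n).Gam f g) := by
  rw [bf_of hρ, PDA.Gam_comm, ← G_A hρ]; rfl

theorem Gam_add_add (f g : WA n) : (KK n).Gam (f + g) (f + g) =
    (KK n).Gam f f + 2 * (KK n).Gam f g + (KK n).Gam g g := by
  simp only [PDA.Gam, map_add]
  have : ∑ i, ((KK n).d i f + (KK n).d i g) * ((KK n).d i f + (KK n).d i g) =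
    ∑ i, (KK n).d i f * (KK n).d i f + 2 * ∑ i, (KK n).d i f * (KK n).d i g
      + ∑ i, (KK n).d i g * (KK n).d i g := by
    rw [Finset.mul_sum, ← Finset.sum_add_distrib, ← Finset.sum_add_distrib]
    exact Finset.sum_congr rfl fun i _ => by ring
  rw [this]; ring

theorem DForm_one : DForm (KK n).D (bf (n := n) 1) where
  symm ρ f g := by
    by_cases h : Adm ρ
    · rw [bf_one h, bf_one h, PDA.Gam_comm]
    · simp [bf, h]
  der ρ hρ f g := bf_der 1 hρ f g
  wsmul ρ hρ c f g := bf_wsmul 1 hρ c f g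
  wle ρ σ hρ hσ hle f := by
    rw [bf_one hρ, bf_one hσ]
    exact G_mono hρ hσ fun x hx => mul_le_mul_of_nonneg_right (hle _) (Gam_nonneg f)
  cs σ τ hσ hτ f g := by
    rw [bf_one (hσ.pow two_ne_zero), bf_one (hσ.mul hτ.1), bf_one (hτ.pow two_ne_zero)]
    simp only [sq]
    rw [G_rad hσ.1 hσ.1, G_rad hσ.1 hτ.1, G_rad hτ.1 hτ.1]
    have e0 : (KK n).Gam (rad σ * f + rad τ * g) (rad σ * f + rad τ * g) =
        rad σ * (rad σ * (KK n).Gam f f) + 2 * (rad σ * (rad τ * (KK n).Gam f g))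
         + rad τ * (rad τ * (KK n).Gam g g) := by
      have hl : ∀ χ : ℝ → ℝ, ∀ f g : WA n,
          (KK n).Gam (rad χ * f) g = rad χ * (KK n).Gam f g := by
        intro χ f g
        rw [PDA.Gam_comm, PDA.Gam_rad_mul _ (isRad_rad χ), PDA.Gam_comm]
      rw [Gam_add_add]
      simp only [hl, PDA.Gam_rad_mul _ (isRad_rad _)]
    have e : J (er (-n) * (KK n).Gam (rad σ * f + rad τ * g) (rad σ * f + rad τ * g)) =
      G σ (rad σ * (KK n).Gam f f) + 2 * G σ (rad τ * (KK n).Gam f g)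
        + G τ (rad τ * (KK n).Gam g g) := by
      rw [G, G, G, ← J_smul 2, ← J_add, ← J_add, e0]
      · congr 1; rw [Algebra.smul_def, map_ofNat]; ring
      · exact ((Ann.rad hσ).mul_right _).add (((Ann.rad hσ).mul_right _).smul _)
      · exact ((Ann.rad hτ).mul_right _)
      · exact ((Ann.rad hσ).mul_right _)
      · exact (((Ann.rad hσ).mul_right _).smul _)
    rw [← e]
    refine integral_nonneg fun x => ?_
    by_cases h0 : x = 0
    · subst h0; rw [e_zero']; simp
    · rw [mul_ap]; exact mul_nonneg (er_pos _ h0).le (Gam_nonneg _)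

theorem DForm_bf (j : ℕ) : DForm (KK n).D (bf (n := n) j) := by
  induction j using Nat.twoStepInduction with
  | zero => exact DForm_zero
  | one => exact DForm_one
  | more j ih _ =>
    refine ⟨fun ρ f g => ?_, fun ρ hρ f g => bf_der _ hρ f g, fun ρ σ hρ hσ hle f => ?_,
      fun ρ hρ c f g => bf_wsmul _ hρ c f g, fun σ τ hσ hτ f g => ?_⟩
    · rw [bf_two, bf_two, ih.symm]
    · rw [bf_two, bf_two]; exact ih.wle ρ σ hρ hσ hle _
    · rw [bf_two, bf_two, bf_two]; exact ih.cs σ τ hσ hτ _ _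

theorem bf_hA (w : WA n) (j : ℕ) (σ τ : ℝ → ℝ) (hσ : Adm σ) (hτ : Adm τ) (ε : ℝ) (hε : 0 < ε) :
    bf (j+1) (fun t => σ t * τ t) w w ≤
      ε * bf (j+2) (fun t => σ t ^ 2) w w + (1 / (4 * ε)) * bf j (fun t => τ t ^ 2) w w := by
  rw [bf_succ, (DForm_bf j).symm, bf_two]
  exact (le_abs_self _).trans ((DForm_bf j).cs' hσ hτ hε _ _)

end WA
end TL

namespace TL
open scoped ContDiff
namespace WA
variable {n : ℕ}

theorem laplacian_eq (u : EE n → ℝ) (x : EE n) : laplacian u x =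
    ∑ i, fderiv ℝ (fderiv ℝ u) x (EuclideanSpace.single i 1) (EuclideanSpace.single i 1) := by
  unfold laplacian
  refine Finset.sum_congr rfl fun i _ => ?_
  rw [iteratedFDeriv_two_apply]; rfl

theorem laplacian_congr {u v : EE n → ℝ} {x : EE n} (h : u =ᶠ[nhds x] v) :
    laplacian u x = laplacian v x := by
  rw [laplacian_eq, laplacian_eq, h.fderiv.fderiv_eq]

theorem Lap_e (f : WA n) {x : EE n} (hx : x ≠ 0) : ((KK n).Lap f).e x = laplacian f.e x := by
  rw [PDA.Lap_apply, e_sum, laplacian_eq]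
  refine Finset.sum_congr rfl fun i _ => ?_
  show (pd i (pd i f)).e x = _
  rw [pd_e _ _ hx, pd_apply, (pd0_e_ev i f hx).fderiv_eq]
  have hd : DifferentiableAt ℝ (fderiv ℝ f.e) x :=
    ((f.contDiffAt hx).fderiv_right (m := ∞) (by simp)).differentiableAt (by simp)
  rw [fderiv_clm_apply hd (differentiableAt_const _)]
  simp

theorem Lap_e_of {f : WA n} {u : EE n → ℝ} (h : ∀ x, x ≠ 0 → f.e x = u x) :
    ∀ x, x ≠ 0 → ((KK n).Lap f).e x = laplacian u x := by
  intro x hx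
  rw [Lap_e f hx]
  refine laplacian_congr ?_
  filter_upwards [mem_nhds_ne hx] with y hy using h y hy

theorem Ann.D {g : WA n} (hg : Ann g) : Ann ((KK n).D g) := by
  rw [PDA.D_apply]; exact Ann.sum _ fun i _ => (hg.pd i).mul_left _

theorem Ann.Lap {g : WA n} (hg : Ann g) : Ann ((KK n).Lap g) := by
  rw [PDA.Lap_apply]; exact Ann.sum _ fun i _ => (hg.pd i).pd i

theorem Ann.lap_e {g : WA n} (hg : Ann g) : laplacian g.e = ((KK n).Lap g).e := by
  funext x
  by_cases h0 : x = 0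
  · subst h0
    have : g.e =ᶠ[nhds 0] fun _ => 0 := notMem_tsupport_iff_eventuallyEq.1 hg.2
    rw [laplacian_congr this, e_zero', laplacian_eq]
    simp
  · exact (Lap_e g h0).symm

theorem Ann.pd_e' {g : WA n} (hg : Ann g) (i : Fin n) (x : EE n) :
    (WA.pd i g).e x = fderiv ℝ g.e x (EuclideanSpace.single i 1) := by
  by_cases h0 : x = 0
  · subst h0
    have : g.e =ᶠ[nhds 0] fun _ => 0 := notMem_tsupport_iff_eventuallyEq.1 hg.2
    rw [e_zero', this.fderiv_eq]; simp
  · exact WA.pd_e i g h0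

theorem Ann.grad {g : WA n} (hg : Ann g) (x : EE n) :
    ‖gradient g.e x‖ ^ 2 = (∑ i, WA.pd i g * WA.pd i g).e x := by
  rw [e_sum, EuclideanSpace.norm_sq_eq]
  refine Finset.sum_congr rfl fun i _ => ?_
  rw [mul_ap, hg.pd_e', Real.norm_eq_abs, sq_abs]
  have : (gradient g.e x) i = fderiv ℝ g.e x (EuclideanSpace.single i 1) := by
    have h1 : inner ℝ (gradient g.e x) (EuclideanSpace.single i 1) =
        fderiv ℝ g.e x (EuclideanSpace.single i 1) := by
      rw [gradient, InnerProductSpace.toDual_symm_apply]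
    rw [EuclideanSpace.inner_single_right, one_mul] at h1
    exact h1
  rw [this, sq]

theorem J_Lap_symm {f : WA n} (hf : Ann f) (g : WA n) :
    J ((KK n).Lap f * g) = J (f * (KK n).Lap g) := by
  have h1 : (KK n).Lap f * g - f * (KK n).Lap g =
      ∑ i, WA.pd i (WA.pd i f * g - f * WA.pd i g) := by
    rw [PDA.Lap_apply, PDA.Lap_apply, Finset.sum_mul, Finset.mul_sum, ← Finset.sum_sub_distrib]
    refine Finset.sum_congr rfl fun i _ => ?_
    show WA.pd i (WA.pd i f) * g - f * WA.pd i (WA.pd i g) = _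
    simp only [map_sub, Derivation.leibniz, smul_eq_mul]; ring
  have ha : ∀ i, Ann (WA.pd i f * g - f * WA.pd i g) := fun i => by
    rw [sub_eq_add_neg, ← mul_neg]; exact ((hf.pd i).mul_right _).add (hf.mul_right _)
  have h2 : J ((KK n).Lap f * g - f * (KK n).Lap g) = 0 := by
    rw [h1, J_sum _ fun i _ => (ha i).pd i]
    exact Finset.sum_eq_zero fun i _ => J_pd (ha i) i
  rw [J_sub (hf.Lap.mul_right _) (hf.mul_right _)] at h2
  linarith

theorem J_grad {h : WA n} (hh : Ann h) :
    J (∑ i, WA.pd i h * WA.pd i h) = - J (h * (KK n).Lap h) := by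
  have h1 : ∑ i, WA.pd i h * WA.pd i h + h * (KK n).Lap h = ∑ i, WA.pd i (h * WA.pd i h) := by
    rw [PDA.Lap_apply, Finset.mul_sum, ← Finset.sum_add_distrib]
    refine Finset.sum_congr rfl fun i _ => ?_
    show WA.pd i h * WA.pd i h + h * WA.pd i (WA.pd i h) = _
    simp only [Derivation.leibniz, smul_eq_mul]; ring
  have h2 : J (∑ i, WA.pd i h * WA.pd i h + h * (KK n).Lap h) = 0 := by
    rw [h1, J_sum _ fun i _ => (hh.mul_right _).pd i]
    exact Finset.sum_eq_zero fun i _ => J_pd (hh.mul_right _) i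
  rw [J_add (Ann.sum _ fun i _ => (hh.pd i).mul_right _) (hh.mul_right _)] at h2
  linarith

theorem J_energy {g : WA n} (hg : Ann g) :
    ∫ x, ‖gradient (laplacian g.e) x‖ ^ 2 = - J (g * (KK n).Lap ((KK n).Lap ((KK n).Lap g))) := by
  rw [hg.lap_e]
  simp only [hg.Lap.grad]
  rw [← J_Lap_symm hg, ← J_grad hg.Lap]; rfl

theorem Lap3 (s a : ℝ) (ha : a = s + ((n:ℝ) - 6) / 2) (f : WA n) :
    (KK n).Lap ((KK n).Lap ((KK n).Lap (er s * f))) =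
      - (er (s - 6) * (KK n).FE a ((((n:ℝ) - 2) / 2) ^ 2) f) := by
  rw [Lap_er, Lap_er, Lap_er, show s - 2 - 2 = s - 4 by ring, PDA.Ls_triple _ ha, mul_neg]
  congr 3; ring

theorem D_iter_rad {η : ℝ → ℝ} (hη : ContDiff ℝ ∞ η) (w : WA n) {m : ℕ} (hm : m ≤ 6) :
    (KK n).D^[m] (rad η * w) = ∑ l ∈ Finset.range (m+1),
      (m.choose l : ℝ) • (rad (deriv^[m - l] η) * (KK n).D^[l] w) := by
  have h : ∀ (f : WA n) (a : ℕ), (KK n).D (rad (deriv^[a] η) * f) =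
      rad (deriv^[a] η) * (KK n).D f + rad (deriv^[a+1] η) * f := by
    intro f a
    rw [Derivation.leibniz, D_rad (contDiff_deriv_iter hη a), Function.iterate_succ_apply']
    simp only [smul_eq_mul]; ring
  have h0 : (rad η : WA n) = rad (deriv^[0] η) := rfl
  have step : ∀ m, (KK n).D^[m] (rad η * w) = ∑ l ∈ Finset.range (m+1),
      (m.choose l : ℝ) • (rad (deriv^[m - l] η) * (KK n).D^[l] w) →
      (KK n).D^[m+1] (rad η * w) = ∑ l ∈ Finset.range (m+1), (m.choose l : ℝ) •
        (rad (deriv^[m - l] η) * (KK n).D^[l+1] w + rad (deriv^[m - l + 1] η) * (KK n).D^[l] w) := by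
    intro m hm
    rw [Function.iterate_succ_apply', hm, map_sum]
    refine Finset.sum_congr rfl fun l _ => ?_
    rw [Derivation.map_smul, h, Function.iterate_succ_apply' (⇑(KK n).D) l w]
  induction m with
  | zero => simp
  | succ m ih =>
    rw [step m (ih (by omega))]
    have : m ≤ 5 := by omega
    interval_cases m <;> simp [Finset.sum_range_succ, Nat.choose] <;> module

end WA
end TL

namespace TL
open scoped ContDiff

/-- The data of the problem. -/
structure Dat (n : ℕ) (p k : ℝ) (u : EE n → ℝ) : Prop where
  hu : ContDiff ℝ ∞ u
  hp : 1 < p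
  hk : k * (p - 1) = 6
  heq : ∀ x, laplacian (laplacian (laplacian u)) x = -(|u x| ^ (p - 1) * u x)

namespace Dat
open WA
variable {n : ℕ} {p k : ℝ} {u : EE n → ℝ}

theorem k_pos (H : Dat n p k u) : 0 < k := by
  have h1 := H.hk; have h2 := H.hp
  by_contra h
  nlinarith

/-- restriction of `u` -/
def uw (H : Dat n p k u) : WA n := WA.mk u H.hu.contDiffOn

/-- Emden-Fowler transform -/
def w (H : Dat n p k u) : WA n := er k * H.uw

theorem uw_e (H : Dat n p k u) {x : EE n} (hx : x ≠ 0) : H.uw.e x = u x := mk_e _ _ hx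

theorem w_e (H : Dat n p k u) {x : EE n} (hx : x ≠ 0) : H.w.e x = ‖x‖ ^ k * u x := by
  rw [w, mul_ap, er_e _ hx, H.uw_e hx]

/-- the operator applied to `w` -/
def F (H : Dat n p k u) : WA n := (KK n).FE (((n:ℝ) - 6) / 2 - k) ((((n:ℝ) - 2) / 2) ^ 2) H.w

theorem F_e (H : Dat n p k u) {x : EE n} (hx : x ≠ 0) :
    H.F.e x = ‖x‖ ^ (k + 6) * (|u x| ^ (p - 1) * u x) := by
  have h1 : H.uw = er (-k) * H.w := by
    rw [w, ← mul_assoc, er_mul, neg_add_cancel, er_zero, one_mul]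
  have h2 := Lap3 (-k) (((n:ℝ) - 6) / 2 - k) (by ring) H.w
  rw [← h1] at h2
  have h3 : ((KK n).Lap ((KK n).Lap ((KK n).Lap H.uw))).e x = -(|u x| ^ (p - 1) * u x) := by
    rw [← H.heq]
    exact Lap_e_of (Lap_e_of (Lap_e_of fun x hx => H.uw_e hx)) x hx
  have h4 : H.F = - (er (k + 6) * (KK n).Lap ((KK n).Lap ((KK n).Lap H.uw))) := by
    rw [h2, mul_neg, neg_neg, ← mul_assoc, er_mul, show k + 6 + (-k - 6) = 0 by ring, er_zero,
      one_mul]; rfl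
  rw [h4, neg_ap, mul_ap, h3, er_e _ hx]; ring

theorem F_e' (H : Dat n p k u) {x : EE n} (hx : x ≠ 0) :
    H.F.e x = |H.w.e x| ^ (p - 1) * H.w.e x := by
  rw [H.F_e hx, H.w_e hx, abs_mul, Real.mul_rpow (abs_nonneg _) (abs_nonneg _)]
  have hp := norm_pos_iff.2 hx
  rw [abs_of_nonneg (Real.rpow_nonneg hp.le k), ← Real.rpow_mul hp.le, H.hk,
    show k + 6 = 6 + k by ring, Real.rpow_add hp]
  ring

theorem abs_pow_mul {p : ℝ} (hp : 1 < p) (t : ℝ) : t * (|t| ^ (p - 1) * t) = |t| ^ (p + 1) := by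
  have h1 : t * (|t| ^ (p - 1) * t) = |t| ^ (p - 1) * |t| ^ 2 := by rw [sq_abs]; ring
  rw [h1, show p + 1 = (p - 1) + (2:ℕ) by push_cast; ring, Real.rpow_add_natCast']
  · exact abs_nonneg t
  · push_cast; linarith

theorem wF_e (H : Dat n p k u) {x : EE n} (hx : x ≠ 0) :
    (H.w * H.F).e x = |H.w.e x| ^ (p + 1) := by
  rw [mul_ap, H.F_e' hx, abs_pow_mul H.hp]

theorem D_wF (H : Dat n p k u) :
    (KK n).D (H.w * H.F) = (p + 1) • ((KK n).D H.w * H.F) := by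
  rw [ext_iff']; intro x hx
  rw [smul_ap, mul_ap, D_e, D_e, Finset.sum_mul, Finset.mul_sum]
  refine Finset.sum_congr rfl fun i _ => ?_
  rw [pd_e _ _ hx, pd_e _ _ hx]
  have hev : (H.w * H.F).e =ᶠ[nhds x] fun y => |H.w.e y| ^ (p + 1) := by
    filter_upwards [mem_nhds_ne hx] with y hy using H.wF_e hy
  rw [hev.fderiv_eq]
  have hd := hasDerivAt_abs_rpow (H.w.e x) (p := p + 1) (by linarith [H.hp])
  have hc := hd.comp_hasFDerivAt x (H.w.differentiableAt hx).hasFDerivAt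
  have h4 := hc.fderiv
  simp only [Function.comp_def] at h4
  rw [h4, H.F_e' hx, show p + 1 - 2 = p - 1 by ring]
  simp; ring

/-- the nonlinear energy -/
def P (H : Dat n p k u) (ρ : ℝ → ℝ) : ℝ := G ρ (H.w * H.F)

theorem G_FE (H : Dat n p k u) {ρ : ℝ → ℝ} (hρ : Adm ρ) (f : WA n) :
    G ρ (f * H.F) = ∑ q ∈ idx, cf (((n:ℝ) - 6) / 2 - k) ((((n:ℝ) - 2) / 2) ^ 2) q.1 q.2 *
      bf q.2 ρ f ((KK n).D^[q.1] H.w) := by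
  rw [F, PDA.FE, Finset.mul_sum, G_sum _ hρ]
  refine Finset.sum_congr rfl fun q _ => ?_
  rw [mul_smul_comm, G_smul, bf_of hρ]

theorem hPm (H : Dat n p k u) (ρ σ : ℝ → ℝ) (hρ : Adm ρ) (hσ : Adm σ) (hle : ∀ t, ρ t ≤ σ t) :
    H.P ρ ≤ H.P σ := by
  refine G_mono hρ hσ fun x hx => mul_le_mul_of_nonneg_right (hle _) ?_
  rw [H.wF_e hx]; positivity

theorem hPD (H : Dat n p k u) (ρ : ℝ → ℝ) (hρ : Adm ρ) :
    ∑ q ∈ idx, cf (((n:ℝ) - 6) / 2 - k) ((((n:ℝ) - 2) / 2) ^ 2) q.1 q.2 *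
      bf q.2 ρ ((KK n).D H.w) ((KK n).D^[q.1] H.w) = - H.P (deriv ρ) / (p + 1) := by
  rw [← H.G_FE hρ]
  have h1 := G_D hρ (H.w * H.F)
  rw [H.D_wF, G_smul] at h1
  have : p + 1 ≠ 0 := by have := H.hp; linarith
  rw [eq_div_iff this, P]; linarith

theorem hS (H : Dat n p k u) {Θ : Set (EE n)}
    (hstab : ∀ φ : EE n → ℝ, ContDiff ℝ ∞ φ →
      HasCompactSupport φ → tsupport φ ⊆ Θᶜ →
      p * (∫ x, |u x| ^ (p - 1) * φ x ^ 2) ≤ ∫ x, ‖gradient (laplacian φ) x‖ ^ 2)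
    {T0 : ℝ} (hT : Θ ⊆ Metric.ball 0 (Real.exp T0))
    (η : ℝ → ℝ) (hη : Adm η) (h0 : ∀ t ≤ T0, η t = 0) :
    p * H.P (fun t => η t * η t) ≤
      ∑ r ∈ idx, cf 0 ((((n:ℝ) - 2) / 2) ^ 2) r.1 r.2 *
        ∑ l ∈ Finset.range (r.1 + 1), (r.1.choose l : ℝ) *
        bf r.2 (fun t => η t * (deriv^[r.1 - l] η) t) H.w ((KK n).D^[l] H.w) := by
  set s : ℝ := 3 - (n:ℝ) / 2 with hs
  set v : WA n := rad η * H.w with hv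
  have hva : Ann v := (Ann.rad hη).mul_right _
  have hφa : Ann (er s * v) := hva.mul_left _
  have hφe : ∀ x, x ≠ 0 → (er s * v).e x = ‖x‖ ^ s * (η (Real.log ‖x‖) * H.w.e x) := by
    intro x hx
    rw [hv, mul_ap, mul_ap, er_e _ hx, rad_e hη.1 hx]
  have hts : tsupport (er s * v).e ⊆ Θᶜ := by
    have hsub : Function.support (er s * v).e ⊆ {x | Real.exp T0 ≤ ‖x‖} := by
      intro x hx
      by_cases hx0 : x = 0
      · subst hx0; exact absurd (e_zero' _) hx
      · rw [Function.mem_support, hφe x hx0] at hx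
        by_contra hc
        simp only [Set.mem_ofPred_eq, not_le] at hc
        apply hx
        rw [h0 _ ((Real.log_le_iff_le_exp (norm_pos_iff.2 hx0)).2 hc.le)]; ring
    intro x hx hxΘ
    have h1 := closure_minimal hsub (isClosed_le continuous_const continuous_norm) hx
    have h2 := hT hxΘ
    rw [mem_ball_zero_iff] at h2
    exact absurd h1 (not_le.2 h2)
  have hmain := hstab _ hφa.contDiff hφa.1 hts
  have e1 : ∫ x, |u x| ^ (p - 1) * (er s * v).e x ^ 2 = H.P (fun t => η t * η t) := by
    rw [P, G, J]
    congr 1; funext x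
    by_cases hx : x = 0
    · subst hx; rw [e_zero', e_zero']; ring
    · rw [hφe x hx, mul_ap, mul_ap, rad_e (hη.mul hη.1).1 hx, mul_ap, er_e _ hx, H.F_e hx, H.w_e hx]
      have hp := norm_pos_iff.2 hx
      have h1 : (‖x‖ ^ s) ^ 2 = ‖x‖ ^ (-(n:ℝ)) * ‖x‖ ^ (6:ℝ) := by
        rw [← Real.rpow_natCast, ← Real.rpow_mul hp.le, ← Real.rpow_add hp]
        congr 1; rw [hs]; push_cast; ring
      rw [mul_pow, h1, Real.rpow_add hp]
      ring
  have e2 : ∫ x, ‖gradient (laplacian (er s * v).e) x‖ ^ 2 =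
      J (er (-n) * (v * (KK n).FE 0 ((((n:ℝ) - 2) / 2) ^ 2) v)) := by
    rw [J_energy hφa, Lap3 s 0 (by rw [hs]; ring), mul_neg, J_neg, neg_neg]
    congr 1
    rw [show -(n:ℝ) = s + (s - 6) by rw [hs]; ring, ← er_mul]; ring
  rw [e1, e2] at hmain
  refine hmain.trans (le_of_eq ?_)
  rw [PDA.FE, Finset.mul_sum, Finset.mul_sum, J_sum]
  · refine Finset.sum_congr rfl fun r hr => ?_
    rw [mul_smul_comm, mul_smul_comm, J_smul]
    congr 1
    rw [hv, D_iter_rad hη.1 _ (by have := mem_idx.1 hr; omega)]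
    have hAs : ∀ (j : ℕ) (s : Finset ℕ) (f : ℕ → WA n), (KK n).A^[j] (∑ i ∈ s, f i) =
        ∑ i ∈ s, (KK n).A^[j] (f i) := by
      intro j s f
      rw [← Module.End.coe_pow]; exact map_sum _ _ _
    have hAm : ∀ (j : ℕ) (c : ℝ) (f : WA n), (KK n).A^[j] (c • f) = c • (KK n).A^[j] f := by
      intro j c f
      rw [← Module.End.coe_pow]; exact map_smul _ _ _
    rw [hAs, Finset.mul_sum, Finset.mul_sum, J_sum]
    · refine Finset.sum_congr rfl fun l _ => ?_
      rw [hAm, A_rad_iter, mul_smul_comm, mul_smul_comm, J_smul]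
      congr 1
      have had : Adm (fun t => η t * (deriv^[r.1 - l] η) t) := hη.mul (contDiff_deriv_iter hη.1 _)
      rw [bf_of had, G, rad_mul hη.1 (contDiff_deriv_iter hη.1 _)]
      congr 1; ring
    · exact fun l _ => (hva.mul_right _).mul_left _
  · exact fun r _ => (hva.mul_right _).mul_left _

end Dat
end TL

namespace TL
open scoped ContDiff
namespace WA
variable {n : ℕ}

theorem Adm_addShift {ρ : ℝ → ℝ} (h : Adm ρ) (S : ℝ) : Adm (fun t => ρ (t + S)) := by
  have := h.shift (-S); simpa using this

theorem scale_pt {ρ : ℝ → ℝ} (h : Adm ρ) (S : ℝ) (x : EE n) :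
    (rad (fun t => ρ (t + S)) * er (-n) : WA n).e x =
      Real.exp (S * n) * (rad ρ * er (-n) : WA n).e (Real.exp S • x) := by
  by_cases hx : x = 0
  · subst hx; rw [smul_zero, e_zero', e_zero', mul_zero]
  · have hx' : Real.exp S • x ≠ 0 := smul_ne_zero (Real.exp_ne_zero S) hx
    have hn := norm_pos_iff.2 hx
    rw [mul_ap, mul_ap, rad_e h.1 hx', rad_e (Adm_addShift h S).1 hx, er_e _ hx, er_e _ hx',
      norm_smul, Real.norm_eq_abs, abs_of_pos (Real.exp_pos S),
      Real.log_mul (Real.exp_ne_zero S) hn.ne', Real.log_exp,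
      Real.mul_rpow (Real.exp_pos S).le hn.le, ← Real.exp_mul, add_comm S]
    have : Real.exp (S * n) * Real.exp (S * -n) = 1 := by
      rw [← Real.exp_add]; ring_nf; exact Real.exp_zero
    linear_combination (-(ρ (Real.log ‖x‖ + S) * ‖x‖ ^ (-(n:ℝ)))) * this

theorem scale_int (g : EE n → ℝ) (S : ℝ) :
    ∫ x, Real.exp (S * n) * g (Real.exp S • x) = ∫ x, g x := by
  rw [integral_const_mul, Measure.integral_comp_smul, finrank_euclideanSpace_fin, smul_eq_mul,
    ← mul_assoc, abs_of_pos (by positivity), ← Real.exp_nat_mul, mul_comm S, mul_inv_cancel₀, one_mul]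
  exact Real.exp_ne_zero _

theorem G_one_shift {ρ : ℝ → ℝ} (h : Adm ρ) (S : ℝ) :
    G (fun t => ρ (t + S)) (1 : WA n) = G ρ (1 : WA n) := by
  rw [G, G, mul_one, J, J, ← scale_int (rad ρ * er (-n) : WA n).e S]
  congr 1; funext x; exact scale_pt h S x

theorem G_le_shift {ρ : ℝ → ℝ} (h : Adm ρ) (S ε : ℝ) (f : WA n)
    (hf : ∀ x, x ≠ 0 → ρ (Real.log ‖x‖ + S) ≠ 0 → |f.e x| ≤ ε) :
    |G (fun t => ρ (t + S)) f| ≤ ε * ∫ x, |(rad ρ * er (-n) : WA n).e x| := by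
  have hS := Adm_addShift h S
  have hi : Integrable (fun x => |(rad (fun t => ρ (t + S)) * er (-n) : WA n).e x|) :=
    ((Ann.rad hS).mul_right _).integrable.abs
  have h1 := norm_integral_le_of_norm_le (f := (rad (fun t => ρ (t + S)) * (er (-n) * f) : WA n).e)
    (hi.const_mul ε) (Eventually.of_forall fun x => ?_)
  · have e : ∫ x, |(rad (fun t => ρ (t + S)) * er (-n) : WA n).e x| =
        ∫ x, |(rad ρ * er (-n) : WA n).e x| := by
      rw [← scale_int (fun x => |(rad ρ * er (-n) : WA n).e x|) S]
      congr 1; funext x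
      rw [scale_pt h S x, abs_mul, abs_of_pos (Real.exp_pos _)]
    rw [integral_const_mul, e] at h1
    exact h1
  · by_cases hx : x = 0
    · subst hx; rw [e_zero', e_zero']; simp
    · rw [← mul_assoc, mul_ap _ f, Real.norm_eq_abs, abs_mul, mul_comm]
      by_cases hz : ρ (Real.log ‖x‖ + S) = 0
      · rw [mul_ap, rad_e hS.1 hx, hz]; simp
      · exact mul_le_mul_of_nonneg_right (hf x hx hz) (abs_nonneg _)

/-- restrictions of globally smooth functions -/
def Sm (f : WA n) : Prop := ∃ g : EE n → ℝ, ContDiff ℝ ∞ g ∧ ∀ x, x ≠ 0 → f.e x = g x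

theorem Sm.add {f g : WA n} (hf : Sm f) (hg : Sm g) : Sm (f + g) := by
  obtain ⟨a, ha, h1⟩ := hf
  obtain ⟨b, hb, h2⟩ := hg
  exact ⟨fun x => a x + b x, ha.add hb, fun x hx => by rw [add_ap, h1 x hx, h2 x hx]⟩

theorem Sm.mul {f g : WA n} (hf : Sm f) (hg : Sm g) : Sm (f * g) := by
  obtain ⟨a, ha, h1⟩ := hf
  obtain ⟨b, hb, h2⟩ := hg
  exact ⟨fun x => a x * b x, ha.mul hb, fun x hx => by rw [mul_ap, h1 x hx, h2 x hx]⟩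

theorem Sm.smul {f : WA n} (hf : Sm f) (c : ℝ) : Sm (c • f) := by
  obtain ⟨a, ha, h1⟩ := hf
  exact ⟨fun x => c * a x, contDiff_const.mul ha, fun x hx => by rw [smul_ap, h1 x hx]⟩

theorem Sm.sum {ι : Type*} (s : Finset ι) {f : ι → WA n} (h : ∀ i ∈ s, Sm (f i)) :
    Sm (∑ i ∈ s, f i) := by
  induction s using Finset.cons_induction with
  | empty => rw [Finset.sum_empty]; exact ⟨0, contDiff_const, fun x _ => by rw [e_zero]⟩
  | cons a s ha ih =>
    rw [Finset.sum_cons]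
    exact (h a (Finset.mem_cons_self a s)).add (ih fun i hi => h i (Finset.mem_cons.2 (Or.inr hi)))

theorem Sm.pd {f : WA n} (hf : Sm f) (i : Fin n) : Sm (pd i f) := by
  obtain ⟨a, ha, h1⟩ := hf
  refine ⟨fun x => fderiv ℝ a x (EuclideanSpace.single i 1),
    (ha.fderiv_right (m := ∞) (by simp)).clm_apply contDiff_const, fun x hx => ?_⟩
  rw [pd_e _ _ hx]
  have hev : f.e =ᶠ[nhds x] a := by
    filter_upwards [mem_nhds_ne hx] with y hy using h1 y hy
  rw [hev.fderiv_eq]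

theorem Sm.co (i : Fin n) : Sm (co i) := ⟨fun x => x i, by fun_prop, fun x _ => co_e i x⟩

theorem Sm.D {f : WA n} (hf : Sm f) : Sm ((KK n).D f) := by
  rw [PDA.D_apply]; exact Sm.sum _ fun i _ => (Sm.co i).mul (hf.pd i)

theorem Sm.A {f : WA n} (hf : Sm f) : Sm ((KK n).A f) := by
  rw [PDA.A_apply, sub_eq_add_neg, ← neg_one_smul ℝ, PDA.Lap_apply, PDA.r2]
  exact (hf.D.D.add (hf.D.smul _)).add
    (((Sm.sum _ fun i _ => (Sm.co i).mul (Sm.co i)).mul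
      (Sm.sum _ fun i _ => (hf.pd i).pd i)).smul _)

/-- power times smooth -/
def Cl (k : ℝ) (f : WA n) : Prop := ∃ g, Sm g ∧ f = er k * g

theorem Cl.D {k : ℝ} {f : WA n} (hf : Cl k f) : Cl k ((KK n).D f) := by
  obtain ⟨g, hg, rfl⟩ := hf
  refine ⟨k • g + (KK n).D g, (hg.smul k).add hg.D, ?_⟩
  rw [Derivation.leibniz, D_er]
  simp only [smul_eq_mul, Algebra.smul_def]; ring

theorem Cl.A {k : ℝ} {f : WA n} (hf : Cl k f) : Cl k ((KK n).A f) := by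
  obtain ⟨g, hg, rfl⟩ := hf
  exact ⟨(KK n).A g, hg.A, PDA.A_rad_mul _ (isRad_er k) g⟩

theorem Cl.D_iter {k : ℝ} {f : WA n} (hf : Cl k f) (m : ℕ) : Cl k ((KK n).D^[m] f) := by
  induction m with
  | zero => exact hf
  | succ m ih => rw [Function.iterate_succ_apply']; exact ih.D

theorem Cl.A_iter {k : ℝ} {f : WA n} (hf : Cl k f) (m : ℕ) : Cl k ((KK n).A^[m] f) := by
  induction m with
  | zero => exact hf
  | succ m ih => rw [Function.iterate_succ_apply']; exact ih.A

theorem Cl.mul {k l : ℝ} {f g : WA n} (hf : Cl k f) (hg : Cl l g) : Cl (k + l) (f * g) := by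
  obtain ⟨a, ha, rfl⟩ := hf
  obtain ⟨b, hb, rfl⟩ := hg
  exact ⟨a * b, ha.mul hb, by rw [← er_mul]; ring⟩

theorem Cl.bound {k : ℝ} {f : WA n} (hf : Cl k f) :
    ∃ M, 0 ≤ M ∧ ∀ x, x ≠ 0 → ‖x‖ ≤ 1 → |f.e x| ≤ M * ‖x‖ ^ k := by
  obtain ⟨g, ⟨a, ha, h1⟩, rfl⟩ := hf
  obtain ⟨M, hM⟩ := (isCompact_closedBall (0 : EE n) 1).exists_bound_of_continuousOn
    ha.continuous.continuousOn
  refine ⟨max M 0, le_max_right _ _, fun x hx hx1 => ?_⟩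
  rw [mul_ap, h1 x hx, er_e _ hx, abs_mul, abs_of_nonneg (by positivity), mul_comm]
  refine mul_le_mul_of_nonneg_right ?_ (by positivity)
  exact (hM x (by simpa using hx1)).trans (le_max_left _ _)

theorem Cl.tendsto {k : ℝ} (hk : 0 < k) {f : WA n} (hf : Cl k f) {ρ : ℝ → ℝ} (hρ : Adm ρ) :
    Tendsto (fun S : ℝ => G (fun t => ρ (t + S)) f) atTop (nhds 0) := by
  obtain ⟨M, hM0, hM⟩ := hf.bound
  obtain ⟨R, hR⟩ := hρ.2.isCompact.isBounded.subset_closedBall 0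
  set I := ∫ x, |(rad ρ * er (-n) : WA n).e x|
  have hb : ∀ S, R ≤ S → |G (fun t => ρ (t + S)) f| ≤ (M * Real.exp (k * (R - S))) * I := by
    intro S hS
    refine G_le_shift hρ S _ f fun x hx hne => ?_
    have h1 := hR (subset_closure (Function.mem_support.2 hne))
    rw [mem_closedBall_zero_iff, Real.norm_eq_abs, abs_le] at h1
    have hp := norm_pos_iff.2 hx
    have h2 : Real.log ‖x‖ ≤ R - S := by linarith [h1.2]
    have h3 : ‖x‖ ≤ 1 := by
      have := (Real.log_le_iff_le_exp hp).1 h2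
      exact this.trans (Real.exp_le_one_iff.2 (by linarith))
    refine (hM x hx h3).trans (mul_le_mul_of_nonneg_left ?_ hM0)
    rw [Real.rpow_def_of_pos hp]
    refine Real.exp_le_exp.2 ?_
    rw [mul_comm]; exact mul_le_mul_of_nonneg_left h2 hk.le
  have hlim : Tendsto (fun S : ℝ => (M * Real.exp (k * (R - S))) * I) atTop (nhds 0) := by
    have h1 : Tendsto (fun S : ℝ => k * (R - S)) atTop atBot := by
      refine Tendsto.const_mul_atBot hk ?_
      exact tendsto_atBot_add_const_left _ R tendsto_neg_atTop_atBot
    have h2 := (Real.tendsto_exp_atBot.comp h1).const_mul M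
    have h3 := h2.mul_const I
    simpa using h3
  refine squeeze_zero_norm' ?_ hlim
  filter_upwards [eventually_ge_atTop R] with S hS using hb S hS

end WA

namespace Dat
open WA
variable {n : ℕ} {p k : ℝ} {u : EE n → ℝ}

theorem w_cl (H : Dat n p k u) : Cl k H.w :=
  ⟨H.uw, ⟨u, H.hu, fun _ hx => H.uw_e hx⟩, rfl⟩

theorem h0 (H : Dat n p k u) (ρ : ℝ → ℝ) (hρ : Adm ρ) (i m j : ℕ) :
    Tendsto (fun S : ℝ => bf j (fun t => ρ (t + S)) ((KK n).D^[i] H.w) ((KK n).D^[m] H.w))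
    atTop (nhds 0) := by
  have hc := (H.w_cl.D_iter i).mul ((H.w_cl.D_iter m).A_iter j)
  have := hc.tendsto (by linarith [H.k_pos]) hρ
  refine this.congr fun S => ?_
  rw [bf_of (Adm_addShift hρ S)]

theorem young {p : ℝ} (hp : 1 < p) {δ : ℝ} (hδ : 0 < δ) :
    ∃ C, 0 ≤ C ∧ ∀ z : ℝ, 0 ≤ z → z ^ 2 ≤ δ * z ^ (p + 1) + C := by
  set M : ℝ := (1 / δ) ^ (1 / (p - 1))
  have hM : 0 < M := Real.rpow_pos_of_pos (by positivity) _
  refine ⟨M ^ 2, by positivity, fun z hz => ?_⟩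
  rcases le_total z M with h | h
  · have h1 : z ^ 2 ≤ M ^ 2 := by gcongr
    have h2 : 0 ≤ δ * z ^ (p + 1) := by positivity
    linarith
  · have hz' : 0 < z := hM.trans_le h
    have h1 : M ^ (p - 1) ≤ z ^ (p - 1) := Real.rpow_le_rpow hM.le h (by linarith)
    have h2 : M ^ (p - 1) = 1 / δ := by
      rw [← Real.rpow_mul (by positivity), one_div_mul_cancel (by linarith), Real.rpow_one]
    rw [h2, div_le_iff₀ hδ] at h1
    have h3 : z ^ (p + 1) = z ^ (p - 1) * z ^ 2 := by
      rw [← Real.rpow_natCast, ← Real.rpow_add hz']; congr 1; push_cast; ring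
    rw [h3]
    have h4 : z ^ 2 * 1 ≤ z ^ 2 * (z ^ (p - 1) * δ) := mul_le_mul_of_nonneg_left h1 (by positivity)
    nlinarith [sq_nonneg M]

theorem hY (H : Dat n p k u) {q : ℕ} (hq3 : 3 ≤ q) (hq : 6 ≤ ((q:ℝ) - 1) * (p - 1)) (δ : ℝ)
    (hδ : 0 < δ) : ∃ C, ∀ T, bf 0 (fun t => bmp (t - T) ^ (2 * q)) H.w H.w ≤
      δ * H.P (fun t => bmp (t - T) ^ (q + 3) * bmp (t - T) ^ (q + 3)) + C := by
  obtain ⟨C, hC, hyo⟩ := young H.hp hδ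
  have hb2 : Adm (fun t => bmp t ^ 2) := bmp_adm.pow two_ne_zero
  refine ⟨C * G (fun t => bmp t ^ 2) (1 : WA n), fun T => ?_⟩
  have a1 : Adm (fun t => bmp (t - T) ^ (2 * q)) :=
    (bmp_adm.pow (k := 2 * q) (by omega)).shift T
  have a2 : Adm (fun t => bmp (t - T) ^ (q + 3) * bmp (t - T) ^ (q + 3)) := by
    have := (bmp_adm.pow (k := q + 3) (by omega)).shift T
    exact this.mul this.1
  have a3 : Adm (fun t => bmp (t - T) ^ 2) := hb2.shift T
  have e : G (fun t => bmp (t - T) ^ 2) (1 : WA n) = G (fun t => bmp t ^ 2) (1 : WA n) := by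
    have := G_one_shift (n := n) hb2 (-T)
    simpa [sub_eq_add_neg] using this
  rw [← e, bf_of a1, P, G, G, G, ← J_smul, ← J_smul, ← J_add ((G_ann a2 _).smul _)
    ((G_ann a3 _).smul _)]
  refine J_mono (G_ann a1 _) (((G_ann a2 _).smul _).add ((G_ann a3 _).smul _)) fun x hx => ?_
  rw [add_ap, smul_ap, smul_ap]
  simp only [mul_ap _ (er (-n) * _), mul_ap (er (-n)) _]
  rw [H.wF_e hx, rad_e a1.1 hx, rad_e a2.1 hx, rad_e a3.1 hx, one_e hx]
  simp only [Function.iterate_zero, id, mul_ap]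
  set y := bmp (Real.log ‖x‖ - T)
  have hy0 : 0 ≤ y := bmp_nonneg _
  have hy1 : y ≤ 1 := bmp_le_one _
  set W := H.w.e x
  have he := er_pos (-(n:ℝ)) hx
  have key : y ^ (2 * q) * (W * W) ≤ δ * (y ^ (q+3) * y ^ (q+3) * |W| ^ (p + 1)) + C * y ^ 2 := by
    obtain ⟨r, rfl⟩ : ∃ r, q = r + 1 := ⟨q - 1, by omega⟩
    have h1 := hyo (y ^ r * |W|) (by positivity)
    have h2 : y ^ (2 * (r + 1)) * (W * W) = y ^ 2 * (y ^ r * |W|) ^ 2 := by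
      rw [mul_pow, sq_abs]; ring
    have h3 : y ^ 2 * (y ^ r) ^ (p + 1) ≤ y ^ (r + 1 + 3) * y ^ (r + 1 + 3) := by
      rcases hy0.eq_or_lt with h | h
      · rw [← h]; simp
      · rw [← Real.rpow_natCast y r, ← Real.rpow_mul hy0, ← Real.rpow_natCast y 2,
          ← Real.rpow_natCast y (r+1+3), ← Real.rpow_add h, ← Real.rpow_add h]
        refine Real.rpow_le_rpow_of_exponent_ge h hy1 ?_
        push_cast at hq ⊢
        nlinarith
    rw [h2]
    have h4 : y ^ 2 * (y ^ r * |W|) ^ 2 ≤ y ^ 2 * (δ * (y ^ r * |W|) ^ (p + 1) + C) :=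
      mul_le_mul_of_nonneg_left h1 (by positivity)
    rw [Real.mul_rpow (by positivity) (abs_nonneg _)] at h4
    have h5 := mul_le_mul_of_nonneg_right h3 (by positivity : 0 ≤ δ * |W| ^ (p + 1))
    nlinarith
  have := mul_le_mul_of_nonneg_left key he.le
  linarith

theorem D_e' (f : WA n) {x : EE n} (hx : x ≠ 0) : ((KK n).D f).e x = fderiv ℝ f.e x x := by
  rw [D_e]
  have h1 : x = ∑ i, x i • (EuclideanSpace.single i (1:ℝ) : EE n) := by
    have := (EuclideanSpace.basisFun (Fin n) ℝ).sum_repr x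
    simpa using this.symm
  conv_rhs => rw [h1, map_sum]
  refine Finset.sum_congr rfl fun i _ => ?_
  rw [pd_e _ _ hx, map_smul, smul_eq_mul, ← h1]

theorem finish (H : Dat n p k u) (hn : 1 ≤ n)
    (hD : ∀ ρ, Adm ρ → bf 0 ρ ((KK n).D H.w) ((KK n).D H.w) ≤ 0) : u = 0 := by
  have hDw : ∀ x, x ≠ 0 → ((KK n).D H.w).e x = 0 := by
    intro x hx
    by_contra hne
    have ha := bmp_adm.shift (Real.log ‖x‖)
    have h1 := hD _ ha
    rw [bf_of ha, G, J] at h1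
    set g : WA n := rad (fun t => bmp (t - Real.log ‖x‖)) *
      (er (-n) * ((KK n).D H.w * (KK n).A^[0] ((KK n).D H.w))) with hg
    have hga : Ann g := G_ann ha _
    have hge : ∀ y, y ≠ 0 → g.e y = bmp (Real.log ‖y‖ - Real.log ‖x‖) *
        ((er (-n)).e y * (((KK n).D H.w).e y) ^ 2) := by
      intro y hy
      rw [hg, mul_ap, mul_ap, mul_ap, rad_e ha.1 hy, sq]; rfl
    have hpos := hga.contDiff.continuous.integral_pos_of_hasCompactSupport_nonneg_nonzero
      (μ := volume) hga.1 (x := x) (fun y => by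
        by_cases hy : y = 0
        · subst hy; rw [e_zero']; simp
        · rw [hge y hy]
          exact mul_nonneg (bmp_nonneg _) (mul_nonneg (er_pos _ hy).le (sq_nonneg _)))
      (by
        rw [hge x hx, sub_self, bmp_one (by norm_num), one_mul]
        exact mul_ne_zero (er_pos _ hx).ne' (pow_ne_zero _ hne))
    exact absurd h1 (not_le.2 hpos)
  have hray : ∀ x, x ≠ 0 → ∀ s : ℝ, 0 < s → s < 1 → H.w.e (s • x) = H.w.e x := by
    intro x hx s hs hs1
    have hd : ∀ t ∈ Set.Icc s 1, HasDerivAt (fun t : ℝ => H.w.e (t • x)) 0 t := by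
      intro t ht
      have ht0 : 0 < t := hs.trans_le ht.1
      have hne : t • x ≠ 0 := smul_ne_zero ht0.ne' hx
      have h1 : HasDerivAt (fun t : ℝ => t • x) x t := by
        simpa using (hasDerivAt_id t).smul_const x
      have h2 := (H.w.differentiableAt hne).hasFDerivAt.comp_hasDerivAt t h1
      have h3 := hDw _ hne
      rw [D_e' _ hne, map_smul, smul_eq_mul] at h3
      rcases mul_eq_zero.1 h3 with h | h
      · exact absurd h ht0.ne'
      · rw [h] at h2; exact h2
    have := constant_of_derivWithin_zero (f := fun t : ℝ => H.w.e (t • x)) (a := s) (b := 1)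
      (fun t ht => (hd t ht).differentiableAt.differentiableWithinAt)
      (fun t ht => (hd t (Set.Ico_subset_Icc_self ht)).hasDerivWithinAt.derivWithin
        (uniqueDiffOn_Icc hs1 t (Set.Ico_subset_Icc_self ht))) 1 (Set.right_mem_Icc.2 hs1.le)
    simpa using this.symm
  have hu0 : ∀ x, x ≠ 0 → u x = 0 := by
    intro x hx
    have hx0 := norm_pos_iff.2 hx
    have hlim : Tendsto (fun s : ℝ => ‖s • x‖ ^ k * u (s • x)) (nhdsWithin 0 (Set.Ioi 0))
        (nhds 0) := by
      have hc : Continuous (fun s : ℝ => ‖s • x‖ ^ k * u (s • x)) := by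
        refine Continuous.mul ?_ ?_
        · exact (continuous_norm.comp (continuous_id.smul continuous_const)).rpow_const
            fun _ => Or.inr H.k_pos.le
        · exact H.hu.continuous.comp (continuous_id.smul continuous_const)
      have := hc.tendsto 0
      simp only [zero_smul, norm_zero, Real.zero_rpow H.k_pos.ne', zero_mul] at this
      exact this.mono_left nhdsWithin_le_nhds
    have hconst : (fun s : ℝ => ‖s • x‖ ^ k * u (s • x)) =ᶠ[nhdsWithin 0 (Set.Ioi 0)]
        fun _ => H.w.e x := by
      filter_upwards [Ioo_mem_nhdsGT (zero_lt_one (α := ℝ))] with s hs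
      rw [← hray x hx s hs.1 hs.2, H.w_e (smul_ne_zero hs.1.ne' hx)]
    have h1 : H.w.e x = 0 := tendsto_nhds_unique (tendsto_const_nhds.congr' hconst.symm) hlim
    rw [H.w_e hx] at h1
    rcases mul_eq_zero.1 h1 with h | h
    · exact absurd h (Real.rpow_pos_of_pos hx0 k).ne'
    · exact h
  funext x
  by_cases hx : x = 0
  · subst hx
    have : Nontrivial (EE n) := by
      have : Nonempty (Fin n) := ⟨⟨0, hn⟩⟩
      infer_instance
    have : (nhdsWithin (0 : EE n) {0}ᶜ).NeBot := Module.punctured_nhds_neBot ℝ (EE n) 0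
    have h1 : Tendsto u (nhdsWithin (0 : EE n) {0}ᶜ) (nhds (u 0)) :=
      (H.hu.continuous.tendsto 0).mono_left nhdsWithin_le_nhds
    have h2 : Tendsto u (nhdsWithin (0 : EE n) {0}ᶜ) (nhds 0) := by
      refine tendsto_const_nhds.congr' ?_
      filter_upwards [self_mem_nhdsWithin] with y hy using (hu0 y hy).symm
    exact tendsto_nhds_unique h1 h2
  · exact hu0 x hx

end Dat
end TL

namespace TL
namespace Num

/-- the Hardy-type polynomial -/
def hh (v y : ℝ) : ℝ := (v^2/4 - y) * (((v/2+2)^2 - y) * ((v/2-2)^2 - y))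

/-- the Hardy constant -/
def lam (v : ℝ) : ℝ := ((v+2)*(v-2)*(v-6))^2/64

theorem hh_anti {v y z : ℝ} (hv : 6 < v) (hyz : y < z) (hz : z ≤ (v/2-2)^2) : hh v z < hh v y := by
  unfold hh
  have h1 : (v/2-2)^2 < v^2/4 := by nlinarith
  have h2 : (v/2-2)^2 < (v/2+2)^2 := by nlinarith
  have a : ((v/2+2)^2 - z) * ((v/2-2)^2 - z) ≤ ((v/2+2)^2 - y) * ((v/2-2)^2 - y) :=
    mul_le_mul (by linarith) (by linarith) (by linarith) (by linarith)
  have b : 0 < ((v/2+2)^2 - y) * ((v/2-2)^2 - y) := mul_pos (by linarith) (by linarith)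
  have c : (v^2/4 - z) * (((v/2+2)^2 - z) * ((v/2-2)^2 - z)) ≤
    (v^2/4 - z) * (((v/2+2)^2 - y) * ((v/2-2)^2 - y)) := mul_le_mul_of_nonneg_left a (by linarith)
  have d := mul_lt_mul_of_pos_right (show v^2/4 - z < v^2/4 - y by linarith) b
  linarith

theorem lam_lt_one {v : ℝ} (hv : 6 < v) : lam v < hh v 1 := by
  have e : hh v 1 - lam v = (v^2-4)^2 * (12 * (v-6)) / 64 := by unfold hh lam; ring
  have : 0 < (v^2-4)^2 * (12 * (v-6)) / 64 := by
    have h1 : 0 < v^2 - 4 := by nlinarith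
    have h2 : 0 < v - 6 := by linarith
    positivity
  linarith

theorem dd1_neg {v : ℝ} (hv : 15 ≤ v) : dd1 v < 0 := by
  obtain ⟨j, rfl⟩ : ∃ j, v = 15 + j := ⟨v - 15, by ring⟩
  have hj : 0 ≤ j := by linarith
  have : 0 < - dd1 (15 + j) := by unfold dd1; ring_nf; positivity
  linarith

theorem dd2_nonneg {v : ℝ} (hv : 15 ≤ v) : 0 ≤ dd2 v := by
  obtain ⟨j, rfl⟩ : ∃ j, v = 15 + j := ⟨v - 15, by ring⟩
  have hj : 0 ≤ j := by linarith
  unfold dd2; ring_nf; positivity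

theorem hh_X {v : ℝ} (hv : 15 ≤ v) : ∃ X, dfn v = Real.sqrt X ∧ hh v X = lam v ∧ X < (v/2-2)^2 := by
  have h1 := dd1_neg hv
  have h2 := dd2_nonneg hv
  set r := Real.sqrt (dd2 v) with hr
  have hr2 : r^2 = dd2 v := Real.sq_sqrt h2
  have hr0 : 0 ≤ r := Real.sqrt_nonneg _
  set s := -(dd1 v + 36 * r) with hs
  set s' := -(dd1 v - 36 * r) with hs'
  have hss : s * s' = (768*v^2+1024)^3 := by
    have : s * s' = dd1 v^2 - 1296 * r^2 := by rw [hs, hs']; ring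
    rw [this, hr2]; unfold dd1 dd2; ring
  have hs'0 : 0 < s' := by rw [hs']; linarith
  have hs0 : 0 < s := by
    by_contra hc
    have := mul_nonneg (neg_nonneg.2 (not_lt.1 hc)) hs'0.le
    have : 0 < (768*v^2+1024)^3 := by positivity
    nlinarith
  have hd : dd0 v ^ 3 = s := by
    unfold dd0
    rw [← Real.rpow_natCast, ← Real.rpow_mul hs0.le]; norm_num
  have hd0 : 0 < dd0 v := Real.rpow_pos_of_pos hs0 _
  set e := dd0 v with he
  set B := 1536 + 1152*v^2 with hB
  have hBp : 0 < B := by rw [hB]; positivity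
  set f := B / e with hf
  have hf0 : 0 < f := by positivity
  have hfe : f * e = B := by rw [hf]; field_simp
  have hf3 : f^3 = 27/8 * s' := by
    have : f^3 * s = 27/8 * s' * s := by
      rw [← hd, ← mul_pow, hfe, hd, show 27/8*s'*s = 27/8 * (s*s') by ring, hss, hB]; ring
    exact mul_right_cancel₀ hs0.ne' this
  set Z := f + 3/2 * e with hZ
  have hZ3 : Z^3 = -27/4 * dd1 v + 9/2 * B * Z := by
    have : Z^3 = f^3 + 27/8 * e^3 + 9/2 * (f*e) * Z := by rw [hZ]; ring
    rw [this, hf3, hd, hfe, hs, hs']; ring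
  have hZ2 : 6 * B ≤ Z^2 := by
    have : Z^2 = (f - 3/2*e)^2 + 6 * (f*e) := by rw [hZ]; ring
    rw [this, hfe]; nlinarith [sq_nonneg (f - 3/2*e)]
  have hZ0 : 0 < Z := by positivity
  refine ⟨(9*v^2+96-Z)/36, ?_, ?_, ?_⟩
  · unfold dfn
    rw [show 9*v^2+96 - (1536+1152*v^2)/dd0 v - 3/2 * dd0 v = 9*v^2+96-Z by rw [hZ, hf, hB, he]; ring]
    rw [show (9*v^2+96-Z)/36 = (1/6)^2 * (9*v^2+96-Z) by ring, Real.sqrt_mul (by norm_num),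
      Real.sqrt_sq (by norm_num)]
  · unfold hh lam
    rw [hB] at hZ3
    unfold dd1 at hZ3
    linear_combination (1/46656) * hZ3
  · have : 72 * v - 48 < Z := by
      apply lt_of_pow_lt_pow_left₀ 2 hZ0.le
      rw [hB] at hZ2
      nlinarith
    nlinarith

/-- the stability inequality at the constant level, large dimensions -/
theorem big {v p k : ℝ} (hv : 15 ≤ v) (hk0 : 0 < k) (hk : k * (p-1) = 6) (hka : k < (v-6)/2)
    (hpc : p < pc v) : ((v-6)/2 - k - 1)^2 < (v/2-2)^2 ∧ lam v < hh v (((v-6)/2 - k - 1)^2) := by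
  obtain ⟨X, hX, hhX, hXl⟩ := hh_X hv
  have hp : 1 < p := by
    by_contra hc
    nlinarith [mul_nonneg hk0.le (sub_nonneg.2 (not_lt.1 hc))]
  set d := dfn v with hd
  have hd0 : 0 ≤ d := by rw [hX]; exact Real.sqrt_nonneg _
  rw [pc, ← hd] at hpc
  have hden : 0 < v - 8 - 2 * d := by
    by_contra hc
    rcases (not_lt.1 hc).lt_or_eq with h | h
    · rw [lt_div_iff_of_neg h] at hpc; nlinarith
    · rw [h, div_zero] at hpc; linarith
  rw [lt_div_iff₀ hden] at hpc
  set t := (v-6)/2 - k - 1 with ht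
  have hkt : k = (v-8)/2 - t := by rw [ht]; ring
  have htd : t < d := by
    by_contra hc
    have h1 : v - 8 - 2*d ≥ 2*k := by linarith
    nlinarith [mul_le_mul_of_nonneg_right h1 (sub_nonneg.2 hp.le)]
  by_cases h0 : 0 ≤ t
  · have hX0 : 0 < X := by
      by_contra hc
      rw [Real.sqrt_eq_zero_of_nonpos (not_lt.1 hc)] at hX; linarith
    have h1 : t^2 < X := by
      rw [← Real.sq_sqrt hX0.le, ← hX]; exact pow_lt_pow_left₀ htd h0 two_ne_zero
    exact ⟨h1.trans hXl, by rw [← hhX]; exact hh_anti (by linarith) h1 hXl.le⟩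
  · have h1 : t^2 < 1 := by nlinarith
    have h2 : (1:ℝ) ≤ (v/2-2)^2 := by nlinarith
    exact ⟨by linarith, (lam_lt_one (by linarith)).trans (hh_anti (by linarith) h1 h2)⟩

theorem big2 {v t : ℝ} (hv : 15 ≤ v) (h1 : t^2 < (v/2-2)^2) (h2 : lam v < hh v (t^2)) : t^2 < v := by
  by_contra hc
  have h3 : hh v (t^2) ≤ hh v v := by
    rcases (not_lt.1 hc).eq_or_lt with h | h
    · rw [← h]
    · exact (hh_anti (by linarith) h h1.le).le
  have h4 : hh v v < lam v := by
    have : 0 < lam v - hh v v := by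
      obtain ⟨j, rfl⟩ : ∃ j, v = 15 + j := ⟨v - 15, by ring⟩
      have hj : 0 ≤ j := by linarith
      unfold hh lam; ring_nf; positivity
    linarith
  linarith

theorem small {n : ℕ} {k : ℝ} (hn : 7 ≤ n) (hn2 : n ≤ 14) (hk0 : 0 < k) (hka : k < ((n:ℝ)-6)/2) :
    lam n < hh n ((((n:ℝ)-6)/2 - k - 1)^2) := by
  have hv : (7:ℝ) ≤ n := by exact_mod_cast hn
  set t := ((n:ℝ)-6)/2 - k - 1 with ht
  by_cases h0 : 0 ≤ t
  · have h1 : t < (n:ℝ)/2 - 4 := by linarith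
    have h2 : hh n (((n:ℝ)/2-4)^2) < hh n (t^2) := by
      apply hh_anti (by linarith)
      · exact pow_lt_pow_left₀ h1 h0 two_ne_zero
      · apply pow_le_pow_left₀ <;> linarith
    have h3 : lam n ≤ hh n (((n:ℝ)/2-4)^2) := by
      unfold lam hh
      interval_cases n <;> norm_num
    linarith
  · have h1 : t^2 < 1 := by nlinarith
    have h2 : (1:ℝ) ≤ ((n:ℝ)/2-2)^2 := by nlinarith
    exact (lam_lt_one (by linarith)).trans (hh_anti (by linarith) h1 h2)

theorem F_small {n : ℕ} {a : ℝ} (hn : 7 ≤ n) (hn2 : n ≤ 14) (ha : 0 < a) (hka : a < ((n:ℝ)-6)/2) :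
    5*a^2 < 3*(((n:ℝ)-2)/2)^2+8 ∧ ((n:ℝ)/2+3-a)*a^2 < 2*(3*(((n:ℝ)-2)/2)^2-8) ∧
    ((n:ℝ)/2+3-a)*a^2*(2*(((n:ℝ)-2)/2)^2 - a^2) <
      2*(3*((((n:ℝ)-2)/2)^2)^2-16*(((n:ℝ)-2)/2)^2+16) := by
  obtain ⟨r, hr⟩ : ∃ r, r = ((n:ℝ)-6)/2 - a := ⟨_, rfl⟩
  have hr0 : 0 < r := by linarith
  have hnr : (n:ℝ) = 2*(a+r)+6 := by linarith
  have har : a + r ≤ 4 := by have : (n:ℝ) ≤ 14 := by exact_mod_cast hn2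
                             linarith
  rw [hnr]
  refine ⟨?_, ?_, ?_⟩
  · nlinarith
  · nlinarith [mul_pos ha hr0, mul_nonneg (sq_nonneg a) (sub_nonneg.2 har)]
  · have ha4 : a < 4 := by linarith
    have p0 : 0 < a^4+4*a^3-24*a^2+32*a+64 := by
      nlinarith [sq_nonneg (a-2), sq_nonneg (a^2-4), mul_nonneg ha.le (sq_nonneg (a-2))]
    have p1 : 0 < 4*a^4-8*a^3+64*a^2+224*a+64 := by
      have : 0 ≤ a^2*(a-1)^2 := by positivity
      nlinarith [mul_pos ha ha]
    have q : 0 < 6*r^4 + (24*a+48)*r^3 + (16*a^2+2*a^3+144*a+112)*r^2 +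
      (4*a^4-8*a^3+64*a^2+224*a+64)*r + a*(a^4+4*a^3-24*a^2+32*a+64) := by
      have := mul_pos ha p0
      have := mul_pos p1 hr0
      positivity
    have q2 : 0 ≤ (4 - a - r) * (a^2*(2*(a+r)^2+8*(a+r)+8-a^2)) := by
      apply mul_nonneg (by linarith)
      have : 0 ≤ 2*(a+r)^2+8*(a+r)+8-a^2 := by nlinarith [mul_pos ha hr0]
      positivity
    refine sub_pos.1 (lt_of_lt_of_eq (add_pos_of_pos_of_nonneg q q2) ?_)
    ring

theorem F_big {v a : ℝ} (hv : 15 ≤ v) (ha : 0 < a) (ht : (a-1)^2 < v) :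
    5*a^2 < 3*((v-2)/2)^2+8 ∧ (v/2+3-a)*a^2 < 2*(3*((v-2)/2)^2-8) ∧
    (v/2+3-a)*a^2*(2*((v-2)/2)^2 - a^2) <
      2*(3*(((v-2)/2)^2)^2-16*((v-2)/2)^2+16) := by
  have h5 : a^2 ≤ 5 + 5/4*v := by nlinarith [sq_nonneg (a-5)]
  obtain ⟨s, hs0, hs⟩ : ∃ s, 0 ≤ s ∧ s^2 = v := ⟨√v, Real.sqrt_nonneg _, Real.sq_sqrt (by linarith)⟩
  have hs1 : 387/100 ≤ s := by nlinarith
  have has : a ≤ 1 + s := by nlinarith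
  refine ⟨by nlinarith, ?_, ?_⟩
  · have : (v/2+3-a)*a^2 ≤ (v/2+3)*(5+5/4*v) := by
      nlinarith [pow_pos ha 3, mul_nonneg (show 0 ≤ v/2+3 by linarith) (sub_nonneg.2 h5)]
    by_cases h2 : a < 2
    · nlinarith [mul_pos ha ha, pow_pos ha 3]
    · have : (v/2+3-a)*a^2 ≤ (v/2+1)*(5+5/4*v) := by
        apply mul_le_mul _ h5 (sq_nonneg a) <;> linarith
      nlinarith
  · obtain ⟨j, rfl⟩ : ∃ j, s = 387/100 + j := ⟨s - 387/100, by ring⟩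
    have hj : 0 ≤ j := by linarith
    set α := 1 + (387/100 + j) with hα
    subst hs
    set v := (387/100+j)^2 with hvd
    have e1 : (v/2+3-a)*a ≤ (v/2+3-α)*α := by
      have : 0 ≤ v/2+3-α-α := by rw [hvd, hα]; ring_nf; positivity
      nlinarith
    have e2 : a*(2*((v-2)/2)^2 - a^2) ≤ α*(2*((v-2)/2)^2 - α^2) := by
      have : 0 ≤ 2*((v-2)/2)^2 - 3*α^2 := by rw [hvd, hα]; ring_nf; positivity
      have h6 : a^2 ≤ α^2 := pow_le_pow_left₀ ha.le has 2
      have h7 : a*α ≤ α^2 := by nlinarith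
      nlinarith [mul_nonneg (sub_nonneg.2 has) (show 0 ≤ 2*((v-2)/2)^2 - (a^2+a*α+α^2) by linarith)]
    have e3 : 0 ≤ a*(2*((v-2)/2)^2 - a^2) := by
      apply mul_nonneg ha.le; nlinarith
    have e4 : 0 ≤ (v/2+3-α)*α := by
      have : 0 ≤ v/2+3-α-α := by rw [hvd, hα]; ring_nf; positivity
      have : 0 < α := by positivity
      nlinarith
    have := mul_le_mul e1 e2 e3 e4
    have e5 : 0 < 2*(3*(((v-2)/2)^2)^2-16*((v-2)/2)^2+16) -
      (v/2+3-α)*α * (α*(2*((v-2)/2)^2 - α^2)) := by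
      rw [hvd, hα]; ring_nf; positivity
    refine lt_of_le_of_lt (le_of_eq_of_le ?_ this) (sub_pos.1 e5)
    ring

theorem coeffs {n : ℕ} {p k : ℝ} (hn : 7 ≤ n) (hk0 : 0 < k) (hk : k * (p-1) = 6)
    (hka : k < ((n:ℝ)-6)/2) (hpc : 15 ≤ n → p < pc n) :
    let c := cf (((n:ℝ) - 6) / 2 - k) ((((n:ℝ) - 2) / 2) ^ 2)
    let s := cf 0 ((((n:ℝ) - 2) / 2) ^ 2)
    (c 1 0 < 0 ∧ c 1 1 < 0 ∧ c 1 2 < 0 ∧ 0 < c 3 0 ∧ 0 < c 3 1 ∧ c 5 0 < 0) ∧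
    (0 < p * c 0 0 - s 0 0 ∧ 0 < p * c 0 1 - s 0 1 ∧ 0 < p * c 0 2 - s 0 2) := by
  intro c s
  have hv : (7:ℝ) ≤ n := by exact_mod_cast hn
  set a := ((n:ℝ)-6)/2 - k with ha
  have ha0 : 0 < a := by linarith
  have hpk : p * k = k + 6 := by linarith
  have key : lam n < hh n ((a-1)^2) ∧ (5*a^2 < 3*(((n:ℝ)-2)/2)^2+8 ∧
      ((n:ℝ)/2+3-a)*a^2 < 2*(3*(((n:ℝ)-2)/2)^2-8) ∧
      ((n:ℝ)/2+3-a)*a^2*(2*(((n:ℝ)-2)/2)^2 - a^2) <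
      2*(3*((((n:ℝ)-2)/2)^2)^2-16*(((n:ℝ)-2)/2)^2+16)) := by
    rcases le_or_gt n 14 with h | h
    · exact ⟨small hn h hk0 hka, F_small hn h ha0 (by linarith)⟩
    · have h15 : (15:ℝ) ≤ n := by exact_mod_cast h
      obtain ⟨b1, b2⟩ := big h15 hk0 hk hka (hpc h)
      exact ⟨b2, F_big h15 ha0 (big2 h15 b1 b2)⟩
  obtain ⟨k0, k1, k2, k3⟩ := key
  simp only [c, s, cf, ← ha]
  clear c s
  generalize (n:ℝ) = v at *
  have hkv : k = (v-6)/2 - a := by rw [ha]; ring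
  clear_value a
  have hN : a^2 < ((v-6)/2)^2 := pow_lt_pow_left₀ (by linarith) ha0.le two_ne_zero
  refine ⟨⟨?_, ?_, by linarith, ?_, by linarith, by linarith⟩, ?_, ?_, ?_⟩
  · obtain ⟨z, hz⟩ : ∃ z, z = ((v-6)/2)^2 - a^2 := ⟨_, rfl⟩
    have hz0 : 0 < z := by linarith
    have : 0 < 3*(a^2)^2 - 2*(3*((v-2)/2)^2+8)*a^2 + 3*(((v-2)/2)^2)^2+16 := by
      rw [show a^2 = ((v-6)/2)^2 - z by linarith]
      obtain ⟨j, rfl⟩ : ∃ j, v = 7 + j := ⟨v - 7, by ring⟩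
      have hj : 0 ≤ j := by linarith
      ring_nf; positivity
    nlinarith [mul_pos ha0 this]
  · nlinarith [mul_pos ha0 (show 0 < ((v-2)/2)^2 - a^2 by nlinarith)]
  · nlinarith [mul_pos ha0 (sub_pos.2 k1)]
  · have e : p * (-a^6 + (3*((v-2)/2)^2+8)*a^4 - (3*(((v-2)/2)^2)^2+16)*a^2
        + ((v-2)/2)^2*(((v-2)/2)^2-4)^2) = hh v ((a-1)^2) := by
      have h1 : -a^6 + (3*((v-2)/2)^2+8)*a^4 - (3*(((v-2)/2)^2)^2+16)*a^2
        + ((v-2)/2)^2*(((v-2)/2)^2-4)^2 =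
        k * ((v/2-1-a)*(v/2+1-a)*(v/2-1+a)*(v/2+1+a)*(v/2-3+a)) := by rw [hkv]; ring
      rw [h1, ← mul_assoc, hpk, hkv]; unfold hh; ring
    rw [e]
    unfold lam at k0
    nlinarith
  all_goals
    refine pos_of_mul_pos_left ?_ hk0.le
    rw [sub_mul, mul_assoc p, mul_comm _ k, ← mul_assoc p, hpk, hkv]
    nlinarith [k2, k3]

end Num
end TL

/-- **Theorem 1.2(2) (supercritical case).** Let `n ≥ 7` and let `u` be a smooth solution of
`(-Δ)³ u = |u|^{p-1} u` on `ℝⁿ` that is stable outside a compact set `Θ`. If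
`(n+6)/(n-6) < p` and, in case `n ≥ 15`, additionally `p < p_c(n)`, then `u ≡ 0`. -/
theorem triharmonic_finiteMorse_supercritical (n : ℕ) (hn : 7 ≤ n) (p : ℝ)
    (hp1 : ((n : ℝ) + 6) / ((n : ℝ) - 6) < p) (hpc : 15 ≤ n → p < pc n)
    (u : EuclideanSpace ℝ (Fin n) → ℝ) (hu : ContDiff ℝ (⊤ : ℕ∞) u)
    (heq : ∀ x, laplacian (laplacian (laplacian u)) x = -(|u x| ^ (p - 1) * u x))
    (Θ : Set (EuclideanSpace ℝ (Fin n))) (hΘ : IsCompact Θ)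
    (hstab : ∀ φ : EuclideanSpace ℝ (Fin n) → ℝ, ContDiff ℝ (⊤ : ℕ∞) φ →
      HasCompactSupport φ → tsupport φ ⊆ Θᶜ →
      p * (∫ x, |u x| ^ (p - 1) * φ x ^ 2) ≤ ∫ x, ‖gradient (laplacian φ) x‖ ^ 2) :
    u = 0 := by
  have hv : (7:ℝ) ≤ n := by exact_mod_cast hn
  have hv6 : (0:ℝ) < (n:ℝ) - 6 := by linarith
  rw [div_lt_iff₀ hv6] at hp1
  have hp : 1 < p := by nlinarith
  have hpm : 0 < p - 1 := by linarith
  obtain ⟨k, hkd⟩ : ∃ k, k = 6 / (p - 1) := ⟨_, rfl⟩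
  have hk : k * (p - 1) = 6 := by rw [hkd]; field_simp
  have hk0 : 0 < k := by rw [hkd]; positivity
  have hka : k < ((n:ℝ) - 6) / 2 := by
    rw [hkd, div_lt_iff₀ hpm]; nlinarith
  have H : TL.Dat n p k u := ⟨hu, hp, hk, heq⟩
  obtain ⟨R, hR⟩ := hΘ.isBounded.subset_ball 0
  have hT : Θ ⊆ Metric.ball 0 (Real.exp R) :=
    hR.trans (Metric.ball_subset_ball (by linarith [Real.add_one_le_exp R]))
  obtain ⟨q0, hq0⟩ := exists_nat_ge k
  obtain ⟨d1, d0⟩ := TL.Num.coeffs hn hk0 hk hka hpc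
  have S : TL.Sys (TL.WA.KK n).D TL.WA.bf H.w H.P
      (TL.cf (((n:ℝ) - 6) / 2 - k) ((((n:ℝ) - 2) / 2) ^ 2)) (TL.cf 0 ((((n:ℝ) - 2) / 2) ^ 2))
      p R (q0 + 3) :=
    { hb := TL.WA.DForm_bf
      hadd := fun j ρ σ hρ hσ f g => TL.WA.bf_wadd j hρ hσ f g
      hA := TL.WA.bf_hA H.w
      hp := hp
      hq := by omega
      hc := ⟨rfl, rfl, rfl, rfl⟩
      hs := ⟨rfl, rfl, rfl, rfl⟩
      hd1 := d1
      hd0 := d0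
      hP := fun ρ hρ => H.G_FE hρ H.w
      hPm := H.hPm
      hPD := H.hPD
      hS := H.hS hstab hT
      hY := H.hY (by omega) (by push_cast; nlinarith)
      h0 := H.h0 }
  exact H.finish (by omega) fun ρ hρ => S.conclusion hρ
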